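/- arXiv:1806.07953 — 4 statements merged into one kernel-verified Lean document; each statement's English description precedes it below -/
import Mathlib

section
/- Let α ≥ 1, p ∈ (1,∞) and s = 1 − 1/p. There exists a constant C > 0, depending only on α and p, such that every function f that is continuously differentiable on the closed upper half-space ℝ³₊ = {(x,y,z) ∈ ℝ³ : z ≥ 0} satisfies ∫_{ℝ²×ℝ²} |f(u,0) − f(v,0)|^p / ( d(u,v)^{ps} · μ(B(u,d(u,v))) ) dμ(u) dμ(v) ≤ C ∫_{ℝ³₊} |Xf(x,y,z)|^p dx dy dz, where for u,v ∈ ℝ² we write d(u,v) = d((u,0),(v,0)), |Xf|² = (X₁f)² + (X₂f)², and μ(B(u,r)) denotes the μ-measure of {v ∈ ℝ² : (v,0) ∈ B((u,0),r)}. -/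
open MeasureTheory

/-- The minimum appearing in the quasi-distance `δ`, with the conventions of the paper:
it equals `|ζ| ^ (1/(α+1))` when `x = 0` (and it is `0` when `ζ = 0`). -/
noncomputable def ccMin (α x ζ : ℝ) : ℝ :=
  if x = 0 then |ζ| ^ (1 / (α + 1))
  else min (|ζ| ^ (1 / (α + 1))) (|ζ| ^ ((1 : ℝ) / 2) / |x| ^ ((α - 1) / 2))

/-- A horizontal curve on `[0,T]` for the vector fields `X₁ = ∂ₓ`, `X₂ = ∂_y + |x|^α ∂_z`:
a Lipschitz curve whose components have a.e. derivatives `(h₁, h₂, |x|^α h₂)` with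
`h₁² + h₂² ≤ 1`. -/
def IsHorizontal (α T : ℝ) (γ : ℝ → ℝ × ℝ × ℝ) : Prop :=
  (∃ K, LipschitzOnWith K γ (Set.Icc 0 T)) ∧
  ∃ h₁ h₂ : ℝ → ℝ, Measurable h₁ ∧ Measurable h₂ ∧
    (∀ t, (h₁ t) ^ 2 + (h₂ t) ^ 2 ≤ 1) ∧
    ∀ᵐ t ∂(volume.restrict (Set.Ioo 0 T)),
      HasDerivAt (fun s => (γ s).1) (h₁ t) t ∧
      HasDerivAt (fun s => (γ s).2.1) (h₂ t) t ∧
      HasDerivAt (fun s => (γ s).2.2) (|(γ t).1| ^ α * h₂ t) t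

/-- The Carnot–Carathéodory distance associated with `X₁, X₂`. -/
noncomputable def ccDist (α : ℝ) (p q : ℝ × ℝ × ℝ) : ℝ :=
  sInf {T : ℝ | 0 < T ∧ ∃ γ : ℝ → ℝ × ℝ × ℝ, IsHorizontal α T γ ∧ γ 0 = p ∧ γ T = q}

/-- The Carnot–Carathéodory ball. -/
def ccBall (α : ℝ) (p : ℝ × ℝ × ℝ) (r : ℝ) : Set (ℝ × ℝ × ℝ) :=
  {q | ccDist α p q < r}

/-- The algebraic quasi-distance `δ`. -/
noncomputable def deltaDist (α : ℝ) (p q : ℝ × ℝ × ℝ) : ℝ :=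
  |q.1 - p.1| + |q.2.1 - p.2.1| +
    ccMin α p.1 (p.2.2 - q.2.2 + |p.1| ^ α * (q.2.1 - p.2.1))

/-- The perimeter measure `μ = |x|^α ℒ²` on the plane `z = 0`, identified with `ℝ²`. -/
noncomputable def planeMeasure (α : ℝ) : Measure (ℝ × ℝ) :=
  volume.withDensity (fun u => ENNReal.ofReal (|u.1| ^ α))

/-- The closed upper half-space `ℝ³₊`. -/
def upperHalf : Set (ℝ × ℝ × ℝ) := {q | 0 ≤ q.2.2}

/-- The length `|Xf| = ((X₁ f)² + (X₂ f)²)^{1/2}` of the horizontal gradient of `f`,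
computed with derivatives within the closed half-space. -/
noncomputable def XGradNorm (α : ℝ) (f : ℝ × ℝ × ℝ → ℝ) (q : ℝ × ℝ × ℝ) : ℝ :=
  Real.sqrt ((fderivWithin ℝ f upperHalf q ((1 : ℝ), (0 : ℝ), (0 : ℝ))) ^ 2 +
    (fderivWithin ℝ f upperHalf q ((0 : ℝ), (1 : ℝ), |q.1| ^ α)) ^ 2)

open MeasureTheory

lemma tt_lip_bound {T M : ℝ} {K : NNReal} {g g' : ℝ → ℝ} (hT : 0 ≤ T)
    (hL : LipschitzOnWith K g (Set.Icc 0 T))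
    (hd : ∀ᵐ t ∂(volume.restrict (Set.Ioo 0 T)), HasDerivAt g (g' t) t ∧ |g' t| ≤ M) :
    |g T - g 0| ≤ M * T := by
  have hac : AbsolutelyContinuousOnInterval g 0 T := by
    apply LipschitzOnWith.absolutelyContinuousOnInterval (K := K)
    rwa [Set.uIcc_of_le hT]
  rw [← hac.integral_deriv_eq_sub]
  have := intervalIntegral.norm_integral_le_of_norm_le_const_ae (f := deriv g) (a := 0) (b := T)
    (C := M) ?_
  · simpa [abs_of_nonneg hT] using this
  · rw [Set.uIoc_of_le hT]
    rw [Measure.restrict_congr_set Ioo_ae_eq_Ioc, ae_restrict_iff' measurableSet_Ioc] at hd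
    filter_upwards [hd] with t ht h
    rw [(ht h).1.deriv]
    exact (ht h).2

lemma tt_rpow_sub_le {α a b : ℝ} (hα : 1 ≤ α) (ha : 0 ≤ a) (hab : a ≤ b) :
    b ^ α - a ^ α ≤ α * b ^ (α - 1) * (b - a) := by
  rcases eq_or_lt_of_le (ha.trans hab) with h | h
  · have : a = 0 := by linarith
    subst this; rw [← h]; simp
  have h1 := one_add_mul_self_le_rpow_one_add (s := a / b - 1) (p := α)
    (by have := div_nonneg ha h.le; linarith) hα
  have h2 : (1 + (a / b - 1)) ^ α = a ^ α / b ^ α := by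
    rw [← Real.div_rpow ha h.le]; ring_nf
  rw [h2] at h1
  have h3 : b ^ α = b ^ (α - 1) * b := by
    rw [← Real.rpow_add_one h.ne']; ring_nf
  have h4 : 0 < b ^ α := Real.rpow_pos_of_pos h _
  rw [le_div_iff₀ h4] at h1
  have h5 : α * (a / b - 1) * b ^ α = α * b ^ (α - 1) * (a - b) := by
    rw [h3]; field_simp
  nlinarith

/-- lower bound from a horizontal curve joining two points of the plane -/
lemma tt_curve_lower {α T : ℝ} (hα : 1 ≤ α) (hT : 0 < T) {γ : ℝ → ℝ × ℝ × ℝ}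
    (hγ : IsHorizontal α T γ) {x y x' y' : ℝ} (h0 : γ 0 = (x, y, 0)) (h1 : γ T = (x', y', 0)) :
    |x - x'| ≤ T ∧ |y - y'| ≤ T ∧ |x| * |y - y'| ≤ (α * 2 ^ (α - 1)) * T ^ 2 := by
  obtain ⟨⟨K, hK⟩, h₁, h₂, -, -, hh, hd⟩ := hγ
  have hx : LipschitzOnWith K (fun s => (γ s).1) (Set.Icc 0 T) := by
    have := LipschitzWith.prod_fst (α := ℝ) (β := ℝ × ℝ) |>.comp_lipschitzOnWith hK
    simpa [Function.comp_def] using this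
  have hyz : LipschitzOnWith K (fun s => (γ s).2) (Set.Icc 0 T) := by
    have := LipschitzWith.prod_snd (α := ℝ) (β := ℝ × ℝ) |>.comp_lipschitzOnWith hK
    simpa [Function.comp_def] using this
  have hy : LipschitzOnWith K (fun s => (γ s).2.1) (Set.Icc 0 T) := by
    have := LipschitzWith.prod_fst (α := ℝ) (β := ℝ) |>.comp_lipschitzOnWith hyz
    simpa [Function.comp_def] using this
  have hz : LipschitzOnWith K (fun s => (γ s).2.2) (Set.Icc 0 T) := by
    have := LipschitzWith.prod_snd (α := ℝ) (β := ℝ) |>.comp_lipschitzOnWith hyz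
    simpa [Function.comp_def] using this
  have hb1 : ∀ t, |h₁ t| ≤ 1 := fun t => by
    rw [abs_le_one_iff_mul_self_le_one]; nlinarith [hh t, sq_nonneg (h₂ t)]
  have hb2 : ∀ t, |h₂ t| ≤ 1 := fun t => by
    rw [abs_le_one_iff_mul_self_le_one]; nlinarith [hh t, sq_nonneg (h₁ t)]
  have hxt : ∀ t ∈ Set.Icc 0 T, |(γ t).1 - x| ≤ t := by
    intro t ht
    have := tt_lip_bound (T := t) (M := 1) (g := fun s => (γ s).1) (g' := h₁) ht.1
      (hx.mono (Set.Icc_subset_Icc_right ht.2)) ?_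
    · simpa [h0] using this
    · have := ae_restrict_of_ae_restrict_of_subset (Set.Ioo_subset_Ioo_right ht.2) hd
      filter_upwards [this] with s hs using ⟨hs.1, hb1 s⟩
  have hyT : |y - y'| ≤ T := by
    have := tt_lip_bound (T := T) (M := 1) (g := fun s => (γ s).2.1) (g' := h₂) hT.le hy ?_
    · rw [abs_sub_comm]; simpa [h0, h1] using this
    · filter_upwards [hd] with s hs using ⟨hs.2.1, hb2 s⟩
  refine ⟨?_, hyT, ?_⟩
  · have := hxt T ⟨hT.le, le_rfl⟩
    rw [abs_sub_comm]; simpa [h1] using this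
  have hα1 : 1 ≤ (2:ℝ) ^ (α - 1) := Real.one_le_rpow (by norm_num) (by linarith)
  rcases lt_or_ge |x| T with hxT | hxT
  · calc |x| * |y - y'| ≤ T * T := by gcongr
      _ = 1 * T ^ 2 := by ring
      _ ≤ _ := by gcongr; nlinarith
  have hx0 : 0 < |x| := hT.trans_le hxT
  have key := tt_lip_bound (T := T) (M := α * (2 * |x|) ^ (α - 1) * T)
    (g := fun s => |x| ^ α * (γ s).2.1 - (γ s).2.2)
    (g' := fun t => |x| ^ α * h₂ t - |(γ t).1| ^ α * h₂ t)
    (K := (‖|x| ^ α‖₊ * K) + K) hT.le ?_ ?_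
  · simp only [h0, h1] at key
    have e : |x| ^ α * y' - 0 - (|x| ^ α * y - 0) = -(|x| ^ α * (y - y')) := by ring
    rw [e, abs_neg, abs_mul, abs_of_nonneg (by positivity : 0 ≤ |x| ^ α)] at key
    have e2 : |x| ^ α = |x| ^ (α - 1) * |x| := by
      rw [← Real.rpow_add_one hx0.ne']; ring_nf
    rw [e2, Real.mul_rpow (by norm_num) hx0.le] at key
    have hpos : 0 < |x| ^ (α - 1) := by positivity
    refine le_of_mul_le_mul_left ?_ hpos
    nlinarith
  · have hy' : LipschitzOnWith (‖|x| ^ α‖₊ * K) (fun s => |x| ^ α * (γ s).2.1) (Set.Icc 0 T) := by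
      have := (lipschitzWith_smul (|x| ^ α) (β := ℝ)).comp_lipschitzOnWith hy
      simpa [Function.comp_def] using this
    exact hy'.sub hz
  · have hmem : ∀ᵐ t ∂(volume.restrict (Set.Ioo 0 T)), t ∈ Set.Ioo 0 T :=
      ae_restrict_mem measurableSet_Ioo
    filter_upwards [hd, hmem] with t ht htm
    refine ⟨(ht.2.1.const_mul _).sub ht.2.2, ?_⟩
    have hxt' := hxt t ⟨htm.1.le, htm.2.le⟩
    rw [← sub_mul, abs_mul]
    have hd1 : |(|(γ t).1| - |x|)| ≤ T :=
      (abs_abs_sub_abs_le_abs_sub _ _).trans (hxt'.trans htm.2.le)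
    have hd2 := abs_le.1 hd1
    have hmain : |(|x| ^ α - |(γ t).1| ^ α)| ≤ α * (2 * |x|) ^ (α - 1) * T := by
      rcases le_total |x| |(γ t).1| with hc | hc
      · rw [abs_sub_comm, abs_of_nonneg (sub_nonneg.2 (Real.rpow_le_rpow (abs_nonneg _) hc (by linarith)))]
        refine (tt_rpow_sub_le hα (abs_nonneg _) hc).trans ?_
        have : |(γ t).1| ^ (α - 1) ≤ (2 * |x|) ^ (α - 1) :=
          Real.rpow_le_rpow (abs_nonneg _) (by linarith) (by linarith)
        gcongr
        linarith
      · rw [abs_of_nonneg (sub_nonneg.2 (Real.rpow_le_rpow (abs_nonneg _) hc (by linarith)))]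
        refine (tt_rpow_sub_le hα (abs_nonneg _) hc).trans ?_
        have : |x| ^ (α - 1) ≤ (2 * |x|) ^ (α - 1) :=
          Real.rpow_le_rpow (abs_nonneg _) (by linarith) (by linarith)
        gcongr
        linarith
    calc _ ≤ α * (2 * |x|) ^ (α - 1) * T * 1 := by
          gcongr
          exact hb2 t
      _ = _ := by ring

open MeasureTheory

def ttReach (α T : ℝ) (p q : ℝ × ℝ × ℝ) : Prop :=
  ∃ γ : ℝ → ℝ × ℝ × ℝ, IsHorizontal α T γ ∧ γ 0 = p ∧ γ T = q

lemma ttReach.trans {α T S : ℝ} {p q r : ℝ × ℝ × ℝ} (hT : 0 ≤ T) (hS : 0 ≤ S)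
    (h1 : ttReach α T p q) (h2 : ttReach α S q r) : ttReach α (T + S) p r := by
  obtain ⟨γ, ⟨⟨K, hK⟩, a₁, a₂, ma₁, ma₂, ha, hda⟩, hγ0, hγT⟩ := h1
  obtain ⟨η, ⟨⟨L, hL⟩, b₁, b₂, mb₁, mb₂, hb, hdb⟩, hη0, hηS⟩ := h2
  set σ : ℝ → ℝ × ℝ × ℝ := fun t => if t ≤ T then γ t else η (t - T) with hσ
  have s1 : ∀ t, t ≤ T → σ t = γ t := fun t ht => by simp [hσ, ht]
  have s2 : ∀ t, T ≤ t → σ t = η (t - T) := fun t ht => by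
    rcases eq_or_lt_of_le ht with h | h
    · subst h; simp [hσ, hγT, hη0]
    · simp [hσ, not_le.2 h]
  refine ⟨σ, ⟨⟨max K L, ?_⟩, fun t => if t < T then a₁ t else b₁ (t - T),
    fun t => if t < T then a₂ t else b₂ (t - T), ?_, ?_, ?_, ?_⟩, ?_, ?_⟩
  · have A : LipschitzOnWith (max K L) σ (Set.Icc 0 T) := by
      intro s hs t ht
      rw [s1 s hs.2, s1 t ht.2]
      exact (hK.weaken (le_max_left _ _)) hs ht
    have B : LipschitzOnWith (max K L) σ (Set.Icc T (T + S)) := by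
      intro s hs t ht
      rw [s2 s hs.1, s2 t ht.1]
      have := (hL.weaken (le_max_right K L)) (x := s - T) ⟨by linarith [hs.1], by linarith [hs.2]⟩
        (y := t - T) ⟨by linarith [ht.1], by linarith [ht.2]⟩
      simpa [edist_dist] using this
    have key : ∀ s ∈ Set.Icc 0 (T + S), ∀ t ∈ Set.Icc 0 (T + S), s ≤ t →
        dist (σ s) (σ t) ≤ (max K L : NNReal) * dist s t := by
      intro s hs t ht hst
      rcases le_total t T with h | h
      · exact A.dist_le_mul s ⟨hs.1, hst.trans h⟩ t ⟨ht.1, h⟩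
      rcases le_total T s with h' | h'
      · exact B.dist_le_mul s ⟨h', hs.2⟩ t ⟨h, ht.2⟩
      calc dist (σ s) (σ t) ≤ dist (σ s) (σ T) + dist (σ T) (σ t) := dist_triangle _ _ _
        _ ≤ (max K L : NNReal) * dist s T + (max K L : NNReal) * dist T t :=
            add_le_add (A.dist_le_mul s ⟨hs.1, h'⟩ T ⟨hT, le_rfl⟩)
              (B.dist_le_mul T ⟨le_rfl, by linarith⟩ t ⟨h, ht.2⟩)
        _ = _ := by
            rw [Real.dist_eq, Real.dist_eq, Real.dist_eq, abs_of_nonpos (by linarith),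
              abs_of_nonpos (by linarith), abs_of_nonpos (by linarith)]; ring
    refine LipschitzOnWith.of_dist_le_mul fun s hs t ht => ?_
    rcases le_total s t with h | h
    · exact key s hs t ht h
    · rw [dist_comm, dist_comm s t]; exact key t ht s hs h
  · exact Measurable.ite measurableSet_Iio ma₁ (mb₁.comp (measurable_id.sub_const T))
  · exact Measurable.ite measurableSet_Iio ma₂ (mb₂.comp (measurable_id.sub_const T))
  · intro t
    by_cases h : t < T
    · simpa [h] using ha t
    · simpa [h] using hb (t - T)
  · rw [ae_restrict_iff' measurableSet_Ioo] at hda hdb ⊢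
    have hdb' : ∀ᵐ t ∂(volume : Measure ℝ), t - T ∈ Set.Ioo 0 S → 
      HasDerivAt (fun s => (η s).1) (b₁ (t - T)) (t - T) ∧
      HasDerivAt (fun s => (η s).2.1) (b₂ (t - T)) (t - T) ∧
      HasDerivAt (fun s => (η s).2.2) (|(η (t - T)).1| ^ α * b₂ (t - T)) (t - T) :=
      (measurePreserving_sub_right volume T).quasiMeasurePreserving.ae hdb
    have hne : ∀ᵐ t ∂(volume : Measure ℝ), t ≠ T := by
      simp [ae_iff]
    filter_upwards [hda, hdb', hne] with t h1 h2 h3 ht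
    rcases lt_or_gt_of_ne h3 with h | h
    · obtain ⟨d1, d2, d3⟩ := h1 ⟨ht.1, h⟩
      have ev : ∀ᶠ s in nhds t, σ s = γ s := by
        filter_upwards [Iio_mem_nhds h] with s hs using s1 s (le_of_lt hs)
      simp only [h, if_true, s1 t h.le]
      refine ⟨d1.congr_of_eventuallyEq ?_, d2.congr_of_eventuallyEq ?_, d3.congr_of_eventuallyEq ?_⟩
      all_goals filter_upwards [ev] with s hs; rw [hs]
    · obtain ⟨d1, d2, d3⟩ := h2 ⟨by linarith, by linarith [ht.2]⟩
      have ev : ∀ᶠ s in nhds t, σ s = η (s - T) := by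
        filter_upwards [Ioi_mem_nhds h] with s hs using s2 s (le_of_lt hs)
      simp only [not_lt.2 h.le, if_false, s2 t h.le]
      refine ⟨(d1.comp_sub_const t T).congr_of_eventuallyEq ?_,
        (d2.comp_sub_const t T).congr_of_eventuallyEq ?_,
        (d3.comp_sub_const t T).congr_of_eventuallyEq ?_⟩
      all_goals filter_upwards [ev] with s hs; rw [hs]
  · rw [s1 0 hT, hγ0]
  · rw [s2 _ (by linarith)]; simpa using hηS

lemma tt_affine_horizontal {α T : ℝ} {x y z e₁ e₂ w : ℝ} (he : e₁ ^ 2 + e₂ ^ 2 ≤ 1)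
    (hw : ∀ t, w = |x + t * e₁| ^ α * e₂) :
    ttReach α T (x, y, z) (x + T * e₁, y + T * e₂, z + T * w) := by
  have d : ∀ a b t : ℝ, HasDerivAt (fun s : ℝ => a + s * b) b t := fun a b t => by
    simpa using ((hasDerivAt_id t).mul_const b).const_add a
  refine ⟨fun t => (x + t * e₁, y + t * e₂, z + t * w), ⟨?_, fun _ => e₁, fun _ => e₂,
    measurable_const, measurable_const, fun _ => he, ?_⟩, by simp, rfl⟩
  · have hc : ContDiff ℝ 1 (fun t : ℝ => (x + t * e₁, y + t * e₂, z + t * w)) := by fun_prop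
    have := hc.locallyLipschitz.locallyLipschitzOn (s := Set.Icc 0 T)
    exact this.exists_lipschitzOnWith_of_compact isCompact_Icc
  · refine Filter.Eventually.of_forall fun t => ⟨d _ _ _, d _ _ _, ?_⟩
    have := d z w t
    simpa [← hw t] using this

lemma tt_reach_x (α : ℝ) (x x' y z : ℝ) : ttReach α |x' - x| (x, y, z) (x', y, z) := by
  rcases le_total x x' with h | h
  · have := tt_affine_horizontal (α := α) (T := |x' - x|) (x := x) (y := y) (z := z) (e₁ := 1)
      (e₂ := 0) (w := 0) (by norm_num) (by simp)
    rw [abs_of_nonneg (by linarith)] at *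
    simpa using this
  · have := tt_affine_horizontal (α := α) (T := |x' - x|) (x := x) (y := y) (z := z) (e₁ := -1)
      (e₂ := 0) (w := 0) (by norm_num) (by simp)
    rw [abs_of_nonpos (by linarith)] at *
    simpa using this

lemma tt_reach_y (α : ℝ) (x y z a : ℝ) :
    ttReach α |a| (x, y, z) (x, y + a, z + |x| ^ α * a) := by
  rcases le_total 0 a with h | h
  · have := tt_affine_horizontal (α := α) (T := |a|) (x := x) (y := y) (z := z) (e₁ := 0)
      (e₂ := 1) (w := |x| ^ α) (by norm_num) (by simp)
    rw [abs_of_nonneg h] at *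
    simpa [mul_comm] using this
  · have := tt_affine_horizontal (α := α) (T := |a|) (x := x) (y := y) (z := z) (e₁ := 0)
      (e₂ := -1) (w := -|x| ^ α) (by norm_num) (by simp)
    rw [abs_of_nonpos h] at *
    simpa [mul_comm] using this

lemma tt_one_sub_rpow_ge {α t : ℝ} (hα : 1 ≤ α) (h0 : 0 ≤ t) (h1 : t ≤ 1) :
    1 - t ≤ 1 - t ^ α := by
  have := Real.rpow_le_rpow_of_exponent_ge' h0 h1 zero_le_one hα
  rw [Real.rpow_one] at this
  linarith

/-- joining two points of the plane, the first one closer to the axis -/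
lemma tt_reach_plane {α : ℝ} (hα : 1 ≤ α) {x y x' y' : ℝ} (hx : |x| < |x'|) :
    ∃ T, 0 < T ∧ T ≤ |x' - x| + 2 * |y' - y| * |x'| / (|x'| - |x|) ∧
      ttReach α T (x, y, 0) (x', y', 0) := by
  have h0 : 0 < |x'| := (abs_nonneg x).trans_lt hx
  set κ : ℝ := 1 - (|x| / |x'|) ^ α with hκ
  have hk : (|x'| - |x|) / |x'| ≤ κ := by
    have := tt_one_sub_rpow_ge (t := |x| / |x'|) hα (by positivity) ((div_le_one h0).2 hx.le)
    rw [sub_div, div_self h0.ne']; exact this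
  have hk0 : 0 < κ := lt_of_lt_of_le (div_pos (by linarith) h0) hk
  have hk1 : κ ≤ 1 := by
    have : 0 ≤ (|x| / |x'|) ^ α := by positivity
    linarith
  set a := (y' - y) / κ with ha
  have haκ : a * κ = y' - y := by rw [ha]; field_simp
  set b := y' - y - a with hb
  have hba : b = -(a * (1 - κ)) := by rw [hb, ← haκ]; ring
  have hbale : |b| ≤ |a| := by
    rw [hba, abs_neg, abs_mul, abs_of_nonneg (by linarith : (0:ℝ) ≤ 1 - κ)]
    have := abs_nonneg a
    nlinarith
  have hz : |x| ^ α * a + |x'| ^ α * b = 0 := by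
    have : (1 - κ) * |x'| ^ α = |x| ^ α := by
      rw [hκ, Real.div_rpow (abs_nonneg _) (abs_nonneg _)]
      have : 0 < |x'| ^ α := by positivity
      field_simp; ring
    rw [hba]; linear_combination (-a) * this
  have r1 := tt_reach_y α x y 0 a
  have r2 := tt_reach_x α x x' (y + a) (0 + |x| ^ α * a)
  have r3 := tt_reach_y α x' (y + a) (0 + |x| ^ α * a) b
  have e1 : y + a + b = y' := by rw [hb]; ring
  rw [zero_add, hz, e1] at r3
  rw [zero_add] at r1 r2
  have r := (r1.trans (abs_nonneg _) (abs_nonneg _) r2).trans (by positivity) (abs_nonneg _) r3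
  refine ⟨_, ?_, ?_, r⟩
  · have : 0 < |x' - x| := by
      rw [abs_pos, sub_ne_zero]; rintro rfl; exact lt_irrefl _ hx
    have := abs_nonneg a
    have := abs_nonneg b
    linarith
  · have : |a| ≤ |y' - y| * |x'| / (|x'| - |x|) := by
      rw [ha, abs_div, abs_of_pos hk0, mul_div_assoc, div_eq_mul_inv]
      gcongr
      rw [← inv_div]
      exact inv_anti₀ (div_pos (by linarith) h0) hk
    have e : 2 * |y' - y| * |x'| / (|x'| - |x|) = 2 * (|y' - y| * |x'| / (|x'| - |x|)) := by ring
    rw [e]; linarith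

lemma tt_nonempty {α : ℝ} (hα : 1 ≤ α) (x y x' y' : ℝ) :
    {T : ℝ | 0 < T ∧ ∃ γ : ℝ → ℝ × ℝ × ℝ, IsHorizontal α T γ ∧ γ 0 = (x, y, 0) ∧
      γ T = (x', y', 0)}.Nonempty := by
  obtain ⟨T, hT, -, hr⟩ := tt_reach_plane hα (x := x) (y := y) (x' := |x| + 1) (y' := y')
    (by rw [abs_of_nonneg (by positivity : 0 ≤ |x| + 1)]; linarith)
  have := hr.trans hT.le (abs_nonneg _) (tt_reach_x α (|x| + 1) x' y' 0)
  exact ⟨_, by positivity, this⟩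

lemma tt_ccDist_lt {α : ℝ} (hα : 1 ≤ α) {x y x' y' r : ℝ} (hx : |x| < |x'|)
    (h : |x' - x| + 2 * |y' - y| * |x'| / (|x'| - |x|) < r) :
    ccDist α (x, y, 0) (x', y', 0) < r := by
  obtain ⟨T, hT, hle, hr⟩ := tt_reach_plane hα (y := y) (y' := y') hx
  have : ccDist α (x, y, 0) (x', y', 0) ≤ T :=
    csInf_le ⟨0, fun t ht => ht.1.le⟩ (show T ∈ {T : ℝ | _} from ⟨hT, hr⟩)
  exact this.trans_lt (hle.trans_lt h)

lemma tt_ccDist_lower {α : ℝ} (hα : 1 ≤ α) (x y x' y' : ℝ) :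
    |x - x'| ≤ ccDist α (x, y, 0) (x', y', 0) ∧ |y - y'| ≤ ccDist α (x, y, 0) (x', y', 0) ∧
    |x| * |y - y'| ≤ (α * 2 ^ (α - 1)) * ccDist α (x, y, 0) (x', y', 0) ^ 2 := by
  have hne := tt_nonempty hα x y x' y'
  refine ⟨le_csInf hne ?_, le_csInf hne ?_, ?_⟩
  · rintro T ⟨hT, γ, hγ, h0, h1⟩
    exact (tt_curve_lower hα hT hγ h0 h1).1
  · rintro T ⟨hT, γ, hγ, h0, h1⟩
    exact (tt_curve_lower hα hT hγ h0 h1).2.1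
  · have hc : 0 < α * (2:ℝ) ^ (α - 1) := by positivity
    have : Real.sqrt (|x| * |y - y'| / (α * 2 ^ (α - 1))) ≤ ccDist α (x, y, 0) (x', y', 0) := by
      refine le_csInf hne ?_
      rintro T ⟨hT, γ, hγ, h0, h1⟩
      rw [Real.sqrt_le_left hT.le, div_le_iff₀ hc, mul_comm (T ^ 2)]
      exact (tt_curve_lower hα hT hγ h0 h1).2.2
    have h2 := Real.sqrt_le_iff.1 this
    rw [div_le_iff₀ hc, mul_comm (_ ^ 2)] at h2
    exact h2.2

open MeasureTheory

lemma tt_measure_box {α c : ℝ} {A B : Set ℝ} (hA : MeasurableSet A) (hB : MeasurableSet B)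
    (hc : ∀ x ∈ A, c ≤ |x| ^ α) :
    ENNReal.ofReal c * (volume A * volume B) ≤ planeMeasure α (A ×ˢ B) := by
  have hm : MeasurableSet (A ×ˢ B) := hA.prod hB
  rw [planeMeasure, withDensity_apply _ hm]
  calc ENNReal.ofReal c * (volume A * volume B)
      = ∫⁻ _ in A ×ˢ B, ENNReal.ofReal c := by
        rw [setLIntegral_const, Measure.volume_eq_prod, Measure.prod_prod]
    _ ≤ _ := setLIntegral_mono' hm fun u hu => ENNReal.ofReal_le_ofReal (hc _ hu.1)

lemma tt_ball_box {α : ℝ} (hα : 1 ≤ α) {x y x' y' r : ℝ} (hr : 0 < r)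
    (h1 : |x'| = |x| + |x' - x|) (h2 : r / 4 < |x' - x|) (h3 : |x' - x| < r / 2)
    (h4 : |y' - y| < r ^ 2 / (32 * (|x| + r))) :
    ccDist α (x, y, 0) (x', y', 0) < r := by
  apply tt_ccDist_lt hα (by linarith)
  have hx := abs_nonneg x
  set b := |x' - x|
  have e : |x'| - |x| = b := by linarith
  rw [e, h1]
  have h5 : 2 * |y' - y| * (|x| + b) / b ≤ r / 4 := by
    rw [div_le_iff₀ (by linarith)]
    rw [lt_div_iff₀ (by positivity)] at h4
    have h6 : |y' - y| * (|x| + b) ≤ |y' - y| * (|x| + r) := by gcongr; linarith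
    nlinarith
  linarith

lemma tt_ball_lower {α : ℝ} (hα : 1 ≤ α) (x y : ℝ) {r : ℝ} (hr : 0 < r) :
    ENNReal.ofReal ((1 / 4) ^ α / 64 * (r ^ 3 * (|x| + r) ^ (α - 1))) ≤
      planeMeasure α {v : ℝ × ℝ | ccDist α (x, y, 0) (v.1, v.2, 0) < r} := by
  have hx := abs_nonneg x
  have hxr : 0 < |x| + r := by linarith
  set t := r ^ 2 / (32 * (|x| + r)) with ht
  have ht0 : 0 < t := by positivity
  have hc : ENNReal.ofReal ((1 / 4) ^ α / 64 * (r ^ 3 * (|x| + r) ^ (α - 1))) =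
      ENNReal.ofReal (((|x| + r) / 4) ^ α) * (ENNReal.ofReal (r / 4) * ENNReal.ofReal (2 * t)) := by
    rw [← ENNReal.ofReal_mul (by positivity), ← ENNReal.ofReal_mul (by positivity)]
    congr 1
    have : (|x| + r) ^ α = (|x| + r) ^ (α - 1) * (|x| + r) := by
      rw [← Real.rpow_add_one hxr.ne']; ring_nf
    have e : ((|x| + r) / 4) ^ α = (1 / 4) ^ α * (|x| + r) ^ α := by
      rw [← Real.mul_rpow (by norm_num) hxr.le]; ring_nf
    rw [e, this, ht]; field_simp; ring
  rw [hc]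
  have hvB : volume (Set.Ioo (y - t) (y + t)) = ENNReal.ofReal (2 * t) := by
    rw [Real.volume_Ioo]; ring_nf
  rcases le_total 0 x with h | h
  · have hvA : volume (Set.Ioo (x + r / 4) (x + r / 2)) = ENNReal.ofReal (r / 4) := by
      rw [Real.volume_Ioo]; ring_nf
    rw [← hvA, ← hvB]
    refine (tt_measure_box measurableSet_Ioo measurableSet_Ioo ?_).trans (measure_mono ?_)
    · intro x' hx'
      rw [abs_of_nonneg h, abs_of_nonneg (by linarith [hx'.1])]
      refine Real.rpow_le_rpow (by positivity) ?_ (by linarith)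
      linarith [hx'.1]
    · rintro ⟨x', y'⟩ ⟨h1, h2⟩
      simp only [Set.mem_Ioo] at h1 h2
      have e : |x' - x| = x' - x := abs_of_nonneg (by linarith)
      refine tt_ball_box hα hr ?_ ?_ ?_ ?_
      · rw [e, abs_of_nonneg h, abs_of_nonneg (by linarith)]; ring
      · rw [e]; linarith
      · rw [e]; linarith
      · rw [abs_lt]; constructor <;> linarith
  · have hvA : volume (Set.Ioo (x - r / 2) (x - r / 4)) = ENNReal.ofReal (r / 4) := by
      rw [Real.volume_Ioo]; ring_nf
    rw [← hvA, ← hvB]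
    refine (tt_measure_box measurableSet_Ioo measurableSet_Ioo ?_).trans (measure_mono ?_)
    · intro x' hx'
      rw [abs_of_nonpos h, abs_of_nonpos (by linarith [hx'.2])]
      refine Real.rpow_le_rpow (by linarith) ?_ (by linarith)
      linarith [hx'.2]
    · rintro ⟨x', y'⟩ ⟨h1, h2⟩
      simp only [Set.mem_Ioo] at h1 h2
      have e : |x' - x| = -(x' - x) := abs_of_nonpos (by linarith)
      refine tt_ball_box hα hr ?_ ?_ ?_ ?_
      · rw [e, abs_of_nonpos h, abs_of_nonpos (by linarith)]; ring
      · rw [e]; linarith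
      · rw [e]; linarith
      · rw [abs_lt]; constructor <;> linarith

/-- explicit symmetric quasi-distance on the plane -/
noncomputable def ttδ (u v : ℝ × ℝ) : ℝ :=
  |u.1 - v.1| + |u.2 - v.2| + √(|u.1| * |u.2 - v.2|) + √(|v.1| * |u.2 - v.2|)

noncomputable def ttm (u v : ℝ × ℝ) : ℝ := |u.1| + |v.1| + ttδ u v

lemma ttδ_symm (u v : ℝ × ℝ) : ttδ u v = ttδ v u := by
  unfold ttδ; rw [abs_sub_comm u.1, abs_sub_comm u.2]; ring

lemma ttm_symm (u v : ℝ × ℝ) : ttm u v = ttm v u := by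
  unfold ttm; rw [ttδ_symm u v]; ring

lemma ttδ_cont : Continuous (fun w : (ℝ × ℝ) × (ℝ × ℝ) => ttδ w.1 w.2) := by
  unfold ttδ; fun_prop

lemma ttm_cont : Continuous (fun w : (ℝ × ℝ) × (ℝ × ℝ) => ttm w.1 w.2) := by
  unfold ttm ttδ; fun_prop

lemma ttδ_nonneg (u v : ℝ × ℝ) : 0 ≤ ttδ u v := by unfold ttδ; positivity

lemma ttδ_x (u v : ℝ × ℝ) : |u.1 - v.1| ≤ ttδ u v := by
  have : 0 ≤ |u.2 - v.2| + √(|u.1| * |u.2 - v.2|) + √(|v.1| * |u.2 - v.2|) := by positivity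
  unfold ttδ; linarith

lemma ttδ_y (u v : ℝ × ℝ) : |u.2 - v.2| ≤ ttδ u v := by
  have : 0 ≤ |u.1 - v.1| + √(|u.1| * |u.2 - v.2|) + √(|v.1| * |u.2 - v.2|) := by positivity
  unfold ttδ; linarith

lemma ttδ_xy (u v : ℝ × ℝ) : |u.1| * |u.2 - v.2| ≤ ttδ u v ^ 2 := by
  have : 0 ≤ |u.1 - v.1| + |u.2 - v.2| + √(|v.1| * |u.2 - v.2|) := by positivity
  have h : √(|u.1| * |u.2 - v.2|) ≤ ttδ u v := by unfold ttδ; linarith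
  exact (Real.sqrt_le_iff.1 h).2

lemma ttm_y (u v : ℝ × ℝ) : ttm u v * |u.2 - v.2| ≤ 3 * ttδ u v ^ 2 := by
  have h1 := ttδ_xy u v
  have h2 := ttδ_xy v u
  rw [ttδ_symm v u, abs_sub_comm v.2] at h2
  have h3 := ttδ_y u v
  have h4 := ttδ_nonneg u v
  unfold ttm; nlinarith

lemma ttm_le (u v : ℝ × ℝ) : ttm u v ≤ 2 * (|u.1| + ttδ u v) := by
  have h1 := ttδ_x u v
  have : |v.1| ≤ |u.1| + |u.1 - v.1| := by
    have := abs_abs_sub_abs_le_abs_sub u.1 v.1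
    have := neg_le_abs (|u.1| - |v.1|)
    linarith
  unfold ttm; linarith

lemma ttδ_pos {u v : ℝ × ℝ} (h : u ≠ v) : 0 < ttδ u v := by
  refine lt_of_le_of_ne (ttδ_nonneg u v) fun h0 => h ?_
  have h1 := ttδ_x u v
  have h2 := ttδ_y u v
  rw [← h0] at h1 h2
  ext
  · exact sub_eq_zero.1 (abs_nonpos_iff.1 h1)
  · exact sub_eq_zero.1 (abs_nonpos_iff.1 h2)

lemma tt_kernel {α p s : ℝ} (hα : 1 ≤ α) (hp : 1 < p) (hs : s = 1 - 1 / p) :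
    ∃ c : ℝ, 0 < c ∧ ∀ u v : ℝ × ℝ, u ≠ v →
      ENNReal.ofReal (c * (ttδ u v ^ (p + 2) * ttm u v ^ (α - 1))) ≤
        ENNReal.ofReal ((ccDist α (u.1, u.2, 0) (v.1, v.2, 0)) ^ (p * s)) *
              planeMeasure α {v' : ℝ × ℝ |
                ccDist α (u.1, u.2, 0) (v'.1, v'.2, 0) <
                  ccDist α (u.1, u.2, 0) (v.1, v.2, 0)} := by
  set A := α * (2:ℝ) ^ (α - 1) with hA
  have hA0 : 0 < A := by positivity
  set L := 2 + 2 * √(A + 1) with hL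
  have hL1 : 1 ≤ L := by have := Real.sqrt_nonneg (A + 1); linarith
  have hL0 : 0 < L := by linarith
  refine ⟨(1 / 4) ^ α / 64 * ((1 / L) ^ (p + 2) * (1 / (2 * L)) ^ (α - 1)), by positivity, ?_⟩
  rintro u v huv
  set d := ccDist α (u.1, u.2, 0) (v.1, v.2, 0) with hd
  have hδ := ttδ_pos huv
  obtain ⟨h1, h2, h3⟩ := tt_ccDist_lower hα u.1 u.2 v.1 v.2
  rw [← hd, ← hA] at *
  have hd0 : 0 ≤ d := (abs_nonneg _).trans h1
  have hs1 : √(|u.1| * |u.2 - v.2|) ≤ √(A + 1) * d := by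
    rw [Real.sqrt_le_left (by positivity), mul_pow, Real.sq_sqrt (by linarith)]
    nlinarith [sq_nonneg d]
  have hs2 : √(|v.1| * |u.2 - v.2|) ≤ √(A + 1) * d := by
    rw [Real.sqrt_le_left (by positivity), mul_pow, Real.sq_sqrt (by linarith)]
    have : |v.1| ≤ |u.1| + |u.1 - v.1| := by
      have := abs_abs_sub_abs_le_abs_sub u.1 v.1
      have := neg_le_abs (|u.1| - |v.1|)
      linarith
    have h5 : |v.1| * |u.2 - v.2| ≤ (|u.1| + |u.1 - v.1|) * |u.2 - v.2| := by gcongr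
    have h6 : |u.1 - v.1| * |u.2 - v.2| ≤ d * d := by gcongr
    nlinarith
  have hdL : ttδ u v ≤ L * d := by
    unfold ttδ; rw [hL]; linarith
  have hd1 : 1 / L * ttδ u v ≤ d := by
    rw [one_div, inv_mul_le_iff₀ hL0]; exact hdL
  have hdpos : 0 < d := lt_of_lt_of_le (by positivity) hd1
  have hm1 : 1 / (2 * L) * ttm u v ≤ |u.1| + d := by
    rw [one_div, inv_mul_le_iff₀ (by linarith)]
    have := ttm_le u v
    have := abs_nonneg u.1
    nlinarith
  have hm0 : 0 ≤ ttm u v := by unfold ttm; positivity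
  have hps : p * s = p - 1 := by rw [hs]; field_simp
  calc _ ≤ ENNReal.ofReal (d ^ (p * s) * ((1 / 4) ^ α / 64 * (d ^ 3 * (|u.1| + d) ^ (α - 1)))) := by
        apply ENNReal.ofReal_le_ofReal
        have e1 : d ^ (p * s) * d ^ 3 = d ^ (p + 2) := by
          rw [hps, ← Real.rpow_natCast, ← Real.rpow_add hdpos]; norm_num; ring_nf
        have e2 : d ^ (p * s) * ((1 / 4) ^ α / 64 * (d ^ 3 * (|u.1| + d) ^ (α - 1))) =
          (1 / 4) ^ α / 64 * (d ^ (p + 2) * (|u.1| + d) ^ (α - 1)) := by rw [← e1]; ring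
        rw [e2]
        have i1 : (1 / L) ^ (p + 2) * ttδ u v ^ (p + 2) ≤ d ^ (p + 2) := by
          rw [← Real.mul_rpow (by positivity) hδ.le]
          exact Real.rpow_le_rpow (by positivity) hd1 (by linarith)
        have i2 : (1 / (2 * L)) ^ (α - 1) * ttm u v ^ (α - 1) ≤ (|u.1| + d) ^ (α - 1) := by
          rw [← Real.mul_rpow (by positivity) hm0]
          exact Real.rpow_le_rpow (by positivity) hm1 (by linarith)
        calc _ = (1 / 4) ^ α / 64 * (((1 / L) ^ (p + 2) * ttδ u v ^ (p + 2)) *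
              ((1 / (2 * L)) ^ (α - 1) * ttm u v ^ (α - 1))) := by ring
          _ ≤ _ := by gcongr
    _ = ENNReal.ofReal (d ^ (p * s)) *
        ENNReal.ofReal ((1 / 4) ^ α / 64 * (d ^ 3 * (|u.1| + d) ^ (α - 1))) :=
        ENNReal.ofReal_mul (by positivity)
    _ ≤ _ := by
        gcongr
        exact tt_ball_lower hα u.1 u.2 hdpos

open MeasureTheory

noncomputable def ttF (α : ℝ) (f : ℝ × ℝ × ℝ → ℝ) (q : ℝ × ℝ × ℝ) : ℝ :=
  XGradNorm α f (q.1, q.2.1, max q.2.2 0)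

lemma tt_uniqueDiff : UniqueDiffOn ℝ upperHalf := by
  apply uniqueDiffOn_convex
  · intro p hp q hq a b ha hb hab
    simp only [upperHalf, Set.mem_ofPred_eq] at *
    simp only [Prod.snd_add, Prod.smul_snd, smul_eq_mul]
    positivity
  · refine ⟨(0, 0, 1), ?_⟩
    rw [mem_interior]
    refine ⟨{q | 0 < q.2.2}, fun q hq => (le_of_lt (show (0:ℝ) < q.2.2 from hq) : (0:ℝ) ≤ q.2.2), ?_, by simp⟩
    exact isOpen_lt continuous_const (by fun_prop)

lemma ttF_continuous {α : ℝ} (hα : 1 ≤ α) {f : ℝ × ℝ × ℝ → ℝ} (hf : ContDiffOn ℝ 1 f upperHalf) :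
    Continuous (ttF α f) := by
  have h1 : ContinuousOn (fderivWithin ℝ f upperHalf) upperHalf :=
    hf.continuousOn_fderivWithin tt_uniqueDiff le_rfl
  have h2 : Continuous (fun q : ℝ × ℝ × ℝ =>
      fderivWithin ℝ f upperHalf (q.1, q.2.1, max q.2.2 0)) := by
    refine h1.comp_continuous (by fun_prop) fun q => ?_
    simp [upperHalf]
  have h3 : Continuous (fun q : ℝ × ℝ × ℝ => |q.1| ^ α) :=
    (by fun_prop : Continuous (fun q : ℝ × ℝ × ℝ => |q.1|)).rpow_const fun _ => Or.inr (by linarith)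
  unfold ttF XGradNorm
  apply Continuous.sqrt
  refine ((h2.clm_apply continuous_const).pow 2).add ((h2.clm_apply ?_).pow 2)
  fun_prop

lemma ttF_eq {α : ℝ} {f : ℝ × ℝ × ℝ → ℝ} {q : ℝ × ℝ × ℝ} (hq : q ∈ upperHalf) :
    ttF α f q = XGradNorm α f q := by
  unfold ttF; rw [max_eq_left hq]

lemma tt_line {f : ℝ × ℝ × ℝ → ℝ} (hf : ContDiffOn ℝ 1 f upperHalf) (P V : ℝ × ℝ × ℝ)
    {s₀ s₁ : ℝ} (h : s₀ ≤ s₁) (hm : ∀ s ∈ Set.Icc s₀ s₁, P + s • V ∈ upperHalf)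
    {F : ℝ → ℝ}
    (hF : ∀ s ∈ Set.Icc s₀ s₁, |fderivWithin ℝ f upperHalf (P + s • V) V| ≤ F s) :
    ‖f (P + s₁ • V) - f (P + s₀ • V)‖ₑ ≤ ∫⁻ s in Set.Ioo s₀ s₁, ENNReal.ofReal (F s) := by
  rcases eq_or_lt_of_le h with rfl | hlt
  · simp
  have hc : ContDiffOn ℝ 1 (fun s : ℝ => f (P + s • V)) (Set.Icc s₀ s₁) :=
    hf.comp (by fun_prop) hm
  refine (enorm_sub_le_lintegral_derivWithin_Icc_of_contDiffOn_Icc hc h).trans ?_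
  rw [← restrict_Ioo_eq_restrict_Icc]
  refine setLIntegral_mono' measurableSet_Ioo fun s hs => ?_
  have hs' : s ∈ Set.Icc s₀ s₁ := ⟨hs.1.le, hs.2.le⟩
  have h1 : HasFDerivWithinAt f (fderivWithin ℝ f upperHalf (P + s • V)) upperHalf (P + s • V) :=
    (hf.differentiableOn one_ne_zero _ (hm s hs')).hasFDerivWithinAt
  have h2 : HasDerivWithinAt (fun s : ℝ => P + s • V) V (Set.Icc s₀ s₁) s := by
    simpa using (((hasDerivAt_id s).smul_const V).const_add P).hasDerivWithinAt
  have h3 := h1.comp_hasDerivWithinAt s h2 hm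
  have h4 := h3.derivWithin (uniqueDiffOn_Icc hlt s hs')
  simp only [Function.comp_def] at h4
  rw [h4, Real.enorm_eq_ofReal_abs]
  exact ENNReal.ofReal_le_ofReal (hF s hs')

lemma tt_line_y {α : ℝ} {f : ℝ × ℝ × ℝ → ℝ} (hf : ContDiffOn ℝ 1 f upperHalf) (x y : ℝ)
    {a : ℝ} (ha : 0 ≤ a) :
    ‖f (x, y + a, |x| ^ α * a) - f (x, y, 0)‖ₑ ≤
      ∫⁻ s in Set.Ioo 0 a, ENNReal.ofReal (ttF α f (x, y + s, |x| ^ α * s)) := by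
  have e : ∀ s : ℝ, (x, y, (0:ℝ)) + s • ((0:ℝ), (1:ℝ), |x| ^ α) = (x, y + s, |x| ^ α * s) := by
    intro s; ext <;> simp [mul_comm]
  have hm : ∀ s ∈ Set.Icc 0 a, (x, y + s, |x| ^ α * s) ∈ upperHalf := by
    intro s hs; exact mul_nonneg (by positivity) hs.1
  have := tt_line hf (x, y, 0) (0, 1, |x| ^ α) (F := fun s => ttF α f (x, y + s, |x| ^ α * s)) ha
    (fun s hs => by rw [e]; exact hm s hs) ?_
  · simp only [e] at this
    simpa using this
  · intro s hs
    rw [e]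
    simp only [ttF_eq (hm s hs)]
    unfold XGradNorm
    apply Real.abs_le_sqrt
    nlinarith [sq_nonneg ((fderivWithin ℝ f upperHalf (x, y + s, |x| ^ α * s)) (1, 0, 0))]

lemma tt_line_x {α : ℝ} {f : ℝ × ℝ × ℝ → ℝ} (hf : ContDiffOn ℝ 1 f upperHalf) {x x' R y z : ℝ}
    (hz : 0 ≤ z) (hR : |x' - x| ≤ R) :
    ‖f (x', y, z) - f (x, y, z)‖ₑ ≤
      ∫⁻ s in Set.Icc (x - R) (x + R), ENNReal.ofReal (ttF α f (s, y, z)) := by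
  have hm : ∀ s : ℝ, (s, y, z) ∈ upperHalf := fun s => hz
  have e : ∀ s : ℝ, ((0:ℝ), y, z) + s • ((1:ℝ), (0:ℝ), (0:ℝ)) = (s, y, z) := by
    intro s; ext <;> simp
  have key : ∀ l u : ℝ, l ≤ u → x - R ≤ l → u ≤ x + R → ‖f (u, y, z) - f (l, y, z)‖ₑ ≤
      ∫⁻ s in Set.Icc (x - R) (x + R), ENNReal.ofReal (ttF α f (s, y, z)) := by
    intro l u hlu h1 h2
    have := tt_line hf (0, y, z) (1, 0, 0) (F := fun s => ttF α f (s, y, z)) hlu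
      (fun s hs => by rw [e]; exact hm s) ?_
    · simp only [e] at this
      refine this.trans (lintegral_mono_set ?_)
      exact Set.Ioo_subset_Icc_self.trans (Set.Icc_subset_Icc h1 h2)
    · intro s hs
      rw [e]
      simp only [ttF_eq (hm s)]
      unfold XGradNorm
      apply Real.abs_le_sqrt
      nlinarith [sq_nonneg ((fderivWithin ℝ f upperHalf (s, y, z)) (0, 1, |s| ^ α))]
  have := abs_le.1 hR
  have hR0 : 0 ≤ R := (abs_nonneg _).trans hR
  rcases le_total x x' with h | h
  · exact key x x' h (by linarith) (by linarith)
  · rw [← enorm_neg, neg_sub]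
    exact key x' x h (by linarith) (by linarith)

noncomputable def ttκ (α x ξ : ℝ) : ℝ := 1 - (|x| / |ξ|) ^ α

lemma tt_path {α : ℝ} {f : ℝ × ℝ × ℝ → ℝ} (hf : ContDiffOn ℝ 1 f upperHalf)
    {x y ξ a R : ℝ} (hx : |x| < |ξ|) (hα : 1 ≤ α) (ha : 0 < a) (hR : |ξ - x| ≤ R) :
    ‖f (x, y, 0) - f (ξ, y + a * ttκ α x ξ, 0)‖ₑ ≤
      (∫⁻ s in Set.Ioo 0 a, ENNReal.ofReal (ttF α f (x, y + s, |x| ^ α * s))) +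
      (∫⁻ s in Set.Icc (x - R) (x + R), ENNReal.ofReal (ttF α f (s, y + a, |x| ^ α * a))) +
      (∫⁻ s in Set.Ioo 0 a,
        ENNReal.ofReal (ttF α f (ξ, y + a * ttκ α x ξ + s, |ξ| ^ α * s))) := by
  have h0 : 0 < |ξ| := (abs_nonneg x).trans_lt hx
  set t := (|x| / |ξ|) ^ α with ht
  have ht0 : 0 ≤ t := by positivity
  have ht1 : t ≤ 1 := Real.rpow_le_one (by positivity) ((div_le_one h0).2 hx.le) (by linarith)
  have e1 : y + a * ttκ α x ξ + a * t = y + a := by unfold ttκ; rw [← ht]; ring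
  have e2 : |ξ| ^ α * (a * t) = |x| ^ α * a := by
    rw [ht, Real.div_rpow (abs_nonneg _) (abs_nonneg _)]
    have : 0 < |ξ| ^ α := by positivity
    field_simp
  have l1 := tt_line_y (α := α) hf x y ha.le
  have l2 := tt_line_x (α := α) hf (y := y + a) (z := |x| ^ α * a) (by positivity) hR
  have l3 := tt_line_y (α := α) hf ξ (y + a * ttκ α x ξ) (a := a * t) (by positivity)
  rw [e1, e2] at l3
  have l3' : ‖f (ξ, y + a, |x| ^ α * a) - f (ξ, y + a * ttκ α x ξ, 0)‖ₑ ≤ 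
      ∫⁻ s in Set.Ioo 0 a,
        ENNReal.ofReal (ttF α f (ξ, y + a * ttκ α x ξ + s, |ξ| ^ α * s)) := by
    refine l3.trans (lintegral_mono_set (Set.Ioo_subset_Ioo_right ?_))
    nlinarith
  rw [← enorm_neg, neg_sub] at l1 l2
  have e : f (x, y, 0) - f (ξ, y + a * ttκ α x ξ, 0) =
      (f (x, y, 0) - f (x, y + a, |x| ^ α * a)) +
      (f (x, y + a, |x| ^ α * a) - f (ξ, y + a, |x| ^ α * a)) +
      (f (ξ, y + a, |x| ^ α * a) - f (ξ, y + a * ttκ α x ξ, 0)) := by ring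
  rw [e]
  refine (enorm_add_le _ _).trans (add_le_add ((enorm_add_le _ _).trans (add_le_add l1 l2)) l3')

open MeasureTheory
open scoped ENNReal

lemma tt_swap {X Y : Type*} [MeasurableSpace X] [MeasurableSpace Y] {μ : Measure X} {ν : Measure Y}
    [SFinite μ] [SFinite ν] {F : X → Y → ℝ≥0∞} (h : Measurable (fun q : X × Y => F q.1 q.2)) :
    ∫⁻ x, ∫⁻ y, F x y ∂ν ∂μ = ∫⁻ y, ∫⁻ x, F x y ∂μ ∂ν :=
  lintegral_lintegral_swap (f := F) h.aemeasurable

lemma tt_scale {c : ℝ} (hc : 0 < c) {H : ℝ → ℝ≥0∞} (hH : Measurable H) :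
    ENNReal.ofReal c * ∫⁻ s in Set.Ioi 0, H (c * s) = ∫⁻ z in Set.Ioi 0, H z := by
  have h1 : ∀ K : ℝ → ℝ≥0∞, Measurable K →
      ∫⁻ s, K (c * s) = ENNReal.ofReal c⁻¹ * ∫⁻ s, K s := by
    intro K hK
    rw [← lintegral_map hK (measurable_const_mul c), Real.map_volume_mul_left hc.ne',
      lintegral_smul_measure, abs_of_pos (by positivity)]
    rfl
  rw [← lintegral_indicator measurableSet_Ioi, ← lintegral_indicator measurableSet_Ioi]
  have h2 := h1 ((Set.Ioi 0).indicator H) (hH.indicator measurableSet_Ioi)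
  have h3 : ∀ s, (Set.Ioi (0:ℝ)).indicator (fun s => H (c * s)) s =
      (Set.Ioi 0).indicator H (c * s) := by
    intro s
    by_cases hs : 0 < s
    · simp [Set.indicator, hs, mul_pos hc hs]
    · have : ¬ 0 < c * s := by rw [mul_pos_iff_of_pos_left hc]; exact hs
      simp [Set.indicator, hs, this]
  simp_rw [h3]
  rw [h2, ← mul_assoc, ← ENNReal.ofReal_mul hc.le, mul_inv_cancel₀ hc.ne']
  simp

lemma tt_holder_w {p a : ℝ} (hp : 1 < p) (ha : 0 < a) {h : ℝ → ℝ≥0∞} (hh : Measurable h) :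
    (∫⁻ s in Set.Ioo 0 a, h s) ^ p ≤
      ENNReal.ofReal ((2 * a ^ (1 / 2 : ℝ)) ^ (p - 1)) *
        ∫⁻ s in Set.Ioo 0 a, ENNReal.ofReal (s ^ ((p - 1) / 2)) * h s ^ p := by
  have hp0 : 0 < p := by linarith
  have hp1 : 0 < p - 1 := by linarith
  set θ := (p - 1) / (2 * p) with hθ
  have hpq : (p / (p - 1)).HolderConjugate p := by
    rw [Real.holderConjugate_iff]; refine ⟨by rw [one_lt_div hp1]; linarith, by field_simp; ring⟩
  have H := ENNReal.lintegral_mul_le_Lp_mul_Lq (volume.restrict (Set.Ioo 0 a)) hpq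
    (f := fun s => ENNReal.ofReal (s ^ (-θ))) (g := fun s => ENNReal.ofReal (s ^ θ) * h s)
    (by fun_prop) (by fun_prop)
  have e1 : ∫⁻ s in Set.Ioo 0 a, ((fun s => ENNReal.ofReal (s ^ (-θ))) *
      (fun s => ENNReal.ofReal (s ^ θ) * h s)) s = ∫⁻ s in Set.Ioo 0 a, h s := by
    refine setLIntegral_congr_fun measurableSet_Ioo fun s hs => ?_
    simp only [Pi.mul_apply]
    rw [← mul_assoc, ← ENNReal.ofReal_mul (Real.rpow_nonneg hs.1.le _), ← Real.rpow_add hs.1]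
    simp
  have e2 : ∫⁻ s in Set.Ioo 0 a, ENNReal.ofReal (s ^ (-θ)) ^ (p / (p - 1)) =
      ENNReal.ofReal (2 * a ^ (1 / 2 : ℝ)) := by
    have i1 : ∫⁻ s in Set.Ioo 0 a, ENNReal.ofReal (s ^ (-θ)) ^ (p / (p - 1)) =
        ∫⁻ s in Set.Ioo 0 a, ENNReal.ofReal (s ^ (-(1/2) : ℝ)) := by
      refine setLIntegral_congr_fun measurableSet_Ioo fun s hs => ?_
      rw [ENNReal.ofReal_rpow_of_nonneg (Real.rpow_nonneg hs.1.le _) (by positivity),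
        ← Real.rpow_mul hs.1.le]
      congr 2; rw [hθ]; field_simp
    rw [i1, restrict_Ioo_eq_restrict_Ioc, ← ofReal_integral_eq_lintegral_ofReal]
    · rw [← intervalIntegral.integral_of_le ha.le, integral_rpow (Or.inl (by norm_num))]
      rw [Real.zero_rpow (by norm_num)]
      congr 1; norm_num; ring
    · have := (intervalIntegral.intervalIntegrable_rpow' (a := 0) (b := a)
        (r := -(1/2)) (by norm_num))
      exact (intervalIntegrable_iff_integrableOn_Ioc_of_le ha.le).1 this
    · filter_upwards [ae_restrict_mem measurableSet_Ioc] with s hs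
      exact Real.rpow_nonneg hs.1.le _
  have e3 : ∫⁻ s in Set.Ioo 0 a, (ENNReal.ofReal (s ^ θ) * h s) ^ p =
      ∫⁻ s in Set.Ioo 0 a, ENNReal.ofReal (s ^ ((p - 1) / 2)) * h s ^ p := by
    refine setLIntegral_congr_fun measurableSet_Ioo fun s hs => ?_
    rw [ENNReal.mul_rpow_of_nonneg _ _ hp0.le,
      ENNReal.ofReal_rpow_of_nonneg (Real.rpow_nonneg hs.1.le _) hp0.le, ← Real.rpow_mul hs.1.le]
    congr 3; rw [hθ]; field_simp
  rw [e1, e2, e3] at H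
  have H2 := ENNReal.rpow_le_rpow H hp0.le
  rw [ENNReal.mul_rpow_of_nonneg _ _ hp0.le, ← ENNReal.rpow_mul, ← ENNReal.rpow_mul,
    one_div_mul_cancel hp0.ne', ENNReal.rpow_one] at H2
  refine H2.trans_eq ?_
  congr 1
  rw [ENNReal.ofReal_rpow_of_nonneg (by positivity) (by positivity)]
  congr 2; field_simp

lemma tt_hardy {p : ℝ} (hp : 1 < p) {h : ℝ → ℝ≥0∞} (hh : Measurable h) :
    ∫⁻ a in Set.Ioi 0, ENNReal.ofReal (a ^ (-p)) * (∫⁻ s in Set.Ioo 0 a, h s) ^ p ≤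
      ENNReal.ofReal (2 ^ (p - 1) * (2 / (p - 1))) * ∫⁻ s in Set.Ioi 0, h s ^ p := by
  have hp1 : 0 < p - 1 := by linarith
  calc _ ≤ ∫⁻ a in Set.Ioi 0, ∫⁻ s in Set.Ioi 0, (if s < a then 1 else 0) *
        (ENNReal.ofReal (2 ^ (p - 1) * a ^ (-(p + 1) / 2)) *
          (ENNReal.ofReal (s ^ ((p - 1) / 2)) * h s ^ p)) := by
        refine setLIntegral_mono' measurableSet_Ioi fun a ha => ?_
        have ha : 0 < a := ha
        refine (mul_le_mul_right (tt_holder_w hp ha hh) _).trans_eq ?_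
        rw [← mul_assoc, ← ENNReal.ofReal_mul (by positivity), ← lintegral_const_mul _ (by fun_prop)]
        rw [← lintegral_indicator measurableSet_Ioo, ← lintegral_indicator measurableSet_Ioi]
        refine lintegral_congr fun s => ?_
        have e : a ^ (-p) * (2 * a ^ (1 / 2 : ℝ)) ^ (p - 1) = 2 ^ (p - 1) * a ^ (-(p + 1) / 2) := by
          rw [Real.mul_rpow (by norm_num) (by positivity), ← Real.rpow_mul ha.le]
          rw [mul_left_comm, ← Real.rpow_add ha]; congr 2; ring
        rw [e]
        by_cases h1 : 0 < s <;> by_cases h2 : s < a <;> simp [Set.indicator, h1, h2]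
    _ = ∫⁻ s in Set.Ioi 0, ∫⁻ a in Set.Ioi 0, (if s < a then 1 else 0) *
        (ENNReal.ofReal (2 ^ (p - 1) * a ^ (-(p + 1) / 2)) *
          (ENNReal.ofReal (s ^ ((p - 1) / 2)) * h s ^ p)) := by
        apply tt_swap
        refine Measurable.mul (Measurable.ite (measurableSet_lt (by fun_prop) (by fun_prop))
          measurable_const measurable_const) (by fun_prop)
    _ = ∫⁻ s in Set.Ioi 0, ENNReal.ofReal (2 ^ (p - 1) * (2 / (p - 1))) * h s ^ p := by
        refine setLIntegral_congr_fun measurableSet_Ioi fun s hs => ?_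
        have hs : 0 < s := hs
        have e : ∫⁻ a in Set.Ioi 0, (if s < a then 1 else 0) *
            (ENNReal.ofReal (2 ^ (p - 1) * a ^ (-(p + 1) / 2)) *
              (ENNReal.ofReal (s ^ ((p - 1) / 2)) * h s ^ p)) =
            (∫⁻ a in Set.Ioi s, ENNReal.ofReal (2 ^ (p - 1) * a ^ (-(p + 1) / 2))) *
              (ENNReal.ofReal (s ^ ((p - 1) / 2)) * h s ^ p) := by
          rw [← lintegral_mul_const _ (by fun_prop)]
          rw [← lintegral_indicator measurableSet_Ioi, ← lintegral_indicator measurableSet_Ioi]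
          refine lintegral_congr fun a => ?_
          by_cases h2 : s < a
          · simp [Set.indicator, hs.trans h2, h2]
          · simp [Set.indicator, h2]
        rw [e, ← ofReal_integral_eq_lintegral_ofReal, integral_const_mul,
          integral_Ioi_rpow_of_lt (by linarith) hs, ← mul_assoc,
          ← ENNReal.ofReal_mul]
        · congr 2
          have e3 : -(p + 1) / 2 + 1 = -((p - 1) / 2) := by ring
          rw [e3, Real.rpow_neg hs.le]
          have : 0 < s ^ ((p - 1) / 2) := by positivity
          field_simp
        · have e3 : -(p + 1) / 2 + 1 = -((p - 1) / 2) := by ring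
          rw [e3, neg_div_neg_eq]
          positivity
        · exact (integrableOn_Ioi_rpow_of_lt (by linarith) hs).const_mul _
        · filter_upwards [ae_restrict_mem measurableSet_Ioi] with a ha
          have : 0 < a := hs.trans ha
          simp only [Pi.zero_apply]; positivity
    _ = _ := lintegral_const_mul _ (by fun_prop)

open MeasureTheory
open scoped ENNReal

/-- Indicator of `a ≤ b`. -/
noncomputable def ttle (a b : ℝ) : ℝ≥0∞ := if a ≤ b then 1 else 0

/-- Indicator of `a < b`. -/
noncomputable def ttlt (a b : ℝ) : ℝ≥0∞ := if a < b then 1 else 0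

@[fun_prop]
lemma ttle_meas {X : Type*} [MeasurableSpace X] {a b : X → ℝ} (ha : Measurable a)
    (hb : Measurable b) : Measurable (fun x => ttle (a x) (b x)) :=
  Measurable.ite (measurableSet_le ha hb) measurable_const measurable_const

@[fun_prop]
lemma ttlt_meas {X : Type*} [MeasurableSpace X] {a b : X → ℝ} (ha : Measurable a)
    (hb : Measurable b) : Measurable (fun x => ttlt (a x) (b x)) :=
  Measurable.ite (measurableSet_lt ha hb) measurable_const measurable_const

@[fun_prop]
lemma tt_abs_meas {X : Type*} [MeasurableSpace X] {a : X → ℝ} (ha : Measurable a) :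
    Measurable (fun x => |a x|) := ha.abs

lemma tt_set_Ioi (h : ℝ → ℝ≥0∞) : ∫⁻ a in Set.Ioi 0, h a = ∫⁻ a, ttlt 0 a * h a := by
  rw [← lintegral_indicator measurableSet_Ioi]
  refine lintegral_congr fun a => ?_
  by_cases h1 : 0 < a <;> simp [Set.indicator, ttlt, h1]

lemma tt_set_Ioo (b : ℝ) (h : ℝ → ℝ≥0∞) :
    ∫⁻ a in Set.Ioo 0 b, h a = ∫⁻ a, ttlt 0 a * ttlt a b * h a := by
  rw [← lintegral_indicator measurableSet_Ioo]
  refine lintegral_congr fun a => ?_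
  by_cases h1 : 0 < a <;> by_cases h2 : a < b <;> simp [Set.indicator, ttlt, h1, h2]

lemma ttle_ball (x R : ℝ) (h : ℝ → ℝ≥0∞) :
    ∫⁻ a in Set.Icc (x - R) (x + R), h a = ∫⁻ a, ttle |a - x| R * h a := by
  rw [← lintegral_indicator measurableSet_Icc]
  refine lintegral_congr fun a => ?_
  have : a ∈ Set.Icc (x - R) (x + R) ↔ |a - x| ≤ R := by
    rw [abs_le, Set.mem_Icc]; constructor <;> rintro ⟨h1, h2⟩ <;> constructor <;> linarith
  by_cases h1 : |a - x| ≤ R <;> simp [Set.indicator, ttle, this, h1]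

lemma ttle_ball_int (x R : ℝ) : ∫⁻ a, ttle |a - x| R = ENNReal.ofReal (2 * R) := by
  have := ttle_ball x R (fun _ => 1)
  simp only [mul_one] at this
  rw [← this, setLIntegral_one, Real.volume_Icc]; ring_nf

lemma ttle_ball_int' (x R : ℝ) : ∫⁻ a, ttle |x - a| R = ENNReal.ofReal (2 * R) := by
  simp_rw [abs_sub_comm x]; exact ttle_ball_int x R

/-- vertical averages -/
noncomputable def ttV (α : ℝ) (g : ℝ × ℝ × ℝ → ℝ≥0∞) (x y a : ℝ) : ℝ≥0∞ :=
  ∫⁻ s in Set.Ioo 0 a, g (x, y + s, |x| ^ α * s)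

lemma tt_lint_meas {X Y : Type*} [MeasurableSpace X] [MeasurableSpace Y] {ν : Measure Y}
    [SFinite ν] {F : X → Y → ℝ≥0∞} (h : Measurable (fun q : X × Y => F q.1 q.2)) :
    Measurable (fun x => ∫⁻ y, F x y ∂ν) := Measurable.lintegral_prod_right' h

lemma ttV_meas {α : ℝ} {g : ℝ × ℝ × ℝ → ℝ≥0∞} (hg : Measurable g) {X : Type*} [MeasurableSpace X]
    {x y a : X → ℝ} (hx : Measurable x) (hy : Measurable y) (ha : Measurable a) :
    Measurable (fun q => ttV α g (x q) (y q) (a q)) := by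
  unfold ttV
  simp_rw [tt_set_Ioo]
  apply tt_lint_meas
  fun_prop

/-- integral of vertical averages over y -/
noncomputable def ttVV (α p : ℝ) (g : ℝ × ℝ × ℝ → ℝ≥0∞) (x a : ℝ) : ℝ≥0∞ :=
  ∫⁻ y, ttV α g x y a ^ p

lemma ttVV_meas {α p : ℝ} {g : ℝ × ℝ × ℝ → ℝ≥0∞} (hg : Measurable g) {X : Type*} [MeasurableSpace X]
    {x a : X → ℝ} (hx : Measurable x) (ha : Measurable a) :
    Measurable (fun q => ttVV α p g (x q) (a q)) := by
  unfold ttVV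
  apply tt_lint_meas
  exact (ttV_meas hg (by fun_prop) (by fun_prop) (by fun_prop)).pow_const _

noncomputable def ttΓ (p : ℝ) (g : ℝ × ℝ × ℝ → ℝ≥0∞) (x z : ℝ) : ℝ≥0∞ := ∫⁻ y, g (x, y, z) ^ p

lemma ttΓ_meas {p : ℝ} {g : ℝ × ℝ × ℝ → ℝ≥0∞} (hg : Measurable g) {X : Type*} [MeasurableSpace X]
    {x a : X → ℝ} (hx : Measurable x) (ha : Measurable a) :
    Measurable (fun q => ttΓ p g (x q) (a q)) := by
  unfold ttΓ
  apply tt_lint_meas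
  fun_prop

/-- Hardy bound. -/
lemma ttB {α p : ℝ} (hp : 1 < p) {g : ℝ × ℝ × ℝ → ℝ≥0∞} (hg : Measurable g) (x : ℝ) (hx : x ≠ 0) :
    ENNReal.ofReal (|x| ^ α) * ∫⁻ a in Set.Ioi 0, ENNReal.ofReal (a ^ (-p)) * ttVV α p g x a ≤
      ENNReal.ofReal (2 ^ (p - 1) * (2 / (p - 1))) * ∫⁻ z in Set.Ioi 0, ttΓ p g x z := by
  have hc : 0 < |x| ^ α := Real.rpow_pos_of_pos (abs_pos.2 hx) _
  have hV : Measurable (fun q : ℝ × ℝ => ttV α g x q.2 q.1) :=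
    ttV_meas hg (by fun_prop) (by fun_prop) (by fun_prop)
  calc _ = ENNReal.ofReal (|x| ^ α) * ∫⁻ y, ∫⁻ a in Set.Ioi 0,
        ENNReal.ofReal (a ^ (-p)) * ttV α g x y a ^ p := by
        congr 1
        rw [tt_swap]
        · refine lintegral_congr fun a => ?_
          unfold ttVV
          rw [lintegral_const_mul]
          exact (ttV_meas hg (by fun_prop) (by fun_prop) (by fun_prop)).pow_const _
        · refine Measurable.mul (by fun_prop) (Measurable.pow_const ?_ _)
          exact (ttV_meas hg (by fun_prop) (by fun_prop) (by fun_prop))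
    _ ≤ ENNReal.ofReal (|x| ^ α) * ∫⁻ y, ENNReal.ofReal (2 ^ (p - 1) * (2 / (p - 1))) *
          ∫⁻ s in Set.Ioi 0, g (x, y + s, |x| ^ α * s) ^ p := by
        refine mul_le_mul_right (lintegral_mono fun y => ?_) _
        exact tt_hardy hp (h := fun s => g (x, y + s, |x| ^ α * s)) (by fun_prop)
    _ = ENNReal.ofReal (|x| ^ α) * (ENNReal.ofReal (2 ^ (p - 1) * (2 / (p - 1))) *
          ∫⁻ s in Set.Ioi 0, ttΓ p g x (|x| ^ α * s)) := by
        rw [lintegral_const_mul, tt_swap]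
        · congr 2
          refine lintegral_congr fun s => ?_
          exact lintegral_add_right_eq_self (fun y => g (x, y, |x| ^ α * s) ^ p) s
        · fun_prop
        · apply tt_lint_meas; fun_prop
    _ = _ := by
        rw [mul_left_comm, tt_scale hc (H := ttΓ p g x)]
        exact ttΓ_meas hg (by fun_prop) (by fun_prop)

lemma ttX {α C z : ℝ} (hα : 1 ≤ α) (hC : 0 < C) (hz : 0 < z) (σ : ℝ) :
    ∫⁻ x, ENNReal.ofReal (|x| ^ α) * ttle (|x| ^ α * |σ - x|) (C * z) ≤
      ENNReal.ofReal ((4 * C + 2 * (2 ^ α * ((3 / 2) ^ α * C))) * z) := by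
  have hα0 : 0 < α := by linarith
  set ρ : ℝ := (2 * C * z) ^ (1 / (α + 1)) with hρ
  have hρ0 : 0 < ρ := by positivity
  have hρe : ρ ^ (α + 1) = 2 * C * z := by
    rw [hρ, ← Real.rpow_mul (by positivity), one_div_mul_cancel (by positivity), Real.rpow_one]
  have hρe' : ρ ^ α * ρ = 2 * C * z := by rw [← hρe, Real.rpow_add_one hρ0.ne']
  set τ : ℝ := (3 / 2) ^ α * (C * z) / |σ| ^ α with hτ
  have key : ∀ x, ENNReal.ofReal (|x| ^ α) * ttle (|x| ^ α * |σ - x|) (C * z) ≤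
      ENNReal.ofReal (ρ ^ α) * ttle |x - 0| ρ + ENNReal.ofReal ((2 * |σ|) ^ α) * ttle |x - σ| τ := by
    intro x
    by_cases h : |x| ^ α * |σ - x| ≤ C * z
    swap
    · simp [ttle, h]
    by_cases hx : |x| ≤ ρ
    · refine le_add_right ?_
      simp only [ttle, h, hx, sub_zero, if_true, mul_one]
      exact ENNReal.ofReal_le_ofReal (Real.rpow_le_rpow (abs_nonneg _) hx hα0.le)
    · push Not at hx
      have h1 : |σ - x| < |x| / 2 := by
        by_contra h1
        push Not at h1
        have h2 : ρ ^ α * ρ < |x| ^ α * |x| := by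
          have := Real.rpow_le_rpow hρ0.le hx.le hα0.le
          have h3 : 0 < ρ ^ α := by positivity
          nlinarith
        have h4 : |x| ^ α * (|x| / 2) ≤ |x| ^ α * |σ - x| := by gcongr
        nlinarith
      have h2 : |x| ≤ 2 * |σ| := by
        have := abs_sub_abs_le_abs_sub x σ
        rw [abs_sub_comm] at this; linarith
      have h3 : |σ| ≤ (3 / 2) * |x| := by
        have := abs_sub_abs_le_abs_sub σ x
        linarith
      have hσ : 0 < |σ| := by linarith [hρ0.trans hx]
      have h4 : |x - σ| ≤ τ := by
        rw [hτ, le_div_iff₀ (by positivity), abs_sub_comm]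
        have := Real.rpow_le_rpow hσ.le h3 hα0.le
        rw [Real.mul_rpow (by norm_num) (abs_nonneg _)] at this
        have h5 : (0:ℝ) < (3/2) ^ α := by positivity
        calc |σ - x| * |σ| ^ α ≤ |σ - x| * ((3/2) ^ α * |x| ^ α) := by gcongr
          _ = (3/2) ^ α * (|x| ^ α * |σ - x|) := by ring
          _ ≤ _ := by gcongr
      refine le_add_left ?_
      simp only [ttle, h, h4, if_true, mul_one]
      exact ENNReal.ofReal_le_ofReal (Real.rpow_le_rpow (abs_nonneg _) h2 hα0.le)
  refine (lintegral_mono key).trans ?_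
  rw [lintegral_add_left (by fun_prop), lintegral_const_mul _ (by fun_prop),
    lintegral_const_mul _ (by fun_prop), ttle_ball_int, ttle_ball_int,
    ← ENNReal.ofReal_mul (by positivity), ← ENNReal.ofReal_mul (by positivity),
    ← ENNReal.ofReal_add (by positivity) (by positivity)]
  apply ENNReal.ofReal_le_ofReal
  have : (2 * |σ|) ^ α * (2 * τ) ≤ 2 * (2 ^ α * ((3 / 2) ^ α * C)) * z := by
    rw [Real.mul_rpow (by norm_num) (abs_nonneg _), hτ]
    rcases eq_or_lt_of_le (Real.rpow_nonneg (abs_nonneg σ) α) with h | h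
    · rw [← h]; simp; positivity
    · apply le_of_eq; field_simp
  nlinarith

open MeasureTheory
open scoped ENNReal

lemma tt_holder_ball {p : ℝ} (hp : 1 < p) (x R : ℝ) {h : ℝ → ℝ≥0∞} (hh : Measurable h) :
    (∫⁻ s in Set.Icc (x - R) (x + R), h s) ^ p ≤
      ENNReal.ofReal (2 * R) ^ (p - 1) * ∫⁻ s in Set.Icc (x - R) (x + R), h s ^ p := by
  have hp0 : 0 < p := by linarith
  have hp1 : 0 < p - 1 := by linarith
  have hpq : (p / (p - 1)).HolderConjugate p := by
    rw [Real.holderConjugate_iff]; refine ⟨by rw [one_lt_div hp1]; linarith, by field_simp; ring⟩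
  have H := ENNReal.lintegral_mul_le_Lp_mul_Lq (volume.restrict (Set.Icc (x - R) (x + R))) hpq
    (f := fun s => 1) (g := h) (by fun_prop) (by fun_prop)
  have e1 : ((fun _ : ℝ => (1:ℝ≥0∞)) * h) = h := by ext s; simp
  rw [e1] at H
  simp only [ENNReal.one_rpow, setLIntegral_one, Real.volume_Icc] at H
  have H2 := ENNReal.rpow_le_rpow H hp0.le
  rw [ENNReal.mul_rpow_of_nonneg _ _ hp0.le, ← ENNReal.rpow_mul, ← ENNReal.rpow_mul,
    one_div_mul_cancel hp0.ne', ENNReal.rpow_one] at H2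
  refine H2.trans_eq ?_
  have e2 : x + R - (x - R) = 2 * R := by ring
  rw [e2]
  congr 2; field_simp

lemma tt_three {p : ℝ} (hp : 1 < p) (A B C : ℝ≥0∞) :
    (A + B + C) ^ p ≤ (2 ^ (p - 1) * 2 ^ (p - 1)) * (A ^ p + B ^ p + C ^ p) := by
  have h1 : (1 : ℝ≥0∞) ≤ 2 ^ (p - 1) :=
    ENNReal.one_le_rpow (by norm_num) (by linarith)
  calc (A + B + C) ^ p ≤ 2 ^ (p - 1) * ((A + B) ^ p + C ^ p) :=
        ENNReal.rpow_add_le_mul_rpow_add_rpow _ _ hp.le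
    _ ≤ 2 ^ (p - 1) * (2 ^ (p - 1) * (A ^ p + B ^ p) + 2 ^ (p - 1) * C ^ p) := by
        gcongr
        · exact ENNReal.rpow_add_le_mul_rpow_add_rpow _ _ hp.le
        · exact le_mul_of_one_le_left (zero_le) h1
    _ = _ := by ring

/-- horizontal average -/
noncomputable def ttBB (α p C : ℝ) (g : ℝ × ℝ × ℝ → ℝ≥0∞) (x a : ℝ) : ℝ≥0∞ :=
  ∫⁻ σ, ttle |σ - x| (C * a) * ttΓ p g σ (|x| ^ α * a)

lemma ttBB_meas {α p C : ℝ} {g : ℝ × ℝ × ℝ → ℝ≥0∞} (hg : Measurable g) {X : Type*}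
    [MeasurableSpace X] {x a : X → ℝ} (hx : Measurable x) (ha : Measurable a) :
    Measurable (fun q => ttBB α p C g (x q) (a q)) := by
  unfold ttBB
  apply tt_lint_meas
  exact Measurable.mul (by fun_prop) (ttΓ_meas hg (by fun_prop) (by fun_prop))

/-- The path hypothesis. -/
def ttPath (α : ℝ) (g : ℝ × ℝ × ℝ → ℝ≥0∞) (f0 : ℝ → ℝ → ℝ) : Prop :=
  ∀ x y ξ a R : ℝ, |x| < |ξ| → 0 < a → |ξ - x| ≤ R →
    ‖f0 x y - f0 ξ (y + a * ttκ α x ξ)‖ₑ ≤ ttV α g x y a +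
      (∫⁻ s in Set.Icc (x - R) (x + R), g (s, y + a, |x| ^ α * a)) +
      ttV α g ξ (y + a * ttκ α x ξ) a

lemma ttY {α p C : ℝ} (hp : 1 < p) {g : ℝ × ℝ × ℝ → ℝ≥0∞} (hg : Measurable g)
    {f0 : ℝ → ℝ → ℝ} (hP : ttPath α g f0) {x ξ a : ℝ} (hx : |x| < |ξ|) (ha : 0 < a)
    (hR : |ξ - x| ≤ C * a) :
    ∫⁻ y, ‖f0 x y - f0 ξ (y + a * ttκ α x ξ)‖ₑ ^ p ≤ (2 ^ (p - 1) * 2 ^ (p - 1)) *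
      (ttVV α p g x a + ENNReal.ofReal (2 * (C * a)) ^ (p - 1) * ttBB α p C g x a +
        ttVV α p g ξ a) := by
  have hp0 : 0 < p := by linarith
  have m1 : ∀ x b : ℝ, Measurable fun y => ttV α g x (y + b) a ^ p := fun x b =>
    (ttV_meas hg (by fun_prop) (by fun_prop) (by fun_prop)).pow_const _
  have m3 : Measurable fun y => ∫⁻ s in Set.Icc (x - C * a) (x + C * a),
      g (s, y + a, |x| ^ α * a) ^ p := by
    apply tt_lint_meas; fun_prop
  calc _ ≤ ∫⁻ y, (2 ^ (p - 1) * 2 ^ (p - 1)) * (ttV α g x (y + 0) a ^ p +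
        ENNReal.ofReal (2 * (C * a)) ^ (p - 1) *
          (∫⁻ s in Set.Icc (x - C * a) (x + C * a), g (s, y + a, |x| ^ α * a) ^ p) +
        ttV α g ξ (y + a * ttκ α x ξ) a ^ p) := by
        refine lintegral_mono fun y => ?_
        refine (ENNReal.rpow_le_rpow (hP x y ξ a (C * a) hx ha hR) hp0.le).trans ?_
        refine (tt_three hp _ _ _).trans ?_
        rw [add_zero]
        gcongr
        exact tt_holder_ball hp x (C * a) (h := fun s => g (s, y + a, |x| ^ α * a)) (by fun_prop)
    _ = _ := by
        rw [lintegral_const_mul, lintegral_add_right, lintegral_add_left, lintegral_const_mul]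
        · congr 2
          · congr 1
            · simp [ttVV]
            · congr 1
              rw [tt_swap (by fun_prop)]
              unfold ttBB
              rw [← ttle_ball]
              refine lintegral_congr fun σ => ?_
              exact lintegral_add_right_eq_self (fun y => g (σ, y, |x| ^ α * a) ^ p) a
          · exact lintegral_add_right_eq_self (fun y => ttV α g ξ y a ^ p) _
        · exact m3
        · exact m1 _ _
        · exact m1 _ _
        · exact ((m1 _ _).add (m3.const_mul _)).add (m1 _ _)

noncomputable def ttJ (p : ℝ) (g : ℝ × ℝ × ℝ → ℝ≥0∞) : ℝ≥0∞ :=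
  ∫⁻ x, ∫⁻ z in Set.Ioi 0, ttΓ p g x z

lemma tt_ne0 : ∀ᵐ x : ℝ, x ≠ 0 := by
  simp [ae_iff]

noncomputable def ttE1 (α p C : ℝ) (g : ℝ × ℝ × ℝ → ℝ≥0∞) (x ξ a : ℝ) : ℝ≥0∞ :=
  ttle |ξ - x| (C * a) * (ENNReal.ofReal (|x| ^ α) * (ENNReal.ofReal (a ^ (-p - 1)) *
    ttVV α p g x a))

lemma ttS1 {α p C : ℝ} (hp : 1 < p) (hC : 0 < C) {g : ℝ × ℝ × ℝ → ℝ≥0∞} (hg : Measurable g) :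
    ∫⁻ x, ∫⁻ ξ, ∫⁻ a in Set.Ioi 0, ttE1 α p C g x ξ a ≤
      ENNReal.ofReal (2 * C) * (ENNReal.ofReal (2 ^ (p - 1) * (2 / (p - 1))) * ttJ p g) := by
  have mV : ∀ x, Measurable fun a => ttVV α p g x a := fun x =>
    ttVV_meas hg (by fun_prop) (by fun_prop)
  calc _ ≤ ∫⁻ x, ENNReal.ofReal (2 * C) * (ENNReal.ofReal (2 ^ (p - 1) * (2 / (p - 1))) *
        ∫⁻ z in Set.Ioi 0, ttΓ p g x z) := by
        refine lintegral_mono_ae ?_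
        filter_upwards [tt_ne0] with x hx
        refine le_trans (le_of_eq ?_) (mul_le_mul_right (ttB (α := α) hp hg x hx) _)
        unfold ttE1
        rw [tt_swap]
        · rw [← lintegral_const_mul, ← lintegral_const_mul]
          · refine setLIntegral_congr_fun measurableSet_Ioi fun a ha => ?_
            have ha : 0 < a := ha
            rw [lintegral_mul_const _ (by fun_prop), ttle_ball_int]
            have e : a ^ (-p - 1) = a⁻¹ * a ^ (-p) := by
              rw [Real.rpow_sub_one ha.ne']; field_simp
            rw [e, ENNReal.ofReal_mul (p := a⁻¹) (by positivity), ← mul_assoc 2 C a,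
              ENNReal.ofReal_mul (p := 2 * C) (by positivity)]
            have e2 : ENNReal.ofReal a * ENNReal.ofReal a⁻¹ = 1 := by
              rw [← ENNReal.ofReal_mul ha.le, mul_inv_cancel₀ ha.ne', ENNReal.ofReal_one]
            calc _ = (ENNReal.ofReal a * ENNReal.ofReal a⁻¹) * (ENNReal.ofReal (2 * C) *
                  (ENNReal.ofReal (|x| ^ α) * (ENNReal.ofReal (a ^ (-p)) * ttVV α p g x a))) := by
                  ring
              _ = _ := by rw [e2, one_mul]
          · have := mV x
            fun_prop
          · have := mV x
            fun_prop
        · have := ttVV_meas (α := α) (p := p) (X := ℝ × ℝ) hg (x := fun _ => x)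
            (a := fun q => q.2) (by fun_prop) (by fun_prop)
          fun_prop
    _ = _ := by
        have : Measurable fun x => ∫⁻ z in Set.Ioi 0, ttΓ p g x z := by
          apply tt_lint_meas; exact ttΓ_meas hg (by fun_prop) (by fun_prop)
        rw [lintegral_const_mul _ (by fun_prop), lintegral_const_mul _ (by fun_prop), ttJ]

noncomputable def ttE2 (α p C : ℝ) (g : ℝ × ℝ × ℝ → ℝ≥0∞) (x ξ a : ℝ) : ℝ≥0∞ :=
  ttle |ξ - x| (C * a) * (ENNReal.ofReal (|x| ^ α) * (ENNReal.ofReal (a ^ (-p - 1)) *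
    (ENNReal.ofReal (2 * (C * a)) ^ (p - 1) * ttBB α p C g x a)))

lemma ttS2 {α p C : ℝ} (hα : 1 ≤ α) (hp : 1 < p) (hC : 0 < C) {g : ℝ × ℝ × ℝ → ℝ≥0∞}
    (hg : Measurable g) :
    ∫⁻ x, ∫⁻ ξ, ∫⁻ a in Set.Ioi 0, ttE2 α p C g x ξ a ≤
      ENNReal.ofReal ((2 * C) ^ p) *
        (ENNReal.ofReal (4 * C + 2 * (2 ^ α * ((3 / 2) ^ α * C))) * ttJ p g) := by
  have mB : ∀ x, Measurable fun a => ttBB α p C g x a := fun x =>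
    ttBB_meas hg (by fun_prop) (by fun_prop)
  have mG : Measurable fun q : ℝ × ℝ => ttΓ p g q.1 q.2 := ttΓ_meas hg (by fun_prop) (by fun_prop)
  have step1 : ∀ x, x ≠ 0 → ∫⁻ ξ, ∫⁻ a in Set.Ioi 0, ttE2 α p C g x ξ a =
      ENNReal.ofReal ((2 * C) ^ p) * ∫⁻ z in Set.Ioi 0, ∫⁻ σ,
        ENNReal.ofReal (|x| ^ α) * ttle (|x| ^ α * |σ - x|) (C * z) *
          (ENNReal.ofReal z⁻¹ * ttΓ p g σ z) := by
    intro x hx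
    have hc : 0 < |x| ^ α := Real.rpow_pos_of_pos (abs_pos.2 hx) _
    have mH : Measurable fun z => ∫⁻ σ,
        ENNReal.ofReal (|x| ^ α) * ttle (|x| ^ α * |σ - x|) (C * z) *
          (ENNReal.ofReal z⁻¹ * ttΓ p g σ z) := by
      apply tt_lint_meas
      have : Measurable fun q : ℝ × ℝ => ttΓ p g q.2 q.1 := ttΓ_meas hg (by fun_prop) (by fun_prop)
      fun_prop
    rw [← tt_scale hc mH]
    unfold ttE2
    rw [tt_swap]
    · rw [← lintegral_const_mul, ← lintegral_const_mul]
      · refine setLIntegral_congr_fun measurableSet_Ioi fun a ha => ?_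
        have ha : 0 < a := ha
        rw [lintegral_mul_const _ (by fun_prop), ttle_ball_int]
        have e0 : ∫⁻ σ, ENNReal.ofReal (|x| ^ α) *
            ttle (|x| ^ α * |σ - x|) (C * (|x| ^ α * a)) *
            (ENNReal.ofReal (|x| ^ α * a)⁻¹ * ttΓ p g σ (|x| ^ α * a)) =
            ENNReal.ofReal a⁻¹ * ttBB α p C g x a := by
          unfold ttBB
          rw [← lintegral_const_mul]
          · refine lintegral_congr fun σ => ?_
            have e1 : ttle (|x| ^ α * |σ - x|) (C * (|x| ^ α * a)) = ttle |σ - x| (C * a) := by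
              unfold ttle
              simp only [mul_left_comm C, mul_le_mul_iff_right₀ hc]
            rw [e1, mul_inv, ENNReal.ofReal_mul (by positivity)]
            have e2 : ENNReal.ofReal (|x| ^ α) * ENNReal.ofReal (|x| ^ α)⁻¹ = 1 := by
              rw [← ENNReal.ofReal_mul hc.le, mul_inv_cancel₀ hc.ne', ENNReal.ofReal_one]
            calc _ = (ENNReal.ofReal (|x| ^ α) * ENNReal.ofReal (|x| ^ α)⁻¹) *
                  (ENNReal.ofReal a⁻¹ * (ttle |σ - x| (C * a) * ttΓ p g σ (|x| ^ α * a))) := by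
                  ring
              _ = _ := by rw [e2, one_mul]
          · have : Measurable fun σ => ttΓ p g σ (|x| ^ α * a) :=
              ttΓ_meas hg (by fun_prop) (by fun_prop)
            fun_prop
        rw [e0]
        have e : ENNReal.ofReal (2 * (C * a)) * (ENNReal.ofReal (a ^ (-p - 1)) *
            ENNReal.ofReal (2 * (C * a)) ^ (p - 1)) =
            ENNReal.ofReal ((2 * C) ^ p) * ENNReal.ofReal a⁻¹ := by
          rw [ENNReal.ofReal_rpow_of_nonneg (by positivity) (by linarith),
            ← ENNReal.ofReal_mul (by positivity), ← ENNReal.ofReal_mul (by positivity),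
            ← ENNReal.ofReal_mul (by positivity)]
          congr 1
          rw [← mul_assoc 2 C a, Real.mul_rpow (by positivity) ha.le,
            Real.rpow_sub_one (by positivity : 2 * C ≠ 0), Real.rpow_sub_one ha.ne',
            Real.rpow_sub_one ha.ne', Real.rpow_neg ha.le]
          field_simp
        calc _ = (ENNReal.ofReal (2 * (C * a)) * (ENNReal.ofReal (a ^ (-p - 1)) *
            ENNReal.ofReal (2 * (C * a)) ^ (p - 1))) *
            (ENNReal.ofReal (|x| ^ α) * ttBB α p C g x a) := by ring
          _ = _ := by rw [e]; ring
      · exact (mH.comp (measurable_const_mul (|x| ^ α))).const_mul _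
      · exact mH.comp (measurable_const_mul (|x| ^ α))
    · have : Measurable fun q : ℝ × ℝ => ttBB α p C g x q.2 :=
        ttBB_meas hg (by fun_prop) (by fun_prop)
      fun_prop
  have mF : Measurable fun q : ℝ × ℝ × ℝ => ENNReal.ofReal (|q.1| ^ α) *
      ttle (|q.1| ^ α * |q.2.2 - q.1|) (C * q.2.1) *
          (ENNReal.ofReal q.2.1⁻¹ * ttΓ p g q.2.2 q.2.1) := by
    have : Measurable fun q : ℝ × ℝ × ℝ => ttΓ p g q.2.2 q.2.1 :=
      ttΓ_meas hg (by fun_prop) (by fun_prop)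
    fun_prop
  calc _ = ∫⁻ x, ENNReal.ofReal ((2 * C) ^ p) * ∫⁻ z in Set.Ioi 0, ∫⁻ σ,
        ENNReal.ofReal (|x| ^ α) * ttle (|x| ^ α * |σ - x|) (C * z) *
          (ENNReal.ofReal z⁻¹ * ttΓ p g σ z) := by
        refine lintegral_congr_ae ?_
        filter_upwards [tt_ne0] with x hx using step1 x hx
    _ = ENNReal.ofReal ((2 * C) ^ p) * ∫⁻ z in Set.Ioi 0, ∫⁻ x, ∫⁻ σ,
        ENNReal.ofReal (|x| ^ α) * ttle (|x| ^ α * |σ - x|) (C * z) *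
          (ENNReal.ofReal z⁻¹ * ttΓ p g σ z) := by
        have m : Measurable fun q : ℝ × ℝ => ∫⁻ σ,
            ENNReal.ofReal (|q.1| ^ α) * ttle (|q.1| ^ α * |σ - q.1|) (C * q.2) *
            (ENNReal.ofReal q.2⁻¹ * ttΓ p g σ q.2) := by
          apply tt_lint_meas
          exact mF.comp (f := fun q : (ℝ × ℝ) × ℝ => (q.1.1, q.1.2, q.2)) (by fun_prop)
        rw [lintegral_const_mul, tt_swap]
        · exact m
        · apply tt_lint_meas; exact m
    _ = ENNReal.ofReal ((2 * C) ^ p) * ∫⁻ z in Set.Ioi 0, ∫⁻ σ, (∫⁻ x,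
        ENNReal.ofReal (|x| ^ α) * ttle (|x| ^ α * |σ - x|) (C * z)) *
          (ENNReal.ofReal z⁻¹ * ttΓ p g σ z) := by
        congr 1
        refine lintegral_congr fun z => ?_
        rw [tt_swap]
        · refine lintegral_congr fun σ => ?_
          rw [lintegral_mul_const]
          fun_prop
        · exact mF.comp (f := fun q : ℝ × ℝ => (q.1, z, q.2)) (by fun_prop)
    _ ≤ ENNReal.ofReal ((2 * C) ^ p) * ∫⁻ z in Set.Ioi 0, ∫⁻ σ,
          (ENNReal.ofReal (4 * C + 2 * (2 ^ α * ((3 / 2) ^ α * C))) * ttΓ p g σ z) := by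
        refine mul_le_mul_right (setLIntegral_mono' measurableSet_Ioi fun z hz => ?_) _
        have hz : 0 < z := hz
        refine lintegral_mono fun σ => ?_
        refine (mul_le_mul_left (ttX hα hC hz σ) _).trans_eq ?_
        rw [ENNReal.ofReal_mul (by positivity)]
        have e2 : ENNReal.ofReal z * ENNReal.ofReal z⁻¹ = 1 := by
          rw [← ENNReal.ofReal_mul hz.le, mul_inv_cancel₀ hz.ne', ENNReal.ofReal_one]
        rw [mul_assoc, ← mul_assoc (ENNReal.ofReal z), e2, one_mul]
    _ = _ := by
        congr 1
        unfold ttJ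
        rw [tt_swap mG, ← lintegral_const_mul]
        · refine lintegral_congr fun z => ?_
          rw [lintegral_const_mul]
          exact ttΓ_meas hg (by fun_prop) (by fun_prop)
        · apply tt_lint_meas; exact ttΓ_meas hg (by fun_prop) (by fun_prop)

noncomputable def ttT (α p C : ℝ) (f0 : ℝ → ℝ → ℝ) : ℝ≥0∞ :=
  ∫⁻ x, ∫⁻ ξ, ∫⁻ a in Set.Ioi 0, ttlt |x| |ξ| * (ttle |ξ - x| (C * a) *
    (ENNReal.ofReal (|x| ^ α) * (ENNReal.ofReal (a ^ (-p - 1)) *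
      ∫⁻ y, ‖f0 x y - f0 ξ (y + a * ttκ α x ξ)‖ₑ ^ p)))

lemma ttS (α p C : ℝ) (hα : 1 ≤ α) (hp : 1 < p) (hC : 0 < C) :
    ∃ K : ℝ≥0∞, K ≠ ⊤ ∧ ∀ g : ℝ × ℝ × ℝ → ℝ≥0∞, Measurable g → ∀ f0 : ℝ → ℝ → ℝ, ttPath α g f0 →
      ttT α p C f0 ≤ K * ttJ p g := by
  set K1 : ℝ≥0∞ := ENNReal.ofReal (2 * C) * ENNReal.ofReal (2 ^ (p - 1) * (2 / (p - 1))) with hK1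
  set K2 : ℝ≥0∞ := ENNReal.ofReal ((2 * C) ^ p) *
        ENNReal.ofReal (4 * C + 2 * (2 ^ α * ((3 / 2) ^ α * C))) with hK2
  have hk : (2:ℝ≥0∞) ^ (p - 1) ≠ ⊤ := ENNReal.rpow_ne_top_of_nonneg (by linarith) (by norm_num)
  refine ⟨(2 ^ (p - 1) * 2 ^ (p - 1)) * (K1 + K1 + K2), ?_, ?_⟩
  · refine ENNReal.mul_ne_top (ENNReal.mul_ne_top hk hk) ?_
    simp [hK1, hK2, ENNReal.mul_eq_top]
  intro g hg f0 hP
  have h1 := ttS1 (α := α) hp hC hg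
  have h2 := ttS2 (α := α) hα hp hC hg
  rw [← mul_assoc, ← hK1] at h1
  rw [← mul_assoc, ← hK2] at h2
  have m1 : Measurable fun q : ℝ × ℝ × ℝ => ttE1 α p C g q.1 q.2.1 q.2.2 := by
    have := ttVV_meas (α := α) (p := p) (X := ℝ × ℝ × ℝ) hg (x := fun q => q.1)
      (a := fun q => q.2.2) (by fun_prop) (by fun_prop)
    unfold ttE1; fun_prop
  have m2 : Measurable fun q : ℝ × ℝ × ℝ => ttE2 α p C g q.1 q.2.1 q.2.2 := by
    have := ttBB_meas (α := α) (p := p) (C := C) (X := ℝ × ℝ × ℝ) hg (x := fun q => q.1)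
      (a := fun q => q.2.2) (by fun_prop) (by fun_prop)
    unfold ttE2; fun_prop
  have m1' : ∀ {X : Type} [MeasurableSpace X] {x ξ a : X → ℝ}, Measurable x → Measurable ξ →
      Measurable a → Measurable fun q => ttE1 α p C g (x q) (ξ q) (a q) := by
    intro X _ x ξ a hx hξ ha
    exact m1.comp (f := fun q => (x q, ξ q, a q)) (by fun_prop)
  have m2' : ∀ {X : Type} [MeasurableSpace X] {x ξ a : X → ℝ}, Measurable x → Measurable ξ →
      Measurable a → Measurable fun q => ttE2 α p C g (x q) (ξ q) (a q) := by
    intro X _ x ξ a hx hξ ha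
    exact m2.comp (f := fun q => (x q, ξ q, a q)) (by fun_prop)
  have i1 : ∀ {X : Type} [MeasurableSpace X] {x ξ : X → ℝ}, Measurable x → Measurable ξ →
      Measurable fun q => ∫⁻ a in Set.Ioi 0, ttE1 α p C g (x q) (ξ q) a := by
    intro X _ x ξ hx hξ
    apply tt_lint_meas; apply m1' <;> fun_prop
  have i2 : ∀ {X : Type} [MeasurableSpace X] {x ξ : X → ℝ}, Measurable x → Measurable ξ →
      Measurable fun q => ∫⁻ a in Set.Ioi 0, ttE2 α p C g (x q) (ξ q) a := by
    intro X _ x ξ hx hξ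
    apply tt_lint_meas; apply m2' <;> fun_prop
  have h3 : ∫⁻ x, ∫⁻ ξ, ∫⁻ a in Set.Ioi 0, ttE1 α p C g ξ x a ≤ K1 * ttJ p g := by
    rw [tt_swap (by apply i1 <;> fun_prop)]; exact h1
  calc ttT α p C f0 ≤ ∫⁻ x, ∫⁻ ξ, ∫⁻ a in Set.Ioi 0, (2 ^ (p - 1) * 2 ^ (p - 1)) *
        (ttE1 α p C g x ξ a + ttE1 α p C g ξ x a + ttE2 α p C g x ξ a) := by
        unfold ttT
        refine lintegral_mono fun x => lintegral_mono fun ξ =>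
          setLIntegral_mono' measurableSet_Ioi fun a ha => ?_
        have ha : 0 < a := ha
        by_cases hx : |x| < |ξ|
        swap
        · simp [ttlt, hx]
        by_cases hR : |ξ - x| ≤ C * a
        swap
        · simp [ttle, hR]
        have hR' : |x - ξ| ≤ C * a := by rwa [abs_sub_comm]
        have hw : ENNReal.ofReal (|x| ^ α) ≤ ENNReal.ofReal (|ξ| ^ α) :=
          ENNReal.ofReal_le_ofReal (Real.rpow_le_rpow (abs_nonneg _) hx.le (by linarith))
        simp only [ttlt, ttle, ttE1, ttE2, hx, hR, hR', if_true, one_mul]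
        calc _ ≤ ENNReal.ofReal (|x| ^ α) * (ENNReal.ofReal (a ^ (-p - 1)) *
              ((2 ^ (p - 1) * 2 ^ (p - 1)) *
                (ttVV α p g x a + ENNReal.ofReal (2 * (C * a)) ^ (p - 1) * ttBB α p C g x a +
              ttVV α p g ξ a))) := by
              gcongr; exact ttY hp hg hP hx ha hR
          _ = (2 ^ (p - 1) * 2 ^ (p - 1)) *
              (ENNReal.ofReal (|x| ^ α) * (ENNReal.ofReal (a ^ (-p - 1)) * ttVV α p g x a) +
               ENNReal.ofReal (|x| ^ α) * (ENNReal.ofReal (a ^ (-p - 1)) * ttVV α p g ξ a) +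
               ENNReal.ofReal (|x| ^ α) * (ENNReal.ofReal (a ^ (-p - 1)) *
                (ENNReal.ofReal (2 * (C * a)) ^ (p - 1) * ttBB α p C g x a))) := by ring
          _ ≤ _ := by gcongr
    _ = (2 ^ (p - 1) * 2 ^ (p - 1)) * ((∫⁻ x, ∫⁻ ξ, ∫⁻ a in Set.Ioi 0, ttE1 α p C g x ξ a) +
          (∫⁻ x, ∫⁻ ξ, ∫⁻ a in Set.Ioi 0, ttE1 α p C g ξ x a) +
          ∫⁻ x, ∫⁻ ξ, ∫⁻ a in Set.Ioi 0, ttE2 α p C g x ξ a) := by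
        have a1 : ∀ x ξ, ∫⁻ a in Set.Ioi 0, (2 ^ (p - 1) * 2 ^ (p - 1)) *
            (ttE1 α p C g x ξ a + ttE1 α p C g ξ x a + ttE2 α p C g x ξ a) =
            (2 ^ (p - 1) * 2 ^ (p - 1)) * ((∫⁻ a in Set.Ioi 0, ttE1 α p C g x ξ a) +
              (∫⁻ a in Set.Ioi 0, ttE1 α p C g ξ x a) +
              ∫⁻ a in Set.Ioi 0, ttE2 α p C g x ξ a) := by
          intro x ξ
          rw [lintegral_const_mul' _ _ (ENNReal.mul_ne_top hk hk), lintegral_add_right,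
            lintegral_add_left]
          · apply m1' <;> fun_prop
          · apply m2' <;> fun_prop
        have a2 : ∀ x, ∫⁻ ξ, ((∫⁻ a in Set.Ioi 0, ttE1 α p C g x ξ a) +
              (∫⁻ a in Set.Ioi 0, ttE1 α p C g ξ x a) +
              ∫⁻ a in Set.Ioi 0, ttE2 α p C g x ξ a) =
              (∫⁻ ξ, ∫⁻ a in Set.Ioi 0, ttE1 α p C g x ξ a) +
              (∫⁻ ξ, ∫⁻ a in Set.Ioi 0, ttE1 α p C g ξ x a) +
              ∫⁻ ξ, ∫⁻ a in Set.Ioi 0, ttE2 α p C g x ξ a := by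
          intro x
          rw [lintegral_add_right, lintegral_add_left]
          · apply i1 <;> fun_prop
          · apply i2 <;> fun_prop
        simp_rw [a1]
        simp_rw [lintegral_const_mul' _ _ (ENNReal.mul_ne_top hk hk), a2]
        rw [lintegral_add_right, lintegral_add_left]
        · apply tt_lint_meas; apply i1 <;> fun_prop
        · apply tt_lint_meas; apply i2 <;> fun_prop
    _ ≤ (2 ^ (p - 1) * 2 ^ (p - 1)) * (K1 * ttJ p g + K1 * ttJ p g + K2 * ttJ p g) := by
        gcongr
    _ = _ := by ring

open MeasureTheory
open scoped ENNReal

lemma ttκ_bounds {α x ξ : ℝ} (hα : 1 ≤ α) (h : |x| < |ξ|) :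
    |ξ| - |x| ≤ ttκ α x ξ * |ξ| ∧ ttκ α x ξ * |ξ| ≤ α * (|ξ| - |x|) ∧ ttκ α x ξ ≤ 1 ∧
      0 < ttκ α x ξ := by
  have h0 : 0 < |ξ| := (abs_nonneg x).trans_lt h
  have t0 : 0 ≤ |x| / |ξ| := by positivity
  have t1 : |x| / |ξ| < 1 := (div_lt_one h0).2 h
  have a1 := tt_one_sub_rpow_ge hα t0 t1.le
  have a2 := tt_rpow_sub_le hα t0 t1.le
  simp only [Real.one_rpow, mul_one] at a2
  have e : |x| / |ξ| * |ξ| = |x| := by field_simp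
  have a3 : 0 ≤ (|x| / |ξ|) ^ α := by positivity
  unfold ttκ
  refine ⟨?_, ?_, by linarith, by linarith⟩
  · have := mul_le_mul_of_nonneg_right a1 h0.le
    rw [sub_mul, one_mul, e] at this; exact this
  · have := mul_le_mul_of_nonneg_right a2 h0.le
    rw [mul_assoc, sub_mul 1 (|x| / |ξ|), one_mul, e] at this; exact this

@[fun_prop]
lemma ttκ_meas {α : ℝ} {X : Type*} [MeasurableSpace X] {a b : X → ℝ} (ha : Measurable a)
    (hb : Measurable b) : Measurable (fun x => ttκ α (a x) (b x)) := by
  unfold ttκ; fun_prop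

/-- good set indicator -/
noncomputable def ttG (α : ℝ) (u w : ℝ × ℝ) (d : ℝ) : ℝ≥0∞ :=
  ttlt |u.1| |w.1| * (ttle |w.1 - u.1| (4 * d) *
    (ttle (d * ttκ α u.1 w.1) (6 * α * (w.2 - u.2)) * ttle (w.2 - u.2) (10 * d * ttκ α u.1 w.1)))

@[fun_prop]
lemma ttG_meas {α : ℝ} {X : Type*} [MeasurableSpace X] {u w : X → ℝ × ℝ} {d : X → ℝ}
    (hu : Measurable u) (hw : Measurable w) (hd : Measurable d) :
    Measurable (fun x => ttG α (u x) (w x) (d x)) := by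
  unfold ttG; fun_prop

lemma ttG_one {α x y ξ η d : ℝ} (h1 : |x| < |ξ|) (h2 : |ξ - x| ≤ 4 * d)
    (h3 : d * ttκ α x ξ ≤ 6 * α * (η - y)) (h4 : η - y ≤ 10 * d * ttκ α x ξ) :
    ttG α (x, y) (ξ, η) d = 1 := by
  simp [ttG, ttlt, ttle, h1, h2, h3, h4]

lemma tt_good {α x y ξ η M m d : ℝ} (hα : 1 ≤ α) (hd : 0 < d) (hm : 0 < m)
    (hM : |x| ≤ M) (hMx : M ≤ |x| + d)
    (hmM : m ≤ 2 * M + d) (hMm : M + d ≤ m) (hξ1 : M + d ≤ |ξ|) (hξ2 : |ξ| ≤ M + 2 * d)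
    (h2 : |ξ - x| ≤ 4 * d) (h3 : d ^ 2 / m ≤ η - y) (h4 : η - y ≤ 5 * (d ^ 2 / m)) :
    ttG α (x, y) (ξ, η) d = 1 := by
  have hx : |x| < |ξ| := by linarith
  obtain ⟨k1, k2, k3, k4⟩ := ttκ_bounds hα hx
  set κ := ttκ α x ξ with hκ
  have hq : d ^ 2 / m * m = d ^ 2 := by field_simp
  set q := d ^ 2 / m with hqd
  have hq0 : 0 ≤ q := by positivity
  have b1 : d ≤ κ * (2 * m) := by nlinarith
  have b2 : κ * m ≤ 6 * α * d := by
    have : κ * (m / 2) ≤ κ * |ξ| := by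
      apply mul_le_mul_of_nonneg_left _ k4.le; linarith
    have h5 : α * (|ξ| - |x|) ≤ α * (3 * d) := by
      apply mul_le_mul_of_nonneg_left _ (by linarith); linarith
    linarith
  refine ttG_one hx h2 ?_ ?_
  · have : d * κ ≤ 6 * α * q := by
      rw [← mul_le_mul_iff_left₀ hm]
      calc d * κ * m = d * (κ * m) := by ring
        _ ≤ d * (6 * α * d) := by gcongr
        _ = 6 * α * (q * m) := by rw [hq]; ring
        _ = _ := by ring
    have h5 : 6 * α * q ≤ 6 * α * (η - y) := by gcongr
    linarith
  · refine h4.trans ?_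
    rw [← mul_le_mul_iff_left₀ hm]
    calc 5 * q * m = 5 * (q * m) := by ring
      _ = 5 * d * d := by rw [hq]; ring
      _ ≤ 5 * d * (κ * (2 * m)) := by gcongr
      _ = _ := by ring

lemma tt_interval {x x' d : ℝ} (hd : 0 < d) (h : |x - x'| ≤ d) :
    ∃ A : ℝ, ∀ ξ ∈ Set.Icc A (A + d), max |x| |x'| + d ≤ |ξ| ∧ |ξ| ≤ max |x| |x'| + 2 * d ∧
      |ξ - x| ≤ 4 * d ∧ |ξ - x'| ≤ 4 * d := by
  have h' := abs_le.1 h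
  have hM1 := le_max_left |x| |x'|
  have hM2 := le_max_right |x| |x'|
  have hM0 : 0 ≤ max |x| |x'| := (abs_nonneg x).trans hM1
  rcases le_total 0 (x + x') with hs | hs
  · have hMx : max |x| |x'| ≤ x + d ∧ max |x| |x'| ≤ x' + d := by
      constructor <;> apply max_le <;> rw [abs_le] <;> constructor <;> linarith
    have q1 := abs_le.1 hM1
    have q2 := abs_le.1 hM2
    refine ⟨max |x| |x'| + d, fun ξ hξ => ?_⟩
    obtain ⟨h1, h2⟩ := hξ
    have : |ξ| = ξ := abs_of_nonneg (by linarith)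
    rw [this]
    refine ⟨h1, by linarith, ?_, ?_⟩ <;> rw [abs_le] <;> constructor <;> linarith
  · have hMx : max |x| |x'| ≤ -x + d ∧ max |x| |x'| ≤ -x' + d := by
      constructor <;> apply max_le <;> rw [abs_le] <;> constructor <;> linarith
    have q1 := abs_le.1 hM1
    have q2 := abs_le.1 hM2
    refine ⟨-(max |x| |x'| + 2 * d), fun ξ hξ => ?_⟩
    obtain ⟨h1, h2⟩ := hξ
    have : |ξ| = -ξ := abs_of_nonpos (by linarith)
    rw [this]
    refine ⟨by linarith, by linarith, ?_, ?_⟩ <;> rw [abs_le] <;> constructor <;> linarith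

noncomputable def ttD (p : ℝ) (F : ℝ × ℝ → ℝ) (u v : ℝ × ℝ) : ℝ≥0∞ := ‖F u - F v‖ₑ ^ p

lemma ttD_symm (p : ℝ) (F : ℝ × ℝ → ℝ) (u v : ℝ × ℝ) : ttD p F u v = ttD p F v u := by
  unfold ttD; rw [← enorm_neg, neg_sub]

lemma ttD_self {p : ℝ} (hp : 1 < p) (F : ℝ × ℝ → ℝ) (u : ℝ × ℝ) : ttD p F u u = 0 := by
  unfold ttD; simp; linarith

lemma ttD_meas {p : ℝ} {F : ℝ × ℝ → ℝ} (hF : Measurable F) {X : Type*} [MeasurableSpace X]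
    {u v : X → ℝ × ℝ} (hu : Measurable u) (hv : Measurable v) :
    Measurable (fun x => ttD p F (u x) (v x)) := by
  unfold ttD; fun_prop

lemma ttD_tri {p : ℝ} (hp : 1 < p) (F : ℝ × ℝ → ℝ) (u v w : ℝ × ℝ) :
    ttD p F u v ≤ 2 ^ (p - 1) * (ttD p F u w + ttD p F v w) := by
  unfold ttD
  refine le_trans (ENNReal.rpow_le_rpow ?_ (by linarith))
    (ENNReal.rpow_add_le_mul_rpow_add_rpow _ _ hp.le)
  have e : F u - F v = (F u - F w) + -(F v - F w) := by ring
  rw [e]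
  refine (enorm_add_le _ _).trans ?_
  rw [enorm_neg]

noncomputable def ttQ (α p : ℝ) (F : ℝ × ℝ → ℝ) (u v : ℝ × ℝ) : ℝ≥0∞ :=
  ∫⁻ w, ttG α u w (ttδ u v) * ttD p F u w

lemma ttA1 {α p : ℝ} (hα : 1 ≤ α) (hp : 1 < p) {F : ℝ × ℝ → ℝ} (hF : Measurable F)
    {u v : ℝ × ℝ} (huv : u ≠ v) :
    ENNReal.ofReal (ttδ u v ^ 3 / ttm u v) * ttD p F u v ≤
      2 ^ (p - 1) * (ttQ α p F u v + ttQ α p F v u) := by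
  obtain ⟨x, y⟩ := u
  obtain ⟨x', y'⟩ := v
  have hd := ttδ_pos huv
  have hx := ttδ_x (x, y) (x', y')
  have hy := ttm_y (x, y) (x', y')
  have hsymm := ttδ_symm (x, y) (x', y')
  have hmd : ttm (x, y) (x', y') = |x| + |x'| + ttδ (x, y) (x', y') := rfl
  have hkk : (2:ℝ≥0∞) ^ (p - 1) ≠ ⊤ := ENNReal.rpow_ne_top_of_nonneg (by linarith) (by norm_num)
  simp only at hx hy
  unfold ttQ
  rw [← hsymm]
  set d := ttδ (x, y) (x', y') with hd'
  set m := ttm (x, y) (x', y') with hm'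
  have hm : 0 < m := by rw [hmd]; positivity
  obtain ⟨A, hA⟩ := tt_interval hd hx
  have hM1 := le_max_left |x| |x'|
  have hM2 := le_max_right |x| |x'|
  have hMs : max |x| |x'| ≤ |x| + |x'| := max_le (by linarith [abs_nonneg x'])
    (by linarith [abs_nonneg x])
  have hMx : max |x| |x'| ≤ |x| + d := max_le (by linarith) (by
    have := abs_sub_abs_le_abs_sub x' x; rw [abs_sub_comm] at this; linarith)
  have hMx' : max |x| |x'| ≤ |x'| + d := max_le (by
    have := abs_sub_abs_le_abs_sub x x'; linarith) (by linarith)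
  have hyy : |y - y'| ≤ 3 * (d ^ 2 / m) := by
    rw [← mul_div_assoc, le_div_iff₀ hm]; linarith
  set q := d ^ 2 / m with hq
  have hyy' := abs_le.1 hyy
  have hN1 := le_max_left y y'
  have hN2 := le_max_right y y'
  have hN3 : max y y' ≤ y + 3 * q := max_le (by have : 0 ≤ q := by positivity
                                                linarith) (by linarith)
  have hN4 : max y y' ≤ y' + 3 * q := max_le (by linarith) (by have : 0 ≤ q := by positivity
                                                               linarith)
  set S : Set (ℝ × ℝ) := Set.Icc A (A + d) ×ˢ Set.Icc (max y y' + q) (max y y' + 2 * q) with hS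
  have hSm : MeasurableSet S := measurableSet_Icc.prod measurableSet_Icc
  have vol : volume S = ENNReal.ofReal (d ^ 3 / m) := by
    rw [hS, Measure.volume_eq_prod, Measure.prod_prod, Real.volume_Icc, Real.volume_Icc,
      ← ENNReal.ofReal_mul (by linarith)]
    congr 1
    rw [hq]; ring
  have good : ∀ w ∈ S, ttG α (x, y) w d = 1 ∧ ttG α (x', y') w d = 1 := by
    rintro ⟨ξ, η⟩ ⟨h1, h2⟩
    simp only at h1 h2
    obtain ⟨a1, a2, a3, a4⟩ := hA ξ h1
    constructor
    · exact tt_good hα hd hm hM1 hMx (by linarith) (by linarith) a1 a2 a3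
        (by linarith [h2.1]) (by linarith [h2.2])
    · exact tt_good hα hd hm hM2 hMx' (by linarith) (by linarith) a1 a2 a4
        (by linarith [h2.1]) (by linarith [h2.2])
  have mD : ∀ u, Measurable fun w => ttD p F u w := fun u => ttD_meas hF (by fun_prop) (by fun_prop)
  calc _ = ∫⁻ w in S, ttD p F (x, y) (x', y') := by
        rw [setLIntegral_const, vol, mul_comm]
    _ ≤ ∫⁻ w in S, 2 ^ (p - 1) * (ttG α (x, y) w d * ttD p F (x, y) w +
          ttG α (x', y') w d * ttD p F (x', y') w) := by
        refine setLIntegral_mono' hSm fun w hw => ?_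
        obtain ⟨g1, g2⟩ := good w hw
        rw [g1, g2, one_mul, one_mul]
        exact ttD_tri hp F _ _ _
    _ ≤ ∫⁻ w, 2 ^ (p - 1) * (ttG α (x, y) w d * ttD p F (x, y) w +
          ttG α (x', y') w d * ttD p F (x', y') w) := setLIntegral_le_lintegral _ _
    _ = _ := by
        rw [lintegral_const_mul' _ _ hkk, lintegral_add_left]
        have := mD (x, y)
        fun_prop

noncomputable def ttN (α p : ℝ) (u v : ℝ × ℝ) : ℝ≥0∞ :=
  ENNReal.ofReal (|u.1| ^ α) * (ENNReal.ofReal (|v.1| ^ α) *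
    ENNReal.ofReal (ttδ u v ^ (-p - 5) * ttm u v ^ (2 - α)))

noncomputable def ttCA (α p : ℝ) : ℝ := 144 * α ^ 2 * 10 ^ (p + 5)

noncomputable def ttH (α p x ξ a : ℝ) : ℝ≥0∞ :=
  ttlt |x| |ξ| * (ttle |ξ - x| (24 * α * a) * (ttlt 0 a * (ENNReal.ofReal (|x| ^ α) *
    ENNReal.ofReal (ttCA α p * (12 * α) * (2160 * α ^ 2) * ((|x| + a) * a ^ (-p - 2))))))

lemma ttA2 {α p : ℝ} (hα : 1 ≤ α) (hp : 1 < p) (u w : ℝ × ℝ) :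
    ∫⁻ v, ttN α p u v * ttG α u w (ttδ u v) ≤
      ttH α p u.1 w.1 ((w.2 - u.2) / ttκ α u.1 w.1) := by
  obtain ⟨x, y⟩ := u
  obtain ⟨ξ, η⟩ := w
  simp only
  by_cases hx : |x| < |ξ|
  swap
  · simp [ttG, ttlt, hx]
  obtain ⟨-, -, -, hκ⟩ := ttκ_bounds hα hx
  set κ := ttκ α x ξ with hκd
  set a := (η - y) / κ with ha
  have haκ : η - y = a * κ := by rw [ha]; field_simp
  set c : ℝ≥0∞ := ttle |ξ - x| (24 * α * a) * (ttlt 0 a * (ENNReal.ofReal (|x| ^ α) *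
    ENNReal.ofReal (ttCA α p * ((|x| + a) ^ 2 * a ^ (-p - 5))))) with hc
  set ρ := 1080 * α ^ 2 * a ^ 2 / (|x| + a) with hρ
  have key : ∀ v : ℝ × ℝ, ttN α p (x, y) v * ttG α (x, y) (ξ, η) (ttδ (x, y) v) ≤
      c * (ttle |x - v.1| (6 * α * a) * ttle |y - v.2| ρ) := by
    rintro ⟨x', y'⟩
    have dx := ttδ_x (x, y) (x', y')
    have dy := ttm_y (x, y) (x', y')
    have dm := ttm_le (x, y) (x', y')
    have d0 := ttδ_nonneg (x, y) (x', y')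
    have hmd : ttm (x, y) (x', y') = |x| + |x'| + ttδ (x, y) (x', y') := rfl
    unfold ttN ttG
    simp only at dx dy dm ⊢
    set d := ttδ (x, y) (x', y')
    set m := ttm (x, y) (x', y')
    by_cases h1 : |ξ - x| ≤ 4 * d
    swap
    · simp [ttle, h1]
    by_cases h2 : d * κ ≤ 6 * α * (η - y)
    swap
    · simp [ttle, ← hκd, h2]
    by_cases h3 : η - y ≤ 10 * d * κ
    swap
    · simp [ttle, ← hκd, h3]
    rw [haκ, ← mul_assoc] at h2
    have h2 := le_of_mul_le_mul_right h2 hκ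
    rw [haκ] at h3
    have h3 := le_of_mul_le_mul_right h3 hκ
    rcases d0.eq_or_lt with hd | hd
    · rw [← hd, Real.zero_rpow (by linarith)]; simp
    have hα0 : 0 < α := by linarith
    have ha0 : 0 < a := by
      have : 0 < 6 * α * a := by linarith
      exact pos_of_mul_pos_right this (by positivity)
    have hm : 0 < m := by rw [hmd]; positivity
    have i1 : |ξ - x| ≤ 24 * α * a := by linarith
    have i2 : |x - x'| ≤ 6 * α * a := by linarith
    have hxa : 0 < |x| + a := by positivity
    have i3 : |y - y'| ≤ ρ := by
      rw [hρ, le_div_iff₀ hxa]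
      have g1 : |x| + a ≤ 10 * m := by
        rw [hmd]; linarith [abs_nonneg x, abs_nonneg x']
      have g2 : d ^ 2 ≤ (6 * α * a) ^ 2 := by gcongr
      calc |y - y'| * (|x| + a) ≤ |y - y'| * (10 * m) := by gcongr
        _ = 10 * (m * |y - y'|) := by ring
        _ ≤ 10 * (3 * (6 * α * a) ^ 2) := by linarith
        _ = _ := by ring
    have i4 : |x'| ^ α * (d ^ (-p - 5) * m ^ (2 - α)) ≤
        ttCA α p * ((|x| + a) ^ 2 * a ^ (-p - 5)) := by
      have g1 : |x'| ^ α ≤ m ^ α := by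
        apply Real.rpow_le_rpow (abs_nonneg _) _ hα0.le
        rw [hmd]; linarith [abs_nonneg x]
      have g2 : m ^ α * m ^ (2 - α) = m ^ 2 := by
        rw [← Real.rpow_add hm, ← Real.rpow_natCast]; congr 1; push_cast; ring
      have g3 : m ^ 2 ≤ (12 * α * (|x| + a)) ^ 2 := by
        gcongr
        have : |x| ≤ 6 * α * |x| := by nlinarith [abs_nonneg x]
        linarith
      have g4 : d ^ (-p - 5) ≤ 10 ^ (p + 5) * a ^ (-p - 5) := by
        have e : (10:ℝ) ^ (p + 5) * a ^ (-p - 5) = (a / 10) ^ (-p - 5) := by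
          rw [Real.div_rpow ha0.le (by norm_num), div_eq_mul_inv, ← Real.rpow_neg (by norm_num),
            mul_comm]
          congr 2; ring
        rw [e]
        apply Real.rpow_le_rpow_of_nonpos (by positivity) (by linarith) (by linarith)
      calc _ ≤ m ^ α * (d ^ (-p - 5) * m ^ (2 - α)) := by gcongr
        _ = d ^ (-p - 5) * m ^ 2 := by rw [← g2]; ring
        _ ≤ (10 ^ (p + 5) * a ^ (-p - 5)) * (12 * α * (|x| + a)) ^ 2 := by gcongr
        _ = _ := by unfold ttCA; ring
    have i5 : ∀ s t : ℝ, ttle s t ≤ 1 := by intro s t; unfold ttle; split_ifs <;> simp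
    have i6 : ∀ s t : ℝ, ttlt s t ≤ 1 := by intro s t; unfold ttlt; split_ifs <;> simp
    calc _ ≤ ENNReal.ofReal (|x| ^ α) * (ENNReal.ofReal (|x'| ^ α) *
          ENNReal.ofReal (d ^ (-p - 5) * m ^ (2 - α))) * (1 * (1 * (1 * 1))) := by
          gcongr
          · exact i6 _ _
          · exact i5 _ _
          · exact i5 _ _
          · exact i5 _ _
      _ ≤ ENNReal.ofReal (|x| ^ α) * ENNReal.ofReal (ttCA α p * ((|x| + a) ^ 2 * a ^ (-p - 5))) := by
          simp only [mul_one]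
          rw [← ENNReal.ofReal_mul (by positivity)]
          gcongr
      _ = _ := by
          simp [hc, ttle, ttlt, i1, i2, i3, ha0]
  refine (lintegral_mono key).trans ?_
  rw [lintegral_const_mul _ (by fun_prop), Measure.volume_eq_prod,
    lintegral_prod_mul (f := fun s => ttle |x - s| (6 * α * a)) (g := fun s => ttle |y - s| ρ)
      (by fun_prop) (by fun_prop), ttle_ball_int', ttle_ball_int']
  rw [hc]
  unfold ttH
  by_cases ha0 : 0 < a
  swap
  · simp [ttlt, ha0]
  have hxa : 0 < |x| + a := by positivity
  have hα0 : 0 < α := by linarith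
  have e1 : ttlt |x| |ξ| = 1 := by simp [ttlt, hx]
  rw [e1, one_mul]
  have hCA : 0 < ttCA α p := by unfold ttCA; positivity
  have e2 : a ^ (-p - 2) = a ^ (-p - 5) * a ^ 3 := by
    rw [← Real.rpow_natCast a 3, ← Real.rpow_add ha0]; congr 1; push_cast; ring
  have e3 : ENNReal.ofReal (ttCA α p * ((|x| + a) ^ 2 * a ^ (-p - 5))) *
      (ENNReal.ofReal (2 * (6 * α * a)) * ENNReal.ofReal (2 * ρ)) =
      ENNReal.ofReal (ttCA α p * (12 * α) * (2160 * α ^ 2) * ((|x| + a) * a ^ (-p - 2))) := by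
    rw [← ENNReal.ofReal_mul (by positivity), ← ENNReal.ofReal_mul (by positivity)]
    congr 1
    rw [e2, hρ]
    field_simp
    ring
  rw [← e3]
  apply le_of_eq
  ring

open MeasureTheory
open scoped ENNReal

lemma tt_affine {c : ℝ} (hc : 0 < c) (y : ℝ) {K : ℝ → ℝ≥0∞} (hK : Measurable K) :
    ∫⁻ η, K η = ENNReal.ofReal c * ∫⁻ a, K (y + a * c) := by
  have h1 : ∫⁻ s, K (y + c * s) = ENNReal.ofReal c⁻¹ * ∫⁻ s, K (y + s) := by
    rw [← lintegral_map (f := fun s => K (y + s)) (by fun_prop) (measurable_const_mul c),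
      Real.map_volume_mul_left hc.ne', lintegral_smul_measure, abs_of_pos (by positivity)]
    rfl
  simp_rw [mul_comm _ c]
  rw [h1, lintegral_add_left_eq_self, ← mul_assoc, ← ENNReal.ofReal_mul hc.le,
    mul_inv_cancel₀ hc.ne']
  simp

lemma tt_prod {Φ : ℝ × ℝ → ℝ≥0∞} (h : Measurable Φ) : ∫⁻ u, Φ u = ∫⁻ x, ∫⁻ y, Φ (x, y) := by
  rw [Measure.volume_eq_prod, lintegral_prod _ h.aemeasurable]

lemma ttH_meas {α p : ℝ} {X : Type*} [MeasurableSpace X] {a b c : X → ℝ} (ha : Measurable a)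
    (hb : Measurable b) (hc : Measurable c) : Measurable (fun x => ttH α p (a x) (b x) (c x)) := by
  unfold ttH; fun_prop

noncomputable def ttK3 (α p : ℝ) : ℝ :=
  (24 * α ^ 2 + 1) * (ttCA α p * (12 * α) * (2160 * α ^ 2))

lemma ttH_le {α p : ℝ} (hα : 1 ≤ α) {x ξ a : ℝ} (hx : |x| < |ξ|) :
    ENNReal.ofReal (ttκ α x ξ) * ttH α p x ξ a ≤ ENNReal.ofReal (ttK3 α p) *
      (ttlt 0 a * (ttlt |x| |ξ| * (ttle |ξ - x| (24 * α * a) *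
        (ENNReal.ofReal (|x| ^ α) * ENNReal.ofReal (a ^ (-p - 1)))))) := by
  obtain ⟨k1, k2, k3, k4⟩ := ttκ_bounds hα hx
  have hα0 : 0 < α := by linarith
  unfold ttH
  by_cases ha : 0 < a
  swap
  · simp [ttlt, ha]
  by_cases hR : |ξ - x| ≤ 24 * α * a
  swap
  · simp [ttle, hR]
  simp only [ttlt, ttle, ha, hR, hx, if_true, one_mul]
  have hCA : 0 < ttCA α p := by unfold ttCA; positivity
  have h1 : ttκ α x ξ * (|x| + a) ≤ (24 * α ^ 2 + 1) * a := by
    have g1 : ttκ α x ξ * |x| ≤ ttκ α x ξ * |ξ| := by gcongr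
    have g2 : |ξ| - |x| ≤ 24 * α * a := (abs_sub_abs_le_abs_sub ξ x).trans hR
    have g3 : α * (|ξ| - |x|) ≤ α * (24 * α * a) := by gcongr
    have g4 : ttκ α x ξ * a ≤ 1 * a := by gcongr
    nlinarith
  have h2 : ttκ α x ξ * (ttCA α p * (12 * α) * (2160 * α ^ 2) * ((|x| + a) * a ^ (-p - 2))) ≤
      ttK3 α p * a ^ (-p - 1) := by
    have e : a ^ (-p - 1) = a * a ^ (-p - 2) := by
      rw [show -p - 1 = (-p - 2) + 1 by ring, Real.rpow_add_one ha.ne', mul_comm]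
    rw [e]
    calc _ = (ttCA α p * (12 * α) * (2160 * α ^ 2)) * (ttκ α x ξ * (|x| + a)) * a ^ (-p - 2) := by
          ring
      _ ≤ (ttCA α p * (12 * α) * (2160 * α ^ 2)) * ((24 * α ^ 2 + 1) * a) * a ^ (-p - 2) := by
          gcongr
      _ = _ := by unfold ttK3; ring
  have hK : 0 < ttK3 α p := by unfold ttK3; positivity
  calc _ = ENNReal.ofReal (|x| ^ α) * (ENNReal.ofReal (ttκ α x ξ) * ENNReal.ofReal
        (ttCA α p * (12 * α) * (2160 * α ^ 2) * ((|x| + a) * a ^ (-p - 2)))) := by ring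
    _ ≤ ENNReal.ofReal (|x| ^ α) * (ENNReal.ofReal (ttK3 α p) * ENNReal.ofReal (a ^ (-p - 1))) := by
        rw [← ENNReal.ofReal_mul k4.le, ← ENNReal.ofReal_mul hK.le]
        gcongr
    _ = _ := by ring

lemma ttA3 {α p : ℝ} (hα : 1 ≤ α) {F : ℝ × ℝ → ℝ} (hF : Measurable F) :
    ∫⁻ u : ℝ × ℝ, ∫⁻ w : ℝ × ℝ, ttH α p u.1 w.1 ((w.2 - u.2) / ttκ α u.1 w.1) * ttD p F u w ≤
      ENNReal.ofReal (ttK3 α p) * ttT α p (24 * α) (fun x y => F (x, y)) := by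
  have m0 : ∀ {X : Type} [MeasurableSpace X] {u w : X → ℝ × ℝ}, Measurable u → Measurable w →
      Measurable fun q => ttH α p (u q).1 (w q).1 (((w q).2 - (u q).2) / ttκ α (u q).1 (w q).1) *
        ttD p F (u q) (w q) := by
    intro X _ u w hu hw
    exact (ttH_meas (by fun_prop) (by fun_prop) (by fun_prop)).mul (ttD_meas hF hu hw)
  have e1 : ∀ u : ℝ × ℝ, ∫⁻ w : ℝ × ℝ, ttH α p u.1 w.1 ((w.2 - u.2) / ttκ α u.1 w.1) *
      ttD p F u w = ∫⁻ ξ, ∫⁻ η, ttH α p u.1 ξ ((η - u.2) / ttκ α u.1 ξ) * ttD p F u (ξ, η) := by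
    intro u
    exact tt_prod (m0 (u := fun _ => u) (w := fun w => w) measurable_const measurable_id)
  simp_rw [e1]
  rw [tt_prod]
  swap
  · apply tt_lint_meas; apply tt_lint_meas
    exact m0 (X := ((ℝ × ℝ) × ℝ) × ℝ) (u := fun q => q.1.1) (w := fun q => (q.1.2, q.2))
      (by fun_prop) (by fun_prop)
  unfold ttT
  rw [← lintegral_const_mul' _ _ ENNReal.ofReal_ne_top]
  refine lintegral_mono fun x => ?_
  rw [tt_swap]
  swap
  · apply tt_lint_meas
    exact m0 (X := (ℝ × ℝ) × ℝ) (u := fun q => (x, q.1.1)) (w := fun q => (q.1.2, q.2))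
      (by fun_prop) (by fun_prop)
  rw [← lintegral_const_mul' _ _ ENNReal.ofReal_ne_top]
  refine lintegral_mono fun ξ => ?_
  by_cases hx : |x| < |ξ|
  swap
  · simp [ttH, ttlt, hx]
  obtain ⟨-, -, -, hκ⟩ := ttκ_bounds hα hx
  have mD : Measurable fun q : ℝ × ℝ => ttD p F (x, q.1) (ξ, q.1 + q.2 * ttκ α x ξ) :=
    ttD_meas hF (by fun_prop) (by fun_prop)
  have mH : Measurable fun a => ttH α p x ξ a := ttH_meas (by fun_prop) (by fun_prop) (by fun_prop)
  calc _ = ∫⁻ y, ∫⁻ a, ENNReal.ofReal (ttκ α x ξ) *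
        (ttH α p x ξ a * ttD p F (x, y) (ξ, y + a * ttκ α x ξ)) := by
        refine lintegral_congr fun y => ?_
        simp only
        rw [tt_affine hκ y, ← lintegral_const_mul' _ _ ENNReal.ofReal_ne_top]
        · refine lintegral_congr fun a => ?_
          rw [add_sub_cancel_left, mul_div_cancel_right₀ _ hκ.ne']
        · exact m0 (X := ℝ) (u := fun q => (x, y)) (w := fun q => (ξ, q))
            (by fun_prop) (by fun_prop)
    _ = ∫⁻ a, ∫⁻ y, ENNReal.ofReal (ttκ α x ξ) *
        (ttH α p x ξ a * ttD p F (x, y) (ξ, y + a * ttκ α x ξ)) := by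
        apply tt_swap; fun_prop
    _ = ∫⁻ a, (ENNReal.ofReal (ttκ α x ξ) * ttH α p x ξ a) *
        ∫⁻ y, ttD p F (x, y) (ξ, y + a * ttκ α x ξ) := by
        refine lintegral_congr fun a => ?_
        rw [← lintegral_const_mul]
        · refine lintegral_congr fun y => ?_
          ring
        · exact ttD_meas hF (by fun_prop) (by fun_prop)
    _ ≤ ∫⁻ a, (ENNReal.ofReal (ttK3 α p) *
      (ttlt 0 a * (ttlt |x| |ξ| * (ttle |ξ - x| (24 * α * a) *
        (ENNReal.ofReal (|x| ^ α) * ENNReal.ofReal (a ^ (-p - 1))))))) *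
        ∫⁻ y, ttD p F (x, y) (ξ, y + a * ttκ α x ξ) := by
        refine lintegral_mono fun a => ?_
        exact mul_le_mul_left (ttH_le hα hx) _
    _ = _ := by
        rw [tt_set_Ioi, ← lintegral_const_mul' _ _ ENNReal.ofReal_ne_top]
        refine lintegral_congr fun a => ?_
        unfold ttD
        ring

lemma ttδ_meas {X : Type*} [MeasurableSpace X] {u v : X → ℝ × ℝ} (hu : Measurable u)
    (hv : Measurable v) : Measurable (fun x => ttδ (u x) (v x)) :=
  ttδ_cont.measurable.comp (f := fun x => (u x, v x)) (by fun_prop)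

lemma ttm_meas {X : Type*} [MeasurableSpace X] {u v : X → ℝ × ℝ} (hu : Measurable u)
    (hv : Measurable v) : Measurable (fun x => ttm (u x) (v x)) :=
  ttm_cont.measurable.comp (f := fun x => (u x, v x)) (by fun_prop)

lemma ttN_meas {α p : ℝ} {X : Type*} [MeasurableSpace X] {u v : X → ℝ × ℝ} (hu : Measurable u)
    (hv : Measurable v) : Measurable (fun x => ttN α p (u x) (v x)) := by
  have := ttδ_meas hu hv
  have := ttm_meas hu hv
  unfold ttN; fun_prop

lemma ttQ_meas {α p : ℝ} {F : ℝ × ℝ → ℝ} (hF : Measurable F) {X : Type*} [MeasurableSpace X]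
    {u v : X → ℝ × ℝ} (hu : Measurable u)
    (hv : Measurable v) : Measurable (fun x => ttQ α p F (u x) (v x)) := by
  unfold ttQ
  apply tt_lint_meas
  have h1 := ttδ_meas (X := X × (ℝ × ℝ)) (hu.comp measurable_fst) (hv.comp measurable_fst)
  have h2 := ttD_meas (p := p) (X := X × (ℝ × ℝ)) hF (hu.comp measurable_fst) measurable_snd
  exact Measurable.mul (ttG_meas (by fun_prop) (by fun_prop) h1) h2

lemma ttA4 {α p : ℝ} (hα : 1 ≤ α) (hp : 1 < p) {F : ℝ × ℝ → ℝ} (hF : Measurable F) :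
    ∫⁻ u, ∫⁻ v, ttN α p u v * ttQ α p F u v ≤
      ENNReal.ofReal (ttK3 α p) * ttT α p (24 * α) (fun x y => F (x, y)) := by
  refine le_trans (lintegral_mono fun u => ?_) (ttA3 hα hF)
  have mD : Measurable fun w => ttD p F u w := ttD_meas hF (by fun_prop) (by fun_prop)
  have mG : Measurable fun q : (ℝ × ℝ) × (ℝ × ℝ) => ttG α u q.2 (ttδ u q.1) :=
    ttG_meas (by fun_prop) (by fun_prop) (ttδ_meas (by fun_prop) (by fun_prop))
  have mN : Measurable fun v => ttN α p u v := ttN_meas (by fun_prop) (by fun_prop)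
  calc _ = ∫⁻ v, ∫⁻ w, ttN α p u v * (ttG α u w (ttδ u v) * ttD p F u w) := by
        refine lintegral_congr fun v => ?_
        unfold ttQ
        rw [lintegral_const_mul]
        exact (mG.comp (f := fun w => (v, w)) (by fun_prop)).mul mD
    _ = ∫⁻ w, ∫⁻ v, ttN α p u v * (ttG α u w (ttδ u v) * ttD p F u w) := by
        apply tt_swap; fun_prop
    _ = ∫⁻ w, (∫⁻ v, ttN α p u v * ttG α u w (ttδ u v)) * ttD p F u w := by
        refine lintegral_congr fun w => ?_
        rw [← lintegral_mul_const]
        · refine lintegral_congr fun v => ?_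
          ring
        · exact mN.mul (mG.comp (f := fun v => (v, w)) (by fun_prop))
    _ ≤ _ := by
        refine lintegral_mono fun w => ?_
        gcongr
        exact ttA2 hα hp u w

noncomputable def ttM (α p : ℝ) (u v : ℝ × ℝ) : ℝ≥0∞ :=
  ENNReal.ofReal ((ttδ u v ^ (p + 2) * ttm u v ^ (α - 1))⁻¹)

lemma ttM_meas {α p : ℝ} {X : Type*} [MeasurableSpace X] {u v : X → ℝ × ℝ} (hu : Measurable u)
    (hv : Measurable v) : Measurable (fun x => ttM α p (u x) (v x)) := by
  have := ttδ_meas hu hv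
  have := ttm_meas hu hv
  unfold ttM; fun_prop

lemma ttN_symm (α p : ℝ) (u v : ℝ × ℝ) : ttN α p u v = ttN α p v u := by
  unfold ttN; rw [ttδ_symm, ttm_symm]; ring

lemma ttA5 {α p : ℝ} (hα : 1 ≤ α) (hp : 1 < p) {F : ℝ × ℝ → ℝ} (hF : Measurable F) :
    ∫⁻ u : ℝ × ℝ, ∫⁻ v : ℝ × ℝ, ENNReal.ofReal (|u.1| ^ α) * (ENNReal.ofReal (|v.1| ^ α) *
      (ttM α p u v * ttD p F u v)) ≤
      2 ^ (p - 1) * (2 * (ENNReal.ofReal (ttK3 α p) * ttT α p (24 * α) (fun x y => F (x, y)))) := by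
  have hkk : (2:ℝ≥0∞) ^ (p - 1) ≠ ⊤ := ENNReal.rpow_ne_top_of_nonneg (by linarith) (by norm_num)
  have mN : Measurable fun q : (ℝ × ℝ) × (ℝ × ℝ) => ttN α p q.1 q.2 :=
    ttN_meas (by fun_prop) (by fun_prop)
  have mQ : Measurable fun q : (ℝ × ℝ) × (ℝ × ℝ) => ttQ α p F q.1 q.2 :=
    ttQ_meas hF (by fun_prop) (by fun_prop)
  have mQ' : Measurable fun q : (ℝ × ℝ) × (ℝ × ℝ) => ttQ α p F q.2 q.1 :=
    ttQ_meas hF (by fun_prop) (by fun_prop)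
  calc _ ≤ ∫⁻ u, ∫⁻ v, 2 ^ (p - 1) * (ttN α p u v * ttQ α p F u v + ttN α p u v * ttQ α p F v u) := by
        refine lintegral_mono fun u => lintegral_mono fun v => ?_
        rcases eq_or_ne u v with h | h
        · simp [h, ttD_self hp]
        have hd := ttδ_pos h
        have hm : 0 < ttm u v := by unfold ttm; positivity
        have e : ttM α p u v = ENNReal.ofReal (ttδ u v ^ (-p - 5) * ttm u v ^ (2 - α)) *
            ENNReal.ofReal (ttδ u v ^ 3 / ttm u v) := by
          unfold ttM
          rw [← ENNReal.ofReal_mul (by positivity)]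
          congr 1
          have a1 : ttδ u v ^ (-p - 5) = (ttδ u v ^ (p + 2))⁻¹ / ttδ u v ^ 3 := by
            rw [← Real.rpow_neg hd.le, ← Real.rpow_natCast, ← Real.rpow_sub hd]
            congr 1; push_cast; ring
          have a2 : ttm u v ^ (2 - α) = (ttm u v ^ (α - 1))⁻¹ * ttm u v := by
            rw [← Real.rpow_neg hm.le, ← Real.rpow_add_one hm.ne']
            congr 1; ring
          rw [a1, a2]
          have : 0 < ttδ u v ^ (p + 2) := by positivity
          have : 0 < ttm u v ^ (α - 1) := by positivity
          field_simp
        calc _ = ttN α p u v * (ENNReal.ofReal (ttδ u v ^ 3 / ttm u v) * ttD p F u v) := by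
              rw [e]; unfold ttN; ring
          _ ≤ ttN α p u v * (2 ^ (p - 1) * (ttQ α p F u v + ttQ α p F v u)) := by
              exact mul_le_mul_right (ttA1 hα hp hF h) _
          _ = _ := by ring
    _ = 2 ^ (p - 1) * ((∫⁻ u, ∫⁻ v, ttN α p u v * ttQ α p F u v) +
          ∫⁻ u, ∫⁻ v, ttN α p u v * ttQ α p F v u) := by
        simp_rw [lintegral_const_mul' _ _ hkk]
        congr 1
        rw [← lintegral_add_left]
        · refine lintegral_congr fun u => ?_
          rw [lintegral_add_left]
          exact (mN.mul mQ).comp (f := fun v => (u, v)) (by fun_prop)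
        · apply tt_lint_meas; exact mN.mul mQ
    _ = 2 ^ (p - 1) * (2 * ∫⁻ u, ∫⁻ v, ttN α p u v * ttQ α p F u v) := by
        congr 1
        rw [two_mul]
        congr 1
        rw [tt_swap (by fun_prop)]
        refine lintegral_congr fun u => lintegral_congr fun v => ?_
        rw [ttN_symm]
    _ ≤ _ := by
        gcongr; exact ttA4 hα hp hF

open MeasureTheory
open scoped ENNReal

lemma ttJ_le {α p : ℝ} (hα : 1 ≤ α) (hp : 1 < p) {f : ℝ × ℝ × ℝ → ℝ}
    (hf : ContDiffOn ℝ 1 f upperHalf) :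
    ttJ p (fun q => ENNReal.ofReal (ttF α f q)) ≤
      ∫⁻ q in upperHalf, ENNReal.ofReal ((XGradNorm α f q) ^ p) := by
  have hm : Measurable (fun q => ENNReal.ofReal (ttF α f q) ^ p) :=
    ((ttF_continuous hα hf).measurable.ennreal_ofReal).pow_const _
  have hU : MeasurableSet upperHalf := measurableSet_le measurable_const (by fun_prop)
  calc ttJ p (fun q => ENNReal.ofReal (ttF α f q)) =
      ∫⁻ q : ℝ × ℝ × ℝ, ttlt 0 q.2.2 * ENNReal.ofReal (ttF α f q) ^ p := by
        rw [Measure.volume_eq_prod, lintegral_prod _ (by fun_prop)]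
        unfold ttJ ttΓ
        refine lintegral_congr fun x => ?_
        have h2 : Measurable fun q : ℝ × ℝ => ENNReal.ofReal (ttF α f (x, q.1, q.2)) ^ p :=
          hm.comp (f := fun q : ℝ × ℝ => (x, q.1, q.2)) (by fun_prop)
        have h2' : Measurable fun q : ℝ × ℝ => ENNReal.ofReal (ttF α f (x, q.2, q.1)) ^ p :=
          hm.comp (f := fun q : ℝ × ℝ => (x, q.2, q.1)) (by fun_prop)
        rw [tt_prod (Φ := fun q => ttlt 0 q.2 * ENNReal.ofReal (ttF α f (x, q)) ^ p)
          (Measurable.mul (by fun_prop) h2)]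
        rw [tt_swap (by exact h2')]
        refine lintegral_congr fun y => ?_
        rw [tt_set_Ioi]
    _ ≤ _ := by
        rw [← lintegral_indicator hU]
        refine lintegral_mono fun q => ?_
        by_cases h : 0 < q.2.2
        · have hq : q ∈ upperHalf := h.le
          simp only [ttlt, h, if_true, one_mul, Set.indicator_of_mem hq]
          rw [ttF_eq hq, ENNReal.ofReal_rpow_of_nonneg (by unfold XGradNorm; positivity)
            (by linarith)]
        · simp [ttlt, h]

lemma tt_plane {α : ℝ} {Φ : (ℝ × ℝ) × (ℝ × ℝ) → ℝ≥0∞} (h : Measurable Φ) :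
    ∫⁻ w, Φ w ∂((planeMeasure α).prod (planeMeasure α)) =
      ∫⁻ u : ℝ × ℝ, ∫⁻ v : ℝ × ℝ, ENNReal.ofReal (|u.1| ^ α) *
        (ENNReal.ofReal (|v.1| ^ α) * Φ (u, v)) := by
  have hd : Measurable fun u : ℝ × ℝ => ENNReal.ofReal (|u.1| ^ α) := by fun_prop
  unfold planeMeasure
  rw [lintegral_prod _ h.aemeasurable, lintegral_withDensity_eq_lintegral_mul _ hd]
  · refine lintegral_congr fun u => ?_
    rw [Pi.mul_apply, lintegral_withDensity_eq_lintegral_mul _ hd (by fun_prop),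
      ← lintegral_const_mul' _ _ ENNReal.ofReal_ne_top]
    rfl
  · exact Measurable.lintegral_prod_right' h

/-- Trace theorem for Martinet-type vector fields. -/
theorem trace_theorem (α p : ℝ) (hα : 1 ≤ α) (hp : 1 < p) (s : ℝ) (hs : s = 1 - 1 / p) :
    ∃ C : ℝ, 0 < C ∧ ∀ f : ℝ × ℝ × ℝ → ℝ, ContDiffOn ℝ 1 f upperHalf →
      (∫⁻ w : (ℝ × ℝ) × (ℝ × ℝ),
          ENNReal.ofReal (|f (w.1.1, w.1.2, 0) - f (w.2.1, w.2.2, 0)| ^ p) /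
            (ENNReal.ofReal ((ccDist α (w.1.1, w.1.2, 0) (w.2.1, w.2.2, 0)) ^ (p * s)) *
              planeMeasure α {v : ℝ × ℝ |
                ccDist α (w.1.1, w.1.2, 0) (v.1, v.2, 0) <
                  ccDist α (w.1.1, w.1.2, 0) (w.2.1, w.2.2, 0)})
          ∂((planeMeasure α).prod (planeMeasure α))) ≤
        ENNReal.ofReal C *
          ∫⁻ q in upperHalf, ENNReal.ofReal ((XGradNorm α f q) ^ p) := by
  obtain ⟨c, hc, hker⟩ := tt_kernel hα hp hs
  obtain ⟨K, hK, hS⟩ := ttS α p (24 * α) hα hp (by linarith)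
  have hkk : (2:ℝ≥0∞) ^ (p - 1) ≠ ⊤ := ENNReal.rpow_ne_top_of_nonneg (by linarith) (by norm_num)
  set K' : ℝ≥0∞ := ENNReal.ofReal c⁻¹ * (2 ^ (p - 1) * (2 * (ENNReal.ofReal (ttK3 α p) * K)))
    with hK'
  have hKt : K' ≠ ⊤ := by
    refine ENNReal.mul_ne_top ENNReal.ofReal_ne_top (ENNReal.mul_ne_top hkk
      (ENNReal.mul_ne_top (by norm_num) (ENNReal.mul_ne_top ENNReal.ofReal_ne_top hK)))
  refine ⟨K'.toReal + 1, by positivity, fun f hf => ?_⟩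
  have hKC : K' ≤ ENNReal.ofReal (K'.toReal + 1) := by
    rw [← ENNReal.ofReal_toReal hKt]
    apply ENNReal.ofReal_le_ofReal
    rw [ENNReal.toReal_ofReal ENNReal.toReal_nonneg]
    linarith
  set F : ℝ × ℝ → ℝ := fun u => f (u.1, u.2, 0) with hFd
  have hF : Measurable F := by
    have : Continuous F := hf.continuousOn.comp_continuous (by fun_prop)
      (fun u => by simp [upperHalf])
    exact this.measurable
  set g : ℝ × ℝ × ℝ → ℝ≥0∞ := fun q => ENNReal.ofReal (ttF α f q) with hgd
  have hg : Measurable g := (ttF_continuous hα hf).measurable.ennreal_ofReal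
  have hP : ttPath α g (fun x y => F (x, y)) := by
    intro x y ξ a R hx ha hR
    exact tt_path hf hx hα ha hR
  have mΦ : Measurable fun w : (ℝ × ℝ) × (ℝ × ℝ) => ttM α p w.1 w.2 * ttD p F w.1 w.2 :=
    (ttM_meas (by fun_prop) (by fun_prop)).mul (ttD_meas hF (by fun_prop) (by fun_prop))
  calc _ ≤ ∫⁻ w : (ℝ × ℝ) × (ℝ × ℝ), ENNReal.ofReal c⁻¹ * (ttM α p w.1 w.2 * ttD p F w.1 w.2)
        ∂((planeMeasure α).prod (planeMeasure α)) := by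
        refine lintegral_mono fun w => ?_
        obtain ⟨u, v⟩ := w
        simp only
        have eD : ENNReal.ofReal (|f (u.1, u.2, 0) - f (v.1, v.2, 0)| ^ p) = ttD p F u v := by
          unfold ttD
          rw [Real.enorm_eq_ofReal_abs, ENNReal.ofReal_rpow_of_nonneg (abs_nonneg _) (by linarith)]
        rw [eD]
        rcases eq_or_ne u v with h | h
        · rw [h, ttD_self hp]; simp
        have hd := ttδ_pos h
        have hm : 0 < ttm u v := by unfold ttm; positivity
        have hpos : 0 < c * (ttδ u v ^ (p + 2) * ttm u v ^ (α - 1)) := by positivity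
        refine (ENNReal.div_le_div_left (hker u v h) _).trans_eq ?_
        rw [ENNReal.div_eq_inv_mul, ← ENNReal.ofReal_inv_of_pos hpos, mul_inv,
          ENNReal.ofReal_mul (by positivity), mul_assoc]
        rfl
    _ = ENNReal.ofReal c⁻¹ * ∫⁻ u : ℝ × ℝ, ∫⁻ v : ℝ × ℝ, ENNReal.ofReal (|u.1| ^ α) *
        (ENNReal.ofReal (|v.1| ^ α) * (ttM α p u v * ttD p F u v)) := by
        rw [lintegral_const_mul' _ _ ENNReal.ofReal_ne_top, tt_plane mΦ]
    _ ≤ ENNReal.ofReal c⁻¹ * (2 ^ (p - 1) * (2 * (ENNReal.ofReal (ttK3 α p) * (K * ttJ p g)))) := by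
        refine mul_le_mul_right ((ttA5 hα hp hF).trans ?_) _
        gcongr
        exact hS g hg _ hP
    _ = K' * ttJ p g := by rw [hK']; ring
    _ ≤ _ := by
        gcongr
        exact ttJ_le hα hp hf
end

section
/- Let α ≥ 1 and let d be the Carnot–Carathéodory distance on ℝ³ induced by X₁ and X₂. There exists a constant C₀ > 0, depending only on α, such that for all p, q ∈ ℝ³ one has C₀⁻¹ δ(p,q) ≤ d(p,q) ≤ C₀ δ(p,q). -/
open MeasureTheory

theorem cc_ftc (f : ℝ → ℝ) (T M : ℝ) (hT : 0 ≤ T) (hf : AbsolutelyContinuousOnInterval f 0 T)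
    (h : ∀ᵐ t, t ∈ Set.Ioo 0 T → ∃ d, HasDerivAt f d t ∧ |d| ≤ M) :
    |f T - f 0| ≤ M * T := by
  rw [← hf.integral_deriv_eq_sub]
  have := intervalIntegral.norm_integral_le_of_norm_le_const_ae (a := 0) (b := T) (C := M)
    (f := deriv f) ?_
  · simpa [abs_of_nonneg hT] using this
  · have hne : ∀ᵐ t : ℝ, t ≠ T := by
      simp [ae_iff]
    filter_upwards [h, hne] with t ht hne hm
    rw [Set.uIoc_of_le hT] at hm
    obtain ⟨d, hd, hb⟩ := ht ⟨hm.1, lt_of_le_of_ne hm.2 hne⟩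
    rw [hd.deriv]
    exact hb

theorem cc_rpow_sub (α a b : ℝ) (hα : 1 ≤ α) (hb : 0 ≤ b) (hab : b ≤ a) :
    a ^ α - b ^ α ≤ α * a ^ (α - 1) * (a - b) := by
  rcases eq_or_lt_of_le (hb.trans hab) with h0 | ha
  · have : b = a := by linarith
    subst this; simp
  · have h := one_add_mul_self_le_rpow_one_add (s := b / a - 1) (p := α)
      (by have : 0 ≤ b / a := by positivity
          linarith) hα
    have e : 1 + (b / a - 1) = b / a := by ring
    rw [e, Real.div_rpow hb ha.le, le_div_iff₀ (by positivity)] at h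
    have e2 : a ^ α = a ^ (α - 1) * a := by
      rw [← Real.rpow_add_one ha.ne']; congr 1; ring
    have e3 : (1 + α * (b / a - 1)) * a ^ α = a ^ α - α * a ^ (α - 1) * (a - b) := by
      rw [e2]; field_simp; ring
    linarith

theorem cc_rpow_abs_sub (α a b M : ℝ) (hα : 1 ≤ α) (ha : |a| ≤ M) (hb : |b| ≤ M) :
    |(|a| ^ α - |b| ^ α)| ≤ α * M ^ (α - 1) * |a - b| := by
  have key : ∀ a b : ℝ, |a| ≤ M → |b| ≤ |a| →
      |(|a| ^ α - |b| ^ α)| ≤ α * M ^ (α - 1) * |a - b| := by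
    intro a b ha hab
    rw [abs_of_nonneg (sub_nonneg.2 (Real.rpow_le_rpow (abs_nonneg _) hab (by linarith)))]
    refine (cc_rpow_sub α _ _ hα (abs_nonneg _) hab).trans ?_
    have h1 : |a| ^ (α - 1) ≤ M ^ (α - 1) :=
      Real.rpow_le_rpow (abs_nonneg _) ha (by linarith)
    have h2 : |a| - |b| ≤ |a - b| := abs_sub_abs_le_abs_sub a b
    have h3 : 0 ≤ |a| ^ (α - 1) := by positivity
    have h4 : 0 ≤ |a| - |b| := by linarith
    have h5 : 0 ≤ α * M ^ (α - 1) := mul_nonneg (by linarith) (h3.trans h1)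
    gcongr
  rcases le_total |b| |a| with h | h
  · exact key a b ha h
  · rw [abs_sub_comm, abs_sub_comm a b]; exact key b a hb h

theorem cc_min_le (α x ζ T : ℝ) (hα : 1 ≤ α) (hT : 0 < T)
    (h : |ζ| ≤ α * (|x| + T) ^ (α - 1) * T * T) :
    ccMin α x ζ ≤ α * 2 ^ (α - 1) * T := by
  have h2 : (1 : ℝ) ≤ 2 ^ (α - 1) := Real.one_le_rpow (by norm_num) (by linarith)
  set A := α * 2 ^ (α - 1) with hA
  have hA1 : 1 ≤ A := by nlinarith
  have hmin : ccMin α x ζ ≤ |ζ| ^ (1 / (α + 1)) := by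
    unfold ccMin; split_ifs
    · exact le_rfl
    · exact min_le_left _ _
  rcases le_or_gt |x| T with hx | hx
  · refine hmin.trans ?_
    rw [one_div, Real.rpow_inv_le_iff_of_pos (abs_nonneg _) (by positivity) (by linarith)]
    have h3 : (|x| + T) ^ (α - 1) ≤ (2 * T) ^ (α - 1) :=
      Real.rpow_le_rpow (by positivity) (by linarith) (by linarith)
    have h4 : T ^ (α + 1) = T ^ (α - 1) * T * T := by
      rw [← Real.rpow_add_one hT.ne', ← Real.rpow_add_one hT.ne']; congr 1; ring
    have h5 : A ≤ A ^ (α + 1) := by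
      simpa using Real.rpow_le_rpow_of_exponent_le hA1 (show (1 : ℝ) ≤ α + 1 by linarith)
    calc |ζ| ≤ _ := h
      _ ≤ α * (2 * T) ^ (α - 1) * T * T := by gcongr
      _ = A * T ^ (α + 1) := by
        rw [Real.mul_rpow (by norm_num) hT.le, h4, hA]; ring
      _ ≤ A ^ (α + 1) * T ^ (α + 1) := by gcongr
      _ = _ := by rw [Real.mul_rpow (by linarith) hT.le]
  · have hx0 : 0 < |x| := hT.trans hx
    have hxne : x ≠ 0 := abs_pos.1 hx0
    unfold ccMin
    rw [if_neg hxne]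
    refine (min_le_right _ _).trans ?_
    rw [div_le_iff₀ (by positivity), ← Real.sqrt_eq_rpow]
    refine Real.sqrt_le_iff.2 ⟨by positivity, ?_⟩
    have h3 : (|x| + T) ^ (α - 1) ≤ (2 * |x|) ^ (α - 1) :=
      Real.rpow_le_rpow (by positivity) (by linarith) (by linarith)
    have h4 : (|x| ^ ((α - 1) / 2)) ^ 2 = |x| ^ (α - 1) := by
      rw [pow_two, ← Real.rpow_add hx0]; congr 1; ring
    have h5 : A ≤ A ^ 2 := by nlinarith
    calc |ζ| ≤ _ := h
      _ ≤ α * (2 * |x|) ^ (α - 1) * T * T := by gcongr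
      _ = A * (T ^ 2 * |x| ^ (α - 1)) := by
        rw [Real.mul_rpow (by norm_num) hx0.le, hA]; ring
      _ ≤ A ^ 2 * (T ^ 2 * |x| ^ (α - 1)) := by gcongr
      _ = _ := by rw [mul_pow, mul_pow, h4]; ring

theorem cc_lower (α : ℝ) (hα : 1 ≤ α) (T : ℝ) (hT : 0 < T) (γ : ℝ → ℝ × ℝ × ℝ)
    (hγ : IsHorizontal α T γ) :
    deltaDist α (γ 0) (γ T) ≤ (α * 2 ^ (α - 1) + 2) * T := by
  obtain ⟨⟨K, hK⟩, h₁, h₂, -, -, hh, hd⟩ := hγ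
  rw [ae_restrict_iff' measurableSet_Ioo] at hd
  have hb1 : ∀ t, |h₁ t| ≤ 1 := fun t => by
    rw [← sq_le_one_iff_abs_le_one]; nlinarith [hh t, sq_nonneg (h₂ t)]
  have hb2 : ∀ t, |h₂ t| ≤ 1 := fun t => by
    rw [← sq_le_one_iff_abs_le_one]; nlinarith [hh t, sq_nonneg (h₁ t)]
  have acx : ∀ S, 0 ≤ S → S ≤ T →
      AbsolutelyContinuousOnInterval (fun s => (γ s).1) 0 S := fun S hS hST => by
    refine LipschitzOnWith.absolutelyContinuousOnInterval
      (LipschitzWith.prod_fst.comp_lipschitzOnWith (hK.mono ?_))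
    rw [Set.uIcc_of_le hS]; exact Set.Icc_subset_Icc_right hST
  have acy : AbsolutelyContinuousOnInterval (fun s => (γ s).2.1) 0 T := by
    refine LipschitzOnWith.absolutelyContinuousOnInterval
      ((LipschitzWith.prod_fst.comp LipschitzWith.prod_snd).comp_lipschitzOnWith (hK.mono ?_))
    rw [Set.uIcc_of_le hT.le]
  have acz : AbsolutelyContinuousOnInterval (fun s => (γ s).2.2) 0 T := by
    refine LipschitzOnWith.absolutelyContinuousOnInterval
      ((LipschitzWith.prod_snd.comp LipschitzWith.prod_snd).comp_lipschitzOnWith (hK.mono ?_))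
    rw [Set.uIcc_of_le hT.le]
  have hx : ∀ S, 0 ≤ S → S ≤ T → |(γ S).1 - (γ 0).1| ≤ 1 * S := fun S hS hST => by
    refine cc_ftc (fun s => (γ s).1) S 1 hS (acx S hS hST) ?_
    filter_upwards [hd] with t ht htm
    exact ⟨h₁ t, (ht ⟨htm.1, htm.2.trans_le hST⟩).1, hb1 t⟩
  have hy : |(γ T).2.1 - (γ 0).2.1| ≤ 1 * T := by
    refine cc_ftc (fun s => (γ s).2.1) T 1 hT.le acy ?_
    filter_upwards [hd] with t ht htm
    exact ⟨h₂ t, (ht htm).2.1, hb2 t⟩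
  set c := |(γ 0).1| ^ α with hc
  have hw := cc_ftc (fun s => (γ s).2.2 - c * (γ s).2.1) T
    (α * (|(γ 0).1| + T) ^ (α - 1) * T) hT.le
    (acz.fun_sub (acy.const_mul c)) (by
      filter_upwards [hd] with t ht htm
      refine ⟨_, (ht htm).2.2.sub ((ht htm).2.1.const_mul c), ?_⟩
      rw [← sub_mul, abs_mul]
      have hxt := hx t htm.1.le htm.2.le
      have htT := htm.2
      have e1 : |(γ t).1| ≤ |(γ 0).1| + T := by
        have := abs_sub_abs_le_abs_sub (γ t).1 (γ 0).1
        linarith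
      have := cc_rpow_abs_sub α (γ t).1 (γ 0).1 (|(γ 0).1| + T) hα e1 (by linarith)
      calc _ ≤ (α * (|(γ 0).1| + T) ^ (α - 1) * |(γ t).1 - (γ 0).1|) * 1 :=
            mul_le_mul this (hb2 t) (abs_nonneg _) (by positivity)
        _ ≤ _ := by
          rw [mul_one]; gcongr; linarith)
  have hm := cc_min_le α (γ 0).1
    ((γ 0).2.2 - (γ T).2.2 + |(γ 0).1| ^ α * ((γ T).2.1 - (γ 0).2.1)) T hα hT (by
      refine le_trans (le_of_eq ?_) hw
      rw [← abs_neg]; congr 1; simp only [← hc]; ring)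
  have := hx T hT.le le_rfl
  unfold deltaDist
  linarith

/-- The point `q` can be reached from `p` in time exactly `T > 0`. -/
def ccReach (α T : ℝ) (p q : ℝ × ℝ × ℝ) : Prop :=
  0 < T ∧ ∃ γ : ℝ → ℝ × ℝ × ℝ, IsHorizontal α T γ ∧ γ 0 = p ∧ γ T = q

theorem ccReach_x (α T x y z x' : ℝ) (hT : 0 < T) (h : |x' - x| ≤ T) :
    ccReach α T (x, y, z) (x', y, z) := by
  refine ⟨hT, fun t => (x + t * ((x' - x) / T), y, z), ⟨⟨‖(x' - x) / T‖₊, ?_⟩,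
    fun _ => (x' - x) / T, fun _ => 0, measurable_const, measurable_const, ?_, ?_⟩, ?_, ?_⟩
  · refine LipschitzOnWith.of_dist_le_mul fun s _ t _ => ?_
    simp [Prod.dist_eq, Real.dist_eq, ← sub_mul, abs_mul, mul_comm, abs_div]
    positivity
  · intro t
    have : |(x' - x) / T| ≤ 1 := by
      rw [abs_div, abs_of_pos hT]; exact div_le_one_of_le₀ h hT.le
    have := (sq_le_one_iff_abs_le_one _).2 this
    simpa using this
  · refine Filter.Eventually.of_forall fun t => ⟨?_, ?_, ?_⟩
    · simpa using ((hasDerivAt_id t).mul_const ((x' - x) / T)).const_add x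
    · exact hasDerivAt_const _ _
    · simpa using hasDerivAt_const t z
  · simp
  · have := hT.ne'
    simp only [Prod.mk.injEq, and_true]; field_simp; ring

theorem ccReach_y (α T x y z s : ℝ) (hT : 0 < T) (h : |s| ≤ T) :
    ccReach α T (x, y, z) (x, y + s, z + |x| ^ α * s) := by
  refine ⟨hT, fun t => (x, y + t * (s / T), z + t * (|x| ^ α * (s / T))),
    ⟨⟨‖s / T‖₊ + ‖|x| ^ α * (s / T)‖₊, ?_⟩,
    fun _ => 0, fun _ => s / T, measurable_const, measurable_const, ?_, ?_⟩, ?_, ?_⟩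
  · refine LipschitzOnWith.of_dist_le_mul fun u _ t _ => ?_
    simp only [Prod.dist_eq, Real.dist_eq, NNReal.coe_add, coe_nnnorm, Real.norm_eq_abs,
      add_sub_add_left_eq_sub, ← sub_mul, abs_mul (u - t), sub_self, abs_zero]
    have a1 := abs_nonneg (u - t)
    have a2 := abs_nonneg (s / T)
    have a3 := abs_nonneg (|x| ^ α * (s / T))
    refine max_le (by positivity) (max_le ?_ ?_) <;> nlinarith
  · intro t
    have : |s / T| ≤ 1 := by
      rw [abs_div, abs_of_pos hT]; exact div_le_one_of_le₀ h hT.le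
    have := (sq_le_one_iff_abs_le_one _).2 this
    simpa using this
  · refine Filter.Eventually.of_forall fun t => ⟨?_, ?_, ?_⟩
    · exact hasDerivAt_const _ _
    · simpa using ((hasDerivAt_id t).mul_const (s / T)).const_add y
    · simpa using ((hasDerivAt_id t).mul_const (|x| ^ α * (s / T))).const_add z
  · simp
  · have := hT.ne'
    simp only [Prod.mk.injEq, true_and]
    constructor <;> field_simp

theorem ccReach_trans {α T₁ T₂ : ℝ} {p q r : ℝ × ℝ × ℝ} (h₁ : ccReach α T₁ p q)
    (h₂ : ccReach α T₂ q r) : ccReach α (T₁ + T₂) p r := by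
  obtain ⟨hT₁, γ, ⟨⟨K, hK⟩, a, b, ha, hb, hab, hd⟩, rfl, rfl⟩ := h₁
  obtain ⟨hT₂, η, ⟨⟨L, hL⟩, c, d, hc, hdm, hcd, he⟩, hq, rfl⟩ := h₂
  rw [ae_restrict_iff' measurableSet_Ioo] at hd he
  refine ⟨by positivity, fun t => if t ≤ T₁ then γ t else η (t - T₁), ⟨⟨K + L, ?_⟩,
    fun t => if t ≤ T₁ then a t else c (t - T₁), fun t => if t ≤ T₁ then b t else d (t - T₁),
    Measurable.ite measurableSet_Iic ha (hc.comp (measurable_id.sub_const T₁)),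
    Measurable.ite measurableSet_Iic hb (hdm.comp (measurable_id.sub_const T₁)), ?_, ?_⟩, ?_, ?_⟩
  · have key : ∀ s t, s ∈ Set.Icc 0 (T₁ + T₂) → t ∈ Set.Icc 0 (T₁ + T₂) → s ≤ t →
        dist (if s ≤ T₁ then γ s else η (s - T₁)) (if t ≤ T₁ then γ t else η (t - T₁)) ≤
          (K + L) * (t - s) := by
      intro s t hs ht hst
      have K0 := K.2
      have L0 := L.2
      simp only [NNReal.val_eq_coe] at K0 L0
      have f1 : ∀ s t, 0 ≤ s → s ≤ t → t ≤ T₁ → dist (γ s) (γ t) ≤ K * (t - s) := by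
        intro s t h1 h2 h3
        have := hK.dist_le_mul s ⟨h1, h2.trans h3⟩ t ⟨h1.trans h2, h3⟩
        rwa [Real.dist_eq, abs_sub_comm, abs_of_nonneg (sub_nonneg.2 h2)] at this
      have f2 : ∀ s t, 0 ≤ s → s ≤ t → t ≤ T₂ → dist (η s) (η t) ≤ L * (t - s) := by
        intro s t h1 h2 h3
        have := hL.dist_le_mul s ⟨h1, h2.trans h3⟩ t ⟨h1.trans h2, h3⟩
        rwa [Real.dist_eq, abs_sub_comm, abs_of_nonneg (sub_nonneg.2 h2)] at this
      have hs1 := hs.1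
      have ht2 := ht.2
      by_cases h1 : s ≤ T₁ <;> by_cases h2 : t ≤ T₁
      · simp only [h1, h2, if_true]
        nlinarith [f1 s t hs.1 hst h2]
      · simp only [h1, h2, if_true, if_false]
        have g1 := f1 s T₁ hs.1 h1 le_rfl
        have g2 := f2 0 (t - T₁) le_rfl (by linarith) (by linarith)
        rw [hq] at g2
        have := dist_triangle (γ s) (γ T₁) (η (t - T₁))
        nlinarith
      · linarith
      · simp only [h1, h2, if_false]
        nlinarith [f2 (s - T₁) (t - T₁) (by linarith) (by linarith) (by linarith)]
    refine LipschitzOnWith.of_dist_le_mul fun s hs t ht => ?_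
    rcases le_total s t with h | h
    · have := key s t hs ht h
      rwa [Real.dist_eq, abs_sub_comm, abs_of_nonneg (sub_nonneg.2 h)]
    · have := key t s ht hs h
      rwa [Real.dist_eq, dist_comm, abs_of_nonneg (sub_nonneg.2 h)]
  · intro t
    by_cases h : t ≤ T₁
    · simpa [h] using hab t
    · simpa [h] using hcd (t - T₁)
  · rw [ae_restrict_iff' measurableSet_Ioo]
    have hne : ∀ᵐ t : ℝ, t ≠ T₁ := by simp [ae_iff]
    have he' := (measurePreserving_sub_right volume T₁).quasiMeasurePreserving.ae he
    filter_upwards [hd, he', hne] with t h1 h2 h3 ht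
    rcases lt_or_gt_of_ne h3 with h | h
    · have ev : (fun t => if t ≤ T₁ then γ t else η (t - T₁)) =ᶠ[nhds t] γ := by
        filter_upwards [gt_mem_nhds h] with s hs
        simp [le_of_lt hs]
      obtain ⟨d1, d2, d3⟩ := h1 ⟨ht.1, h⟩
      simp only [h.le, if_true]
      exact ⟨d1.congr_of_eventuallyEq (ev.fun_comp fun v => v.1),
        d2.congr_of_eventuallyEq (ev.fun_comp fun v => v.2.1),
        d3.congr_of_eventuallyEq (ev.fun_comp fun v => v.2.2)⟩
    · have ev : (fun t => if t ≤ T₁ then γ t else η (t - T₁)) =ᶠ[nhds t]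
          fun t => η (t - T₁) := by
        filter_upwards [lt_mem_nhds h] with s hs
        simp [not_le.2 hs]
      obtain ⟨d1, d2, d3⟩ := h2 ⟨by linarith, by linarith [ht.2]⟩
      simp only [not_le.2 h, if_false]
      exact ⟨(d1.comp_sub_const t T₁).congr_of_eventuallyEq (ev.fun_comp fun v => v.1),
        (d2.comp_sub_const t T₁).congr_of_eventuallyEq (ev.fun_comp fun v => v.2.1),
        (d3.comp_sub_const t T₁).congr_of_eventuallyEq (ev.fun_comp fun v => v.2.2)⟩
  · simp [hT₁.le]
  · simp [hT₂]

theorem cc_loop_choice (α x ζ : ℝ) (hα : 1 ≤ α) : ∃ r s : ℝ,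
    |r| ≤ ccMin α x ζ ∧ |s| ≤ ccMin α x ζ ∧ (|x + r| ^ α - |x| ^ α) * s = -ζ := by
  by_cases hζ : ζ = 0
  · subst hζ
    have : (0 : ℝ) ≤ ccMin α x 0 := by unfold ccMin; split_ifs <;> positivity
    exact ⟨0, 0, by simpa, by simpa, by simp⟩
  have hz : 0 < |ζ| := abs_pos.2 hζ
  set m := ccMin α x ζ with hm
  have hmpos : 0 < m := by
    rw [hm]; unfold ccMin; split_ifs with h
    · positivity
    · have := abs_pos.2 h
      exact lt_min (by positivity) (by positivity)
  obtain ⟨r, hr, hxr⟩ : ∃ r : ℝ, |r| = m ∧ |x + r| = |x| + m := by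
    rcases le_total 0 x with h | h
    · exact ⟨m, abs_of_pos hmpos, by rw [abs_of_nonneg h, abs_of_nonneg (by linarith)]⟩
    · exact ⟨-m, by rw [abs_neg, abs_of_pos hmpos], by
        rw [abs_of_nonpos h, abs_of_nonpos (by linarith)]; ring⟩
  set D := |x + r| ^ α - |x| ^ α with hD
  have hD1 : m ^ α ≤ D := by
    rw [hD, hxr]
    have := Real.add_rpow_le_rpow_add (abs_nonneg x) hmpos.le hα
    linarith
  have hDpos : 0 < D := lt_of_lt_of_le (by positivity) hD1
  have hzm : |ζ| ≤ m * D := by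
    have case1 : m = |ζ| ^ (1 / (α + 1)) → |ζ| ≤ m * D := by
      intro h
      have e : |ζ| = m ^ (α + 1) := by
        rw [h, ← Real.rpow_mul hz.le, one_div, inv_mul_cancel₀ (by linarith), Real.rpow_one]
      rw [e, Real.rpow_add_one hmpos.ne', mul_comm]
      gcongr
    by_cases hx : x = 0
    · exact case1 (by rw [hm]; unfold ccMin; rw [if_pos hx])
    · rcases min_choice (|ζ| ^ (1 / (α + 1))) (|ζ| ^ ((1 : ℝ) / 2) / |x| ^ ((α - 1) / 2))
        with h | h
      · exact case1 (by rw [hm]; unfold ccMin; rw [if_neg hx, h])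
      · have hx0 := abs_pos.2 hx
        have e0 : m = |ζ| ^ ((1 : ℝ) / 2) / |x| ^ ((α - 1) / 2) := by
          rw [hm]; unfold ccMin; rw [if_neg hx, h]
        rw [eq_div_iff (by positivity), ← Real.sqrt_eq_rpow] at e0
        have e1 : |ζ| = m * (|x| ^ (α - 1) * m) := by
          have h4 : (|x| ^ ((α - 1) / 2)) ^ 2 = |x| ^ (α - 1) := by
            rw [pow_two, ← Real.rpow_add hx0]; congr 1; ring
          rw [← Real.sq_sqrt hz.le, ← e0, mul_pow, h4]; ring
        rw [e1]
        gcongr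
        rw [hD, hxr]
        have e2 : ∀ u : ℝ, 0 < u → u ^ α = u ^ (α - 1) * u := fun u hu => by
          rw [← Real.rpow_add_one hu.ne']; congr 1; ring
        rw [e2 (|x| + m) (by positivity), e2 |x| hx0]
        have e3 : |x| ^ (α - 1) ≤ (|x| + m) ^ (α - 1) :=
          Real.rpow_le_rpow hx0.le (by linarith) (by linarith)
        nlinarith
  refine ⟨r, -ζ / D, hr.le, ?_, by rw [← hD, mul_div_cancel₀ _ hDpos.ne']⟩
  rw [abs_div, abs_neg, abs_of_pos hDpos, div_le_iff₀ hDpos]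
  exact hzm

theorem cc_upper (α : ℝ) (hα : 1 ≤ α) (p q : ℝ × ℝ × ℝ) (ε : ℝ) (hε : 0 < ε) :
    ∃ T, ccReach α T p q ∧ T ≤ 4 * deltaDist α p q + 6 * ε := by
  obtain ⟨x, y, z⟩ := p
  obtain ⟨x', y', z'⟩ := q
  obtain ⟨r, s, hr, hs, hrs⟩ := cc_loop_choice α x (z - z' + |x| ^ α * (y' - y)) hα
  have r1 := ccReach_y α (|y' - y| + ε) x y z (y' - y) (by positivity) (by linarith)
  have r2 := ccReach_x α (|r| + ε) x (y + (y' - y)) (z + |x| ^ α * (y' - y)) (x + r)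
    (by positivity) (by simpa using hε.le)
  have r3 := ccReach_y α (|s| + ε) (x + r) (y + (y' - y)) (z + |x| ^ α * (y' - y)) s
    (by positivity) (by linarith)
  have r4 := ccReach_x α (|r| + ε) (x + r) (y + (y' - y) + s)
    (z + |x| ^ α * (y' - y) + |x + r| ^ α * s) x (by positivity) (by simpa using hε.le)
  have r5 := ccReach_y α (|s| + ε) x (y + (y' - y) + s)
    (z + |x| ^ α * (y' - y) + |x + r| ^ α * s) (-s) (by positivity) (by simpa using hε.le)
  have r6 := ccReach_x α (|x' - x| + ε) x (y + (y' - y) + s + -s)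
    (z + |x| ^ α * (y' - y) + |x + r| ^ α * s + |x| ^ α * -s) x' (by positivity) (by linarith)
  have R := ccReach_trans (ccReach_trans (ccReach_trans (ccReach_trans
    (ccReach_trans r1 r2) r3) r4) r5) r6
  have e1 : y + (y' - y) + s + -s = y' := by ring
  have e2 : z + |x| ^ α * (y' - y) + |x + r| ^ α * s + |x| ^ α * -s = z' := by linarith
  rw [e1, e2] at R
  refine ⟨_, R, ?_⟩
  simp only [deltaDist]
  linarith [abs_nonneg (x' - x), abs_nonneg (y' - y)]

/-- Theorem 2 (structure of the metric): the CC distance is globally equivalent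
to the algebraic quasi-distance `δ`. -/
theorem ccDist_equiv_deltaDist (α : ℝ) (hα : 1 ≤ α) :
    ∃ C₀ : ℝ, 0 < C₀ ∧ ∀ p q : ℝ × ℝ × ℝ,
      C₀⁻¹ * deltaDist α p q ≤ ccDist α p q ∧ ccDist α p q ≤ C₀ * deltaDist α p q := by
  have h2 : (1 : ℝ) ≤ 2 ^ (α - 1) := Real.one_le_rpow (by norm_num) (by linarith)
  have hC : 0 < α * 2 ^ (α - 1) + 4 := by positivity
  refine ⟨α * 2 ^ (α - 1) + 4, hC, fun p q => ?_⟩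
  obtain ⟨T₀, hR₀, -⟩ := cc_upper α hα p q 1 one_pos
  have hbdd : BddBelow
      {T : ℝ | 0 < T ∧ ∃ γ : ℝ → ℝ × ℝ × ℝ, IsHorizontal α T γ ∧ γ 0 = p ∧ γ T = q} :=
    ⟨0, fun T hT => hT.1.le⟩
  have hδ : 0 ≤ deltaDist α p q := by
    unfold deltaDist ccMin
    split_ifs <;> positivity
  constructor
  · refine le_csInf ⟨T₀, hR₀⟩ ?_
    rintro T ⟨hT, γ, hγ, rfl, rfl⟩
    rw [inv_mul_le_iff₀ hC]
    have := cc_lower α hα T hT γ hγ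
    linarith
  · have h4 : ccDist α p q ≤ 4 * deltaDist α p q := by
      refine le_of_forall_pos_le_add fun ε hε => ?_
      obtain ⟨T, hR, hT⟩ := cc_upper α hα p q (ε / 6) (by positivity)
      have : ccDist α p q ≤ T := csInf_le hbdd hR
      linarith
    refine h4.trans ?_
    have : 0 ≤ α * 2 ^ (α - 1) := by positivity
    gcongr
    linarith
end

section
/- Let α ≥ 1 and let d be the Carnot–Carathéodory distance on ℝ³ induced by X₁ and X₂. There exists a constant C > 0, depending only on α, such that for all x, y, z, z′ ∈ ℝ one has d( (x,y,z), (x,y,z′) ) ≤ C · min{ |z′ − z|^{1/(α+1)}, |z′ − z|^{1/2} / |x|^{(α−1)/2} }, with the convention that the minimum equals |z′ − z|^{1/(α+1)} when x = 0 and equals 0 when z = z′. -/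
open MeasureTheory

/-- clamp to `[0,a]` -/
noncomputable def clampFn (a t : ℝ) : ℝ := max 0 (min t a)

/-- the derivative of the clamp -/
noncomputable def clampDer (a t : ℝ) : ℝ := if 0 < t ∧ t < a then 1 else 0

lemma clamp_of_le {a t : ℝ} (h : t ≤ 0) : clampFn a t = 0 := by
  unfold clampFn
  exact max_eq_left (le_trans (min_le_left _ _) h)

lemma clamp_of_ge {a t : ℝ} (ha : 0 < a) (h : a ≤ t) : clampFn a t = a := by
  unfold clampFn
  rw [min_eq_right h, max_eq_right ha.le]

lemma clamp_mid {a t : ℝ} (h : 0 ≤ t) (h' : t ≤ a) : clampFn a t = t := by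
  unfold clampFn
  rw [min_eq_left h', max_eq_right h]

lemma clamp_lip (a : ℝ) : LipschitzWith 1 (clampFn a) := by
  unfold clampFn
  exact (LipschitzWith.id.min_const a).const_max 0

lemma clamp_shift_lip (a s : ℝ) : LipschitzWith 1 (fun t => clampFn a (t - s)) := by
  have h : LipschitzWith 1 (fun t : ℝ => t - s) := by
    refine LipschitzWith.of_dist_le_mul fun u v => ?_
    simp [Real.dist_eq]
  have h2 := (clamp_lip a).comp h
  rw [mul_one] at h2
  exact h2

lemma clampDer_meas (a s : ℝ) : Measurable (fun t => clampDer a (t - s)) := by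
  unfold clampDer
  refine Measurable.ite ?_ measurable_const measurable_const
  have : {t : ℝ | 0 < t - s ∧ t - s < a} = Set.Ioo s (s + a) := by
    ext t
    simp only [Set.mem_ofPred_eq, Set.mem_Ioo]
    constructor <;> rintro ⟨h1, h2⟩ <;> constructor <;> linarith
  rw [this]
  exact measurableSet_Ioo

lemma clamp_hasDeriv {a t : ℝ} (ha : 0 < a) (h0 : t ≠ 0) (h1 : t ≠ a) :
    HasDerivAt (clampFn a) (clampDer a t) t := by
  unfold clampDer
  rcases lt_or_gt_of_ne h0 with h | h
  · rw [if_neg (fun H => by linarith [H.1])]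
    refine (hasDerivAt_const t (0 : ℝ)).congr_of_eventuallyEq ?_
    filter_upwards [Iio_mem_nhds h] with u hu using clamp_of_le (le_of_lt hu)
  · rcases lt_or_gt_of_ne h1 with h' | h'
    · rw [if_pos ⟨h, h'⟩]
      refine (hasDerivAt_id t).congr_of_eventuallyEq ?_
      filter_upwards [Ioo_mem_nhds h h'] with u hu using clamp_mid hu.1.le hu.2.le
    · rw [if_neg (fun H => by linarith [H.2])]
      refine (hasDerivAt_const t a).congr_of_eventuallyEq ?_
      filter_upwards [Ioi_mem_nhds h'] with u hu using clamp_of_ge ha (le_of_lt hu)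

lemma clamp_shift_hasDeriv {a t : ℝ} (s : ℝ) (ha : 0 < a) (h0 : t ≠ s) (h1 : t ≠ s + a) :
    HasDerivAt (fun t => clampFn a (t - s)) (clampDer a (t - s)) t :=
  HasDerivAt.comp_sub_const t s
    (clamp_hasDeriv ha (sub_ne_zero.2 h0) (fun h => h1 (by linarith)))

lemma lip_comb (p A B a s r : ℝ) :
    ∃ K, LipschitzWith K (fun t => p + (A * clampFn a (t - s) - B * clampFn a (t - r))) :=
  ⟨_, (LipschitzWith.const p).add
    (((lipschitzWith_smul A).comp (clamp_shift_lip a s)).sub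
      ((lipschitzWith_smul B).comp (clamp_shift_lip a r)))⟩

lemma exists_sign (x : ℝ) : ∃ σ : ℝ, σ ^ 2 = 1 ∧ ∀ u, 0 ≤ u → |x + σ * u| = |x| + u := by
  rcases le_total 0 x with h | h
  · refine ⟨1, by norm_num, fun u hu => ?_⟩
    rw [abs_of_nonneg h, abs_of_nonneg (by linarith)]
    ring
  · refine ⟨-1, by norm_num, fun u hu => ?_⟩
    rw [abs_of_nonpos h, abs_of_nonpos (by linarith)]
    ring

lemma ccDist_loop (α x y z z' a w : ℝ) (ha : 0 < a) (hw : |w| ≤ 1)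
    (hz : z' - z = w * (a * ((|x| + a) ^ α - |x| ^ α))) :
    ccDist α (x, y, z) (x, y, z') ≤ 4 * a := by
  obtain ⟨σ, hσ, hσx⟩ := exists_sign x
  have hw2 : w ^ 2 ≤ 1 := by
    rw [← sq_abs]
    exact pow_le_one₀ (abs_nonneg _) hw
  refine csInf_le ⟨0, fun T hT => hT.1.le⟩ ⟨by linarith, ?_⟩
  set P := (|x| + a) ^ α with hP
  set Q := |x| ^ α with hQ
  refine ⟨fun t => (x + (σ * clampFn a (t - 0) - σ * clampFn a (t - 2 * a)),
    y + (w * clampFn a (t - a) - w * clampFn a (t - 3 * a)),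
    z + ((w * P) * clampFn a (t - a) - (w * Q) * clampFn a (t - 3 * a))), ⟨?_, ?_⟩, ?_, ?_⟩
  · obtain ⟨K1, h1⟩ := lip_comb x σ σ a 0 (2 * a)
    obtain ⟨K2, h2⟩ := lip_comb y w w a a (3 * a)
    obtain ⟨K3, h3⟩ := lip_comb z (w * P) (w * Q) a a (3 * a)
    exact ⟨_, (h1.prodMk (h2.prodMk h3)).lipschitzOnWith⟩
  · refine ⟨fun t => σ * clampDer a (t - 0) - σ * clampDer a (t - 2 * a),
      fun t => w * clampDer a (t - a) - w * clampDer a (t - 3 * a), ?_, ?_, ?_, ?_⟩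
    · exact ((clampDer_meas a 0).const_mul σ).sub ((clampDer_meas a (2 * a)).const_mul σ)
    · exact ((clampDer_meas a a).const_mul w).sub ((clampDer_meas a (3 * a)).const_mul w)
    · intro t
      simp only [clampDer]
      split_ifs with h1 h2 h3 h4 h3 h4 h4 h2 h3 h4 h4 h3 h4 h4 <;>
        first
        | nlinarith
        | (exfalso; obtain ⟨_, _⟩ := h1; grind)
        | (exfalso; grind)
    · have hne : ∀ c : ℝ, ∀ᵐ t ∂(volume.restrict (Set.Ioo 0 (4 * a))), t ≠ c := fun c =>
        ae_restrict_of_ae (Measure.ae_ne volume c)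
      filter_upwards [hne a, hne (2 * a), hne (3 * a),
        ae_restrict_mem (measurableSet_Ioo (a := (0 : ℝ)) (b := 4 * a))] with t t1 t2 t3 ht
      obtain ⟨ht0, ht4⟩ := ht
      have d0 := clamp_shift_hasDeriv (t := t) 0 ha ht0.ne'
        (by simpa using t1)
      have d1 := clamp_shift_hasDeriv (t := t) a ha t1 (fun h => t2 (by linarith))
      have d2 := clamp_shift_hasDeriv (t := t) (2 * a) ha t2 (fun h => t3 (by linarith))
      have d3 := clamp_shift_hasDeriv (t := t) (3 * a) ha t3 (fun h => by linarith)
      refine ⟨((d0.const_mul σ).sub (d2.const_mul σ)).const_add x,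
        ((d1.const_mul w).sub (d3.const_mul w)).const_add y, ?_⟩
      refine HasDerivAt.congr_deriv
        (((d1.const_mul (w * P)).sub (d3.const_mul (w * Q))).const_add z) ?_
      symm
      show |x + (σ * clampFn a (t - 0) - σ * clampFn a (t - 2 * a))| ^ α *
        (w * clampDer a (t - a) - w * clampDer a (t - 3 * a)) =
        w * P * clampDer a (t - a) - w * Q * clampDer a (t - 3 * a)
      by_cases c1 : 0 < t - a ∧ t - a < a
      · have e3 : clampDer a (t - 3 * a) = 0 := if_neg (fun H => by linarith [H.1, c1.2])
        rw [e3, clamp_of_ge ha (by linarith [c1.1]), clamp_of_le (by linarith [c1.2])]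
        have := hσx a ha.le
        simp only [mul_zero, sub_zero, this]
        ring
      · have e1 : clampDer a (t - a) = 0 := if_neg c1
        by_cases c3 : 0 < t - 3 * a ∧ t - 3 * a < a
        · rw [e1, clamp_of_ge ha (by linarith [c3.1]), clamp_of_ge ha (by linarith [c3.1])]
          simp only [sub_self, add_zero]
          ring
        · have e3 : clampDer a (t - 3 * a) = 0 := if_neg c3
          rw [e1, e3]
          ring
  · simp only
    rw [clamp_of_le (by linarith), clamp_of_le (by linarith), clamp_of_le (by linarith),
      clamp_of_le (by linarith)]
    simp
  · simp only
    rw [clamp_of_ge ha (by linarith), clamp_of_ge ha (by linarith), clamp_of_ge ha (by linarith),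
      clamp_of_ge ha (by linarith)]
    have : z' = z + (w * P * a - w * Q * a) := by linarith
    rw [this]
    simp

lemma ccDist_self_le (α : ℝ) (p : ℝ × ℝ × ℝ) : ccDist α p p ≤ 0 := by
  refine le_of_forall_pos_le_add fun ε hε => ?_
  obtain ⟨x, y, z⟩ := p
  have := ccDist_loop α x y z z (ε / 4) 0 (by linarith) (by simp) (by simp)
  linarith

lemma ccDist_of_gap (α x y z z' a : ℝ) (ha : 0 < a)
    (hpos : 0 < (|x| + a) ^ α - |x| ^ α)
    (h : |z' - z| ≤ a * ((|x| + a) ^ α - |x| ^ α)) :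
    ccDist α (x, y, z) (x, y, z') ≤ 4 * a := by
  have hq : 0 < a * ((|x| + a) ^ α - |x| ^ α) := mul_pos ha hpos
  refine ccDist_loop α x y z z' a ((z' - z) / (a * ((|x| + a) ^ α - |x| ^ α))) ha ?_ ?_
  · rw [abs_div, abs_of_pos hq]
    exact (div_le_one hq).2 h
  · field_simp

lemma gap_one {α r a : ℝ} (hα : 1 ≤ α) (hr : 0 ≤ r) (ha : 0 < a) :
    a ^ α ≤ (r + a) ^ α - r ^ α := by
  have := Real.add_rpow_le_rpow_add hr ha.le hα
  linarith

lemma gap_two {α r a : ℝ} (hα : 1 ≤ α) (hr : 0 < r) (ha : 0 < a) :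
    a * r ^ (α - 1) ≤ (r + a) ^ α - r ^ α := by
  have h1 : r ^ (α - 1) ≤ (r + a) ^ (α - 1) :=
    Real.rpow_le_rpow hr.le (by linarith) (by linarith)
  have e1 : r ^ α = r ^ (α - 1) * r := by
    rw [← Real.rpow_add_one hr.ne']; congr 1; ring
  have e2 : (r + a) ^ α = (r + a) ^ (α - 1) * (r + a) := by
    rw [← Real.rpow_add_one (by positivity)]; congr 1; ring
  rw [e1, e2]
  nlinarith

/-- Vertical estimate for the CC distance: points lying one above the other are at
distance at most `C · min{|z' - z|^{1/(α+1)}, |z' - z|^{1/2}/|x|^{(α-1)/2}}`. -/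
theorem ccDist_vertical (α : ℝ) (hα : 1 ≤ α) :
    ∃ C : ℝ, 0 < C ∧ ∀ x y z z' : ℝ,
      ccDist α (x, y, z) (x, y, z') ≤ C * ccMin α x (z' - z) := by
  refine ⟨4, by norm_num, fun x y z z' => ?_⟩
  by_cases hzz : z' = z
  · subst hzz
    refine (ccDist_self_le α _).trans ?_
    unfold ccMin
    split_ifs <;> positivity
  have hζ : 0 < |z' - z| := abs_pos.2 (sub_ne_zero.2 hzz)
  have b1 : ccDist α (x, y, z) (x, y, z') ≤ 4 * |z' - z| ^ (1 / (α + 1)) := by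
    have ha : 0 < |z' - z| ^ (1 / (α + 1)) := by positivity
    have hg := gap_one hα (abs_nonneg x) ha
    refine ccDist_of_gap α x y z z' _ ha (lt_of_lt_of_le (by positivity) hg) ?_
    refine le_trans (le_of_eq ?_) (mul_le_mul_of_nonneg_left hg ha.le)
    rw [← Real.rpow_mul hζ.le, ← Real.rpow_add hζ]
    have : 1 / (α + 1) + 1 / (α + 1) * α = 1 := by
      have : α + 1 ≠ 0 := by linarith
      field_simp
      ring
    rw [this, Real.rpow_one]
  unfold ccMin
  split_ifs with hx
  · exact b1
  · rw [mul_min_of_nonneg _ _ (by norm_num)]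
    refine le_min b1 ?_
    have hr : 0 < |x| := abs_pos.2 hx
    have ha : 0 < |z' - z| ^ ((1 : ℝ) / 2) / |x| ^ ((α - 1) / 2) := by positivity
    have hg := gap_two hα hr ha
    refine ccDist_of_gap α x y z z' _ ha (lt_of_lt_of_le (by positivity) hg) ?_
    refine le_trans (le_of_eq ?_) (mul_le_mul_of_nonneg_left hg ha.le)
    have e1 : |z' - z| ^ ((1 : ℝ) / 2) * |z' - z| ^ ((1 : ℝ) / 2) = |z' - z| := by
      rw [← Real.rpow_add hζ]; norm_num
    have e2 : |x| ^ ((α - 1) / 2) * |x| ^ ((α - 1) / 2) = |x| ^ (α - 1) := by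
      rw [← Real.rpow_add hr]; congr 1; ring
    have hp : 0 < |x| ^ ((α - 1) / 2) := by positivity
    rw [← e2]
    field_simp
    rw [sq, e1]
end

section
/- Let α ≥ 1. There exists a constant C_α > 0 such that for all x, x′, y′, z′ ∈ ℝ, setting ζ = z′ − |x|^α y′ and ζ′ = z′ − y′ ∫₀¹ |x + s(x′ − x)|^α ds, one has min{ |ζ′|^{1/(α+1)}, |ζ′|^{1/2} / |x′|^{(α−1)/2} } ≤ C_α ( |x − x′| + |y′| + min{ |ζ|^{1/(α+1)}, |ζ|^{1/2} / |x|^{(α−1)/2} } ), where in each minimum the convention is that it equals the first entry |·|^{1/(α+1)} when the corresponding base point (x′ respectively x) is 0, and equals 0 when the corresponding ζ-quantity is 0. -/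
lemma cc_fwd (α : ℝ) (hα : 1 ≤ α) (x ζ r : ℝ) (hr : 0 ≤ r) (h : ccMin α x ζ ≤ r) :
    |ζ| ≤ r ^ 2 * (max r |x|) ^ (α - 1) := by
  have hx := abs_nonneg x
  have hz := abs_nonneg ζ
  have key1 : |ζ| ^ (1 / (α + 1)) ≤ r → |ζ| ≤ r ^ 2 * (max r |x|) ^ (α - 1) := by
    intro h1
    have h2 : |ζ| ≤ r ^ (α + 1) := by
      have := Real.rpow_le_rpow (by positivity) h1 (by linarith : 0 ≤ α + 1)
      rwa [← Real.rpow_mul hz, one_div_mul_cancel (by linarith), Real.rpow_one] at this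
    have h3 : r ^ (α + 1) = r ^ 2 * r ^ (α - 1) := by
      rw [← Real.rpow_natCast, ← Real.rpow_add_of_nonneg hr (by norm_num) (by linarith)]
      congr 1
      push_cast
      ring
    rw [h3] at h2
    refine h2.trans (mul_le_mul_of_nonneg_left ?_ (by positivity))
    exact Real.rpow_le_rpow hr (le_max_left _ _) (by linarith)
  unfold ccMin at h
  split_ifs at h with h0
  · exact key1 h
  · rcases min_le_iff.1 h with h1 | h1
    · exact key1 h1
    · have hxp : 0 < |x| := abs_pos.2 h0
      rw [div_le_iff₀ (by positivity)] at h1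
      have h2 := pow_le_pow_left₀ (by positivity) h1 2
      rw [mul_pow, ← Real.rpow_natCast (|ζ| ^ _), ← Real.rpow_natCast (|x| ^ _),
        ← Real.rpow_mul hz, ← Real.rpow_mul hx] at h2
      norm_num at h2
      refine h2.trans (mul_le_mul_of_nonneg_left ?_ (by positivity))
      exact Real.rpow_le_rpow hx (le_max_right _ _) (by linarith)

lemma cc_bwd (α : ℝ) (hα : 1 ≤ α) (x ζ r : ℝ) (hr : 0 ≤ r)
    (h : |ζ| ≤ r ^ 2 * (max r |x|) ^ (α - 1)) : ccMin α x ζ ≤ r := by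
  have hx := abs_nonneg x
  have hz := abs_nonneg ζ
  rcases le_total |x| r with hc | hc
  · rw [max_eq_left hc] at h
    have h3 : r ^ (α + 1) = r ^ 2 * r ^ (α - 1) := by
      rw [← Real.rpow_natCast, ← Real.rpow_add_of_nonneg hr (by norm_num) (by linarith)]
      congr 1
      push_cast
      ring
    rw [← h3] at h
    have h1 : |ζ| ^ (1 / (α + 1)) ≤ r := by
      have := Real.rpow_le_rpow hz h (by positivity : 0 ≤ 1 / (α + 1))
      rwa [← Real.rpow_mul hr, mul_one_div_cancel (by linarith), Real.rpow_one] at this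
    unfold ccMin
    split_ifs
    · exact h1
    · exact (min_le_left _ _).trans h1
  · rw [max_eq_right hc] at h
    unfold ccMin
    split_ifs with h0
    · subst h0
      have hr0 : r = 0 := le_antisymm (by simpa using hc) hr
      subst hr0
      have hz0 : |ζ| = 0 := le_antisymm (by simpa using h) hz
      rw [hz0, Real.zero_rpow (by positivity)]
    · refine (min_le_right _ _).trans ?_
      have hxp : 0 < |x| := abs_pos.2 h0
      rw [div_le_iff₀ (by positivity)]
      have := Real.rpow_le_rpow hz h (by norm_num : (0:ℝ) ≤ 1 / 2)
      rw [Real.mul_rpow (by positivity) (by positivity), ← Real.rpow_mul hx,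
        ← Real.sqrt_eq_rpow (r ^ 2), Real.sqrt_sq hr] at this
      rwa [mul_one_div] at this

lemma cc_pow (α : ℝ) (hα : 1 ≤ α) (a b N : ℝ) (hb : 0 ≤ b) (hba : b ≤ a) (haN : a ≤ N) :
    |a ^ α - b ^ α| ≤ α * N ^ (α - 1) * |a - b| := by
  have ha : 0 ≤ a := hb.trans hba
  rw [abs_of_nonneg (sub_nonneg.2 (Real.rpow_le_rpow hb hba (by linarith))),
    abs_of_nonneg (sub_nonneg.2 hba)]
  rcases ha.eq_or_lt with h0 | hp
  · have : b = a := by linarith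
    subst this
    simp
  · have h1 := one_add_mul_self_le_rpow_one_add (s := b / a - 1)
      (by have := div_nonneg hb ha; linarith) hα
    rw [add_sub_cancel, Real.div_rpow hb ha, le_div_iff₀ (by positivity)] at h1
    have h2 : a ^ α = a ^ (α - 1) * a := by
      rw [Real.rpow_sub_one hp.ne']
      field_simp
    have h3 : (1 + α * (b / a - 1)) * a ^ α = a ^ α - α * a ^ (α - 1) * (a - b) := by
      rw [h2]
      field_simp
      ring
    have h4 : a ^ (α - 1) ≤ N ^ (α - 1) := Real.rpow_le_rpow ha haN (by linarith)
    have h5 : α * a ^ (α - 1) * (a - b) ≤ α * N ^ (α - 1) * (a - b) := by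
      have : 0 ≤ a - b := by linarith
      gcongr
    linarith

lemma cc_int (α : ℝ) (hα : 1 ≤ α) (x x' : ℝ) :
    |(∫ s in (0:ℝ)..1, |x + s * (x' - x)| ^ α) - |x| ^ α| ≤
      α * (|x| + |x - x'|) ^ (α - 1) * |x - x'| := by
  have hc : Continuous fun s : ℝ => |x + s * (x' - x)| ^ α :=
    Continuous.rpow_const (by fun_prop) (fun _ => Or.inr (by linarith))
  have he : (∫ s in (0:ℝ)..1, |x + s * (x' - x)| ^ α) - |x| ^ α =
      ∫ s in (0:ℝ)..1, (|x + s * (x' - x)| ^ α - |x| ^ α) := by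
    rw [intervalIntegral.integral_sub (hc.intervalIntegrable _ _) (by simp)]
    simp
  rw [he, ← Real.norm_eq_abs]
  refine (intervalIntegral.norm_integral_le_of_norm_le_const
    (C := α * (|x| + |x - x'|) ^ (α - 1) * |x - x'|) ?_).trans (by simp)
  intro s hs
  rw [Set.uIoc_of_le zero_le_one] at hs
  rw [Real.norm_eq_abs]
  have hd : |s * (x' - x)| ≤ |x - x'| := by
    rw [abs_mul, abs_sub_comm x' x, abs_of_pos hs.1]
    exact mul_le_of_le_one_left (abs_nonneg _) hs.2
  have hu : |x + s * (x' - x)| ≤ |x| + |x - x'| := (abs_add_le _ _).trans (by linarith)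
  have hdiff : |(|x + s * (x' - x)| - |x|)| ≤ |x - x'| := by
    refine (abs_abs_sub_abs_le _ _).trans ?_
    rwa [add_sub_cancel_left]
  have hn : 0 ≤ α * (|x| + |x - x'|) ^ (α - 1) := by positivity
  have hfin := mul_le_mul_of_nonneg_left hdiff hn
  refine le_trans ?_ hfin
  rcases le_total |x| |x + s * (x' - x)| with h | h
  · exact cc_pow α hα _ _ _ (abs_nonneg _) h hu
  · rw [abs_sub_comm, abs_sub_comm (|x + s * (x' - x)|)]
    have hD := abs_nonneg (x - x')
    exact cc_pow α hα _ _ _ (abs_nonneg _) h (by linarith)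

/-- The key algebraic inequality (2.9) comparing the `ζ`-part of the quasi-distance at
`x'` with the one at `x`. -/
theorem ccMin_comparison (α : ℝ) (hα : 1 ≤ α) :
    ∃ C : ℝ, 0 < C ∧ ∀ x x' y' z' : ℝ,
      ccMin α x' (z' - y' * ∫ s in (0:ℝ)..1, |x + s * (x' - x)| ^ α) ≤
        C * (|x - x'| + |y'| + ccMin α x (z' - |x| ^ α * y')) := by
  refine ⟨(1 + α) * 3 ^ (α - 1), by positivity, ?_⟩
  intro x x' y' z'
  have h3 : (1:ℝ) ≤ 3 ^ (α - 1) := Real.one_le_rpow (by norm_num) (by linarith)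
  set C := (1 + α) * (3:ℝ) ^ (α - 1) with hC
  have hC1 : 1 ≤ C := by nlinarith
  set ζ := z' - |x| ^ α * y' with hζ
  have hm : 0 ≤ ccMin α x ζ := by
    unfold ccMin
    split_ifs <;> positivity
  set r := |x - x'| + |y'| + ccMin α x ζ with hr
  have hD := abs_nonneg (x - x')
  have hY := abs_nonneg y'
  have hr0 : 0 ≤ r := by positivity
  have hx := abs_nonneg x
  have hx' := abs_nonneg x'
  have hI := cc_int α hα x x'
  set I := ∫ s in (0:ℝ)..1, |x + s * (x' - x)| ^ α with hIdef
  have hA := cc_fwd α hα x ζ r hr0 (by linarith)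
  have hxx : |x| ≤ |x'| + |x - x'| := by
    have := abs_sub_abs_le_abs_sub x x'
    linarith
  set M := max r |x'| with hM
  have hM1 : r ≤ M := le_max_left _ _
  have hM2 : |x'| ≤ M := le_max_right _ _
  have hM0 : 0 ≤ M := hr0.trans hM1
  have e1 : (max r |x|) ^ (α - 1) ≤ (3 * M) ^ (α - 1) :=
    Real.rpow_le_rpow (by positivity) (max_le (by linarith) (by linarith)) (by linarith)
  have e2 : (|x| + |x - x'|) ^ (α - 1) ≤ (3 * M) ^ (α - 1) :=
    Real.rpow_le_rpow (by positivity) (by linarith) (by linarith)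
  have e3 : |ζ| ≤ r ^ 2 * (3 * M) ^ (α - 1) :=
    hA.trans (mul_le_mul_of_nonneg_left e1 (by positivity))
  have e4 : |y' * (I - |x| ^ α)| ≤ α * (r ^ 2 * (3 * M) ^ (α - 1)) := by
    rw [abs_mul]
    calc |y'| * |I - |x| ^ α| ≤ r * (α * (3 * M) ^ (α - 1) * r) := by
          refine mul_le_mul (by linarith) (hI.trans ?_) (abs_nonneg _) hr0
          have : |x - x'| ≤ r := by linarith
          gcongr
      _ = _ := by ring
  have e5 : z' - y' * I = ζ - y' * (I - |x| ^ α) := by rw [hζ]; ring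
  have e6 : |z' - y' * I| ≤ C * (r ^ 2 * M ^ (α - 1)) := by
    rw [e5]
    refine (abs_sub _ _).trans ?_
    rw [Real.mul_rpow (by norm_num) hM0] at e3 e4
    rw [hC]
    linarith
  refine cc_bwd α hα x' _ _ (by positivity) (e6.trans ?_)
  have e7 : M ^ (α - 1) ≤ (max (C * r) |x'|) ^ (α - 1) :=
    Real.rpow_le_rpow hM0 (max_le_max (by nlinarith) le_rfl) (by linarith)
  have e8 : C * r ^ 2 ≤ (C * r) ^ 2 := by
    rw [mul_pow]
    have : C ≤ C ^ 2 := by nlinarith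
    gcongr
  calc C * (r ^ 2 * M ^ (α - 1)) = C * r ^ 2 * M ^ (α - 1) := by ring
    _ ≤ _ := mul_le_mul e8 e7 (by positivity) (by positivity)
end
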